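/- Let G and G' be two finitely generated virtually free groups. Then there exists a finite subset F of G \ {1} such that for every non-injective group homomorphism φ : G → G', there exists an automorphism σ of G with ker(φ ∘ σ) ∩ F ≠ ∅, i.e. there exists f ∈ F with φ(σ(f)) = 1. -/

import Mathlib

open FirstOrder Language

/-- Function symbols of the first-order language of groups:
a binary multiplication, a unary inverse and a constant for the identity. -/
inductive GroupFunc : ℕ → Type
  | mul : GroupFunc 2
  | inv : GroupFunc 1
  | one : GroupFunc 0

/-- The first-order language of groups. -/
def groupLang : FirstOrder.Language :=
  { Functions := GroupFunc
    Relations := fun _ => Empty }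

/-- Every group is a structure for the language of groups in the natural way. -/
instance groupLangStructure (G : Type*) [Group G] : groupLang.Structure G where
  funMap {n} f v :=
    match f with
    | .mul => v 0 * v 1
    | .inv => (v 0)⁻¹
    | .one => 1
  RelMap {n} r _ := r.elim

/-- Existential formulas: iterated existential quantifications of a
quantifier-free formula. -/
inductive IsExistentialQF {α : Type*} : ∀ {n : ℕ}, groupLang.BoundedFormula α n → Prop
  | of_isQF {n : ℕ} {φ : groupLang.BoundedFormula α n} (h : φ.IsQF) : IsExistentialQF φ
  | ex {n : ℕ} {φ : groupLang.BoundedFormula α (n + 1)} (h : IsExistentialQF φ) :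
      IsExistentialQF φ.ex

/-- Universal formulas: iterated universal quantifications of a
quantifier-free formula. -/
inductive IsUniversalQF {α : Type*} : ∀ {n : ℕ}, groupLang.BoundedFormula α n → Prop
  | of_isQF {n : ℕ} {φ : groupLang.BoundedFormula α n} (h : φ.IsQF) : IsUniversalQF φ
  | all {n : ℕ} {φ : groupLang.BoundedFormula α (n + 1)} (h : IsUniversalQF φ) :
      IsUniversalQF φ.all

/-- ∀∃-formulas: iterated universal quantifications of an existential formula. -/
inductive IsAE {α : Type*} : ∀ {n : ℕ}, groupLang.BoundedFormula α n → Prop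
  | of_existential {n : ℕ} {φ : groupLang.BoundedFormula α n} (h : IsExistentialQF φ) : IsAE φ
  | all {n : ℕ} {φ : groupLang.BoundedFormula α (n + 1)} (h : IsAE φ) : IsAE φ.all

/-- A group is virtually free if it has a free subgroup of finite index. -/
def VirtuallyFree (G : Type*) [Group G] : Prop :=
  ∃ H : Subgroup G, H.FiniteIndex ∧ Nonempty (IsFreeGroup H)

/-- A group is co-Hopfian if every injective endomorphism is surjective. -/
def CoHopfian (G : Type*) [Group G] : Prop :=
  ∀ φ : G →* G, Function.Injective φ → Function.Surjective φ

/-- Two homomorphisms `φ, φ' : G → G'` are equivalent if they coincide up to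
conjugation on every finite subgroup of `G`. -/
def HomEquiv {G G' : Type*} [Group G] [Group G'] (φ φ' : G →* G') : Prop :=
  ∀ H : Subgroup G, (H : Set G).Finite →
    ∃ g' : G', ∀ h ∈ H, φ' h = g' * φ h * g'⁻¹

/-- Two groups are ∀∃-equivalent if they satisfy the same ∀∃-sentences. -/
def AEEquivalent (G : Type*) (G' : Type*) [Group G] [Group G'] : Prop :=
  ∀ φ : groupLang.Sentence, IsAE φ → (G ⊨ φ ↔ G' ⊨ φ)

/-- Two groups are ∃-equivalent if they satisfy the same existential sentences. -/
def ExistentiallyEquivalent (G : Type*) (G' : Type*) [Group G] [Group G'] : Prop :=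
  ∀ φ : groupLang.Sentence, IsExistentialQF φ → (G ⊨ φ ↔ G' ⊨ φ)

/-- An endomorphism is rigid-testing: `G` is rigid if every endomorphism
equivalent to the identity is an automorphism. -/
def Rigid (G : Type*) [Group G] : Prop :=
  ∀ φ : G →* G, HomEquiv φ (MonoidHom.id G) → Function.Bijective φ

/-- `Out G` is finite, expressed as: the inner automorphisms form a finite index
subgroup of `Aut G`. -/
def OutFinite (G : Type*) [Group G] : Prop :=
  (MulAut.conj : G →* MulAut G).range.FiniteIndex

/-- Iterated composition of an endomorphism. -/
def homPow {G : Type*} [Group G] (φ : G →* G) : ℕ → (G →* G)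
  | 0 => MonoidHom.id G
  | n + 1 => φ.comp (homPow φ n)

/-- An endomorphism `φ` of `G` is class-permuting if some positive power of `φ`
is equivalent to the identity of `G`. -/
def ClassPermuting {G : Type*} [Group G] (φ : G →* G) : Prop :=
  ∃ n : ℕ, 1 ≤ n ∧ HomEquiv (homPow φ n) (MonoidHom.id G)

/-- A maximal finite subgroup: a finite subgroup maximal with respect to
inclusion among finite subgroups. -/
def MaximalFiniteSubgroup {G : Type*} [Group G] (A : Subgroup G) : Prop :=
  (A : Set G).Finite ∧ ∀ B : Subgroup G, (B : Set G).Finite → A ≤ B → A = B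

/-- Two subgroups are conjugate. -/
def SubgroupConj {G : Type*} [Group G] (A B : Subgroup G) : Prop :=
  ∃ g : G, B = A.map (MulAut.conj g).toMonoidHom

/-- A group is strongly co-Hopfian if there is a finite subset `F` of
`G \ {1}` such that every endomorphism whose kernel misses `F` is an
automorphism. -/
def StronglyCoHopfian (G : Type*) [Group G] : Prop :=
  ∃ F : Finset G, (1 : G) ∉ F ∧
    ∀ φ : G →* G, (∀ f ∈ F, φ f ≠ 1) → Function.Bijective φ

/-- A group is finitely presented. -/
def GroupFinitelyPresented (G : Type*) [Group G] : Prop :=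
  ∃ (n : ℕ) (rels : Finset (FreeGroup (Fin n))),
    Nonempty (PresentedGroup (rels : Set (FreeGroup (Fin n))) ≃* G)

/-!
A finitely generated virtually free group acts on a tree with finite vertex stabilizers and finitely
many orbits of edges: the cuts of a Cayley graph that separate two ends most economically, and among
these cross the fewest others, form an invariant nested family, and the tree is dual to it.

Fix such a tree `V` for `G`, a free subgroup `N` of finite index in `G`, and a homomorphism
`φ : G → G'`. The kernel of `φ` acts trivially on a tree for the image of `φ`. Map `V` equivariantly
to that tree. If `N` acts faithfully there, the kernel is finite, hence it fixes a vertex of `V`,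
and only finitely many elements of `G` lie in a finite normal subgroup. Otherwise fold `V` as long
as the number of orbits of edges decreases. This ends in a tree on which some nontrivial `n ∈ N`,
with `φ n` of finite order, moves a vertex along a path whose image modulo `N` repeats no edge.

An Euler characteristic count bounds the number of edges of reduced trees modulo `N`, hence the
displacement of `n` together with the size of a presentation of `G` by a multiplication table which
involves a power of `n`. Two tuples with the same multiplication table differ by an automorphism,
so up to `Aut G` only finitely many elements arise. The power is chosen to annihilate the elements
of finite order in `G'`.
-/

namespace VirtuallyFree

open SimpleGraph

universe u

section Trees

variable {V T : Type*} {Γ : SimpleGraph V}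

theorem mem_of_reachable {S : Set V} (hS : ∀ a b, Γ.Adj a b → a ∈ S → b ∈ S) {x y : V}
    (h : Γ.Reachable x y) (hx : x ∈ S) : y ∈ S := by
  obtain ⟨p⟩ := h
  induction p with
  | nil => exact hx
  | cons hadj _ ih => exact ih (hS _ _ hadj hx)

theorem dist_eq_add_one_or_of_adj (hT : Γ.IsTree) (y : V) {x w : V} (h : Γ.Adj x w) :
    Γ.dist w y = Γ.dist x y + 1 ∨ Γ.dist x y = Γ.dist w y + 1 := by
  have := hT.dist_eq_dist_add_one_of_adj y h
  rw [Γ.dist_comm (u := w), Γ.dist_comm (u := x)]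
  tauto

theorem exists_adj_dist_eq (hc : Γ.Connected) {x y : V} (h : x ≠ y) :
    ∃ t, Γ.Adj x t ∧ Γ.dist x y = Γ.dist t y + 1 := by
  obtain ⟨p, hp⟩ := hc.exists_walk_length_eq_dist x y
  cases p with
  | nil => exact absurd rfl h
  | @cons _ t _ hadj q =>
    refine ⟨t, hadj, le_antisymm ?_ ?_⟩
    · have := hc.dist_triangle (u := x) (v := t) (w := y)
      rw [dist_eq_one_iff_adj.2 hadj] at this
      omega
    · rw [← hp, Walk.length_cons]
      exact Nat.succ_le_succ (dist_le q)

theorem eq_of_adj_of_dist_eq (hT : Γ.IsTree) {x y t t' : V}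
    (h : Γ.Adj x t) (hd : Γ.dist x y = Γ.dist t y + 1)
    (h' : Γ.Adj x t') (hd' : Γ.dist x y = Γ.dist t' y + 1) : t = t' := by
  obtain ⟨p, hp⟩ := hT.1.exists_walk_length_eq_dist t y
  obtain ⟨p', hp'⟩ := hT.1.exists_walk_length_eq_dist t' y
  have hcons : (Walk.cons h p).IsPath := Walk.isPath_of_length_eq_dist _ (by simp [hp, hd])
  have hcons' : (Walk.cons h' p').IsPath := Walk.isPath_of_length_eq_dist _ (by simp [hp', hd'])
  have heq := (hT.2.subsingleton_path _ _).elim ⟨_, hcons⟩ ⟨_, hcons'⟩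
  rw [Subtype.mk.injEq, Walk.cons.injEq] at heq
  exact heq.1

open Classical in
/-- The neighbour of `x` in the direction of `y`, and `x` itself if `x = y`. -/
noncomputable def step (Γ : SimpleGraph V) (x y : V) : V :=
  if h : ∃ t, Γ.Adj x t ∧ Γ.dist x y = Γ.dist t y + 1 then h.choose else x

theorem step_adj (hc : Γ.Connected) {x y : V} (h : x ≠ y) : Γ.Adj x (step Γ x y) := by
  have hex := exists_adj_dist_eq hc h
  rw [step, dif_pos hex]
  exact hex.choose_spec.1

theorem dist_eq_dist_step_add_one (hc : Γ.Connected) {x y : V} (h : x ≠ y) :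
    Γ.dist x y = Γ.dist (step Γ x y) y + 1 := by
  have hex := exists_adj_dist_eq hc h
  rw [step, dif_pos hex]
  exact hex.choose_spec.2

theorem eq_step (hT : Γ.IsTree) {x y t : V} (h : Γ.Adj x t)
    (hd : Γ.dist x y = Γ.dist t y + 1) : t = step Γ x y := by
  have hne : x ≠ y := by rintro rfl; simp at hd
  exact eq_of_adj_of_dist_eq hT h hd (step_adj hT.1 hne) (dist_eq_dist_step_add_one hT.1 hne)

theorem step_self (x : V) : step Γ x x = x :=
  dif_neg (by rintro ⟨t, -, h⟩; simp at h)

theorem step_of_adj (hT : Γ.IsTree) {x y : V} (h : Γ.Adj x y) : step Γ x y = y :=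
  (eq_step hT h (by simp [dist_eq_one_iff_adj.2 h])).symm

theorem dist_eq_of_ne_step (hT : Γ.IsTree) {x y w : V} (h : Γ.Adj x w) (hw : w ≠ step Γ x y) :
    Γ.dist w y = Γ.dist x y + 1 :=
  (dist_eq_add_one_or_of_adj hT y h).resolve_right fun hd => hw (eq_step hT h hd)

theorem step_eq_step_of_adj (hT : Γ.IsTree) {x a b : V} (hab : Γ.Adj a b) (ha : a ≠ x)
    (hb : b ≠ x) : step Γ x a = step Γ x b := by
  wlog h : Γ.dist b x = Γ.dist a x + 1 generalizing a b
  · exact (this hab.symm hb ha ((dist_eq_add_one_or_of_adj hT x hab).resolve_left h)).symm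
  have hadj := step_adj hT.1 ha.symm
  refine eq_step hT hadj ((dist_eq_add_one_or_of_adj hT b hadj).resolve_left fun hfar => ?_)
  have hnear := dist_eq_dist_step_add_one hT.1 ha.symm
  have htri := hT.1.dist_triangle (u := step Γ x a) (v := a) (w := b)
  rw [dist_eq_one_iff_adj.2 hab] at htri
  rw [Γ.dist_comm (u := b), Γ.dist_comm (u := a)] at h
  omega

/-- The oriented edge from `x` to `y` is the only one leaving `H`. In a connected graph this makes
`xy` a bridge with `H` the side of `x`. -/
structure IsEdgeCut (Γ : SimpleGraph V) (x y : V) (H : Set V) : Prop where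
  left_mem : x ∈ H
  right_notMem : y ∉ H
  eq_of_adj : ∀ a b, Γ.Adj a b → a ∈ H → b ∉ H → a = x ∧ b = y

theorem IsEdgeCut.compl {x y : V} {H : Set V} (h : IsEdgeCut Γ x y H) : IsEdgeCut Γ y x Hᶜ where
  left_mem := h.right_notMem
  right_notMem := fun hx => hx h.left_mem
  eq_of_adj a b hab ha hb := (h.eq_of_adj b a hab.symm (not_not.1 hb) ha).symm

theorem isTree_of_isEdgeCut (hc : Γ.Connected)
    (h : ∀ x y, Γ.Adj x y → ∃ H : Set V, IsEdgeCut Γ x y H) : Γ.IsTree := by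
  refine ⟨hc, isAcyclic_iff_forall_adj_isBridge.2 fun x y hxy => ?_⟩
  rw [isBridge_iff_forall_walk_mem_edges]
  intro p
  obtain ⟨H, hH⟩ := h x y hxy
  obtain ⟨d, hd, hfst, hsnd⟩ := p.exists_boundary_dart H hH.left_mem hH.right_notMem
  obtain ⟨rfl, rfl⟩ := hH.eq_of_adj _ _ d.adj hfst hsnd
  exact List.mem_map_of_mem hd

/-- The vertices closer to `x` than to `y`; for an edge `xy` of a tree, the component of `x` after
removal of the edge. -/
def halfTree (Γ : SimpleGraph V) (x y : V) : Set V := {z | Γ.dist z x < Γ.dist z y}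

theorem eq_left_of_adj_of_mem_halfTree (hT : Γ.IsTree) {x y a b : V} (h : Γ.Adj x y)
    (hab : Γ.Adj a b) (ha : a ∈ halfTree Γ x y) (hb : b ∉ halfTree Γ x y) : a = x := by
  simp only [halfTree, Set.mem_ofPred_eq, not_lt] at ha hb
  have hcross := dist_eq_add_one_or_of_adj hT x hab
  have hcross' := dist_eq_add_one_or_of_adj hT y hab
  have hside := dist_eq_add_one_or_of_adj hT a h
  have hside' := dist_eq_add_one_or_of_adj hT b h
  rw [Γ.dist_comm (u := y), Γ.dist_comm (u := x)] at hside hside'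
  by_contra hne
  have hadj := step_adj hT.1 hne
  have hstep := dist_eq_dist_step_add_one hT.1 hne
  have hstep' : Γ.dist a y = Γ.dist (step Γ a x) y + 1 := by
    have hcases := dist_eq_add_one_or_of_adj hT y hadj
    have htri := hT.1.dist_triangle (u := step Γ a x) (v := x) (w := y)
    rw [dist_eq_one_iff_adj.2 h] at htri
    omega
  -- `b` is the neighbour of `a` towards `y`, yet it is further from `x` than `a`
  have : step Γ a x = b := eq_of_adj_of_dist_eq hT hadj hstep' hab (by omega)
  rw [this] at hstep
  omega

theorem compl_halfTree (hT : Γ.IsTree) {x y : V} (h : Γ.Adj x y) :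
    (halfTree Γ x y)ᶜ = halfTree Γ y x := by
  ext z
  have := dist_eq_add_one_or_of_adj hT z h
  rw [Γ.dist_comm (u := y), Γ.dist_comm (u := x)] at this
  simp only [halfTree, Set.mem_compl_iff, Set.mem_ofPred_eq]
  omega

theorem isEdgeCut_halfTree (hT : Γ.IsTree) {x y : V} (h : Γ.Adj x y) :
    IsEdgeCut Γ x y (halfTree Γ x y) where
  left_mem := by simp [halfTree, dist_eq_one_iff_adj.2 h]
  right_notMem := by simp [halfTree]
  eq_of_adj a b hab ha hb := by
    refine ⟨eq_left_of_adj_of_mem_halfTree hT h hab ha hb,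
      eq_left_of_adj_of_mem_halfTree hT h.symm hab.symm ?_ ?_⟩
    · rwa [← compl_halfTree hT h]
    · rwa [← compl_halfTree hT h, Set.mem_compl_iff, not_not]

theorem dist_eq_of_mem_halfTree (hT : Γ.IsTree) {x t a y : V} (h : Γ.Adj x t)
    (ha : a ∈ halfTree Γ x t) (hy : y ∉ halfTree Γ x t) :
    Γ.dist a y = Γ.dist a x + 1 + Γ.dist t y := by
  classical
  obtain ⟨p, hp⟩ := hT.1.exists_walk_length_eq_dist a y
  obtain ⟨d, hd, hfst, hsnd⟩ := p.exists_boundary_dart _ ha hy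
  obtain ⟨rfl, rfl⟩ := (isEdgeCut_halfTree hT h).eq_of_adj _ _ d.adj hfst hsnd
  have hmem : d.fst ∈ p.support := p.dart_fst_mem_support_of_mem_darts hd
  have hlen := congrArg Walk.length (p.take_spec hmem)
  rw [Walk.length_append] at hlen
  have htake := dist_le (p.takeUntil _ hmem)
  have hdrop := dist_le (p.dropUntil _ hmem)
  have htri := hT.1.dist_triangle (u := a) (v := d.fst) (w := y)
  have hcases := dist_eq_add_one_or_of_adj hT y h
  simp only [halfTree, Set.mem_ofPred_eq, not_lt] at hy
  rw [Γ.dist_comm (u := y), Γ.dist_comm (u := y)] at hy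
  omega

theorem dist_eq_dist_add_dist (hT : Γ.IsTree) {x t a y : V} (h : Γ.Adj x t)
    (hy : Γ.dist x y = Γ.dist t y + 1) (ha : Γ.dist t a = Γ.dist x a + 1) :
    Γ.dist a y = Γ.dist a x + Γ.dist x y := by
  have hmem : a ∈ halfTree Γ x t := by
    rw [halfTree, Set.mem_ofPred_eq, Γ.dist_comm, Γ.dist_comm (u := a)]
    omega
  have hnot : y ∉ halfTree Γ x t := by
    rw [halfTree, Set.mem_ofPred_eq, Γ.dist_comm, Γ.dist_comm (u := y)]
    omega
  rw [dist_eq_of_mem_halfTree hT h hmem hnot]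
  omega

section Contraction

/-- The edges of `Γ` on which `f` is constant; contracting them is the first step of a fold. -/
def fiberGraph (Γ : SimpleGraph V) (f : V → T) : SimpleGraph V where
  Adj x y := Γ.Adj x y ∧ f x = f y
  symm := ⟨fun _ _ h => ⟨h.1.symm, h.2.symm⟩⟩
  loopless := ⟨fun _ h => h.1.ne rfl⟩

theorem fiberGraph_le (Γ : SimpleGraph V) (f : V → T) : fiberGraph Γ f ≤ Γ := fun _ _ h => h.1

theorem eq_of_fiberGraph_reachable {f : V → T} {x y : V} (h : (fiberGraph Γ f).Reachable x y) :
    f x = f y :=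
  (mem_of_reachable (S := {z | f z = f x})
    (fun a b (hab : (fiberGraph Γ f).Adj a b) ha => hab.2.symm.trans ha) h rfl).symm

theorem mem_halfTree_of_fiberGraph_reachable (hT : Γ.IsTree) {r : V → T} {x y : V}
    (hxy : Γ.Adj x y) (hne : r x ≠ r y) {a b : V} (hab : (fiberGraph Γ r).Reachable a b)
    (ha : a ∈ halfTree Γ x y) : b ∈ halfTree Γ x y := by
  refine mem_of_reachable (fun c d hcd hc => ?_) hab ha
  by_contra hd
  obtain ⟨rfl, rfl⟩ := (isEdgeCut_halfTree hT hxy).eq_of_adj c d hcd.1 hc hd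
  exact hne hcd.2

variable {r : V → T} (hT : Γ.IsTree)
  (hfib : ∀ x y, r x = r y → (fiberGraph Γ r).Reachable x y)
include hT hfib

theorem eq_and_eq_of_contraction_eq {x y x' y' : V} (h : Γ.Adj x y) (h' : Γ.Adj x' y')
    (hne : r x ≠ r y) (hx : r x = r x') (hy : r y = r y') : x = x' ∧ y = y' := by
  have hcut := isEdgeCut_halfTree hT h
  obtain ⟨rfl, rfl⟩ := hcut.eq_of_adj x' y' h'
    (mem_halfTree_of_fiberGraph_reachable hT h hne (hfib _ _ hx) hcut.left_mem)
    fun hy' => hcut.right_notMem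
      (mem_halfTree_of_fiberGraph_reachable hT h hne (hfib _ _ hy.symm) hy')
  exact ⟨rfl, rfl⟩

theorem isEdgeCut_image_halfTree {x y : V} (hxy : Γ.Adj x y) (hne : r x ≠ r y) :
    IsEdgeCut (Γ.map r) (r x) (r y) (r '' halfTree Γ x y) := by
  have hcut := isEdgeCut_halfTree hT hxy
  have hsat : ∀ {z}, r z ∈ r '' halfTree Γ x y → z ∈ halfTree Γ x y := by
    rintro z ⟨z', hz', hzz'⟩
    exact mem_halfTree_of_fiberGraph_reachable hT hxy hne (hfib _ _ hzz') hz'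
  refine ⟨⟨x, hcut.left_mem, rfl⟩, fun hy => hcut.right_notMem (hsat hy), ?_⟩
  rintro _ _ ⟨-, a, b, hab, rfl, rfl⟩ ha hb
  obtain ⟨rfl, rfl⟩ := hcut.eq_of_adj a b hab (hsat ha) fun hb' => hb ⟨b, hb', rfl⟩
  exact ⟨rfl, rfl⟩

theorem isTree_map (hr : Function.Surjective r) : (Γ.map r).IsTree := by
  have hstep : ∀ x y, Γ.Adj x y → (Γ.map r).Reachable (r x) (r y) := by
    intro x y h
    by_cases hne : r x = r y
    · rw [hne]
    · exact Adj.reachable ⟨hne, x, y, h, rfl, rfl⟩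
  have : Nonempty T := hT.1.nonempty.map r
  refine isTree_of_isEdgeCut ⟨fun a b => ?_⟩ ?_
  · obtain ⟨x, rfl⟩ := hr a
    obtain ⟨y, rfl⟩ := hr b
    exact mem_of_reachable (S := {z | (Γ.map r).Reachable (r x) (r z)})
      (fun c d hcd hc => hc.trans (hstep c d hcd)) (hT.1 x y) (Reachable.refl _)
  · rintro _ _ ⟨hne, x, y, hxy, rfl, rfl⟩
    exact ⟨_, isEdgeCut_image_halfTree hT hfib hxy hne⟩

end Contraction

section Blowup

variable (Γ) (f : V → T) (tip : V × V → T)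

/-- Vertices of the blow-up of `Γ`: every vertex `v` becomes a star with centre `(v, f v)` and tips
`(v, tip (v, w))`, one for each value of `tip (v, w)` at the neighbours `w` of `v`. -/
def BlowupVertex : Set (V × T) := {p | p.2 = f p.1 ∨ ∃ w, Γ.Adj p.1 w ∧ tip (p.1, w) = p.2}

/-- The blow-up of `Γ`: besides the edges of the stars, every edge `vw` of `Γ` gives an edge from
`(v, tip (v, w))` to `(w, tip (w, v))`. Depending on `tip`, this subdivides or folds edges. -/
def blowup : SimpleGraph (BlowupVertex Γ f tip) where
  Adj p q := (p.1.1 = q.1.1 ∧ p.1.2 ≠ q.1.2 ∧ (p.1.2 = f p.1.1 ∨ q.1.2 = f p.1.1)) ∨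
    (Γ.Adj p.1.1 q.1.1 ∧ p.1.2 = tip (p.1.1, q.1.1) ∧ q.1.2 = tip (q.1.1, p.1.1))
  symm := ⟨by
    rintro p q (⟨hv, ht, hc⟩ | ⟨hadj, hp, hq⟩)
    · exact Or.inl ⟨hv.symm, ht.symm, hv ▸ hc.symm⟩
    · exact Or.inr ⟨hadj.symm, hq, hp⟩⟩
  loopless := ⟨by
    rintro p (⟨-, ht, -⟩ | ⟨hadj, -⟩)
    · exact ht rfl
    · exact Γ.loopless.irrefl _ hadj⟩

variable {Γ f tip}

theorem exists_adj_of_blowup_adj {a b : BlowupVertex Γ f tip} (h : (blowup Γ f tip).Adj a b) :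
    ∃ v w, Γ.Adj v w ∧ (a.1 = (v, tip (v, w)) ∧ b.1 = (w, tip (w, v)) ∨
      a.1 = (v, tip (v, w)) ∧ b.1 = (v, f v) ∨ a.1 = (v, f v) ∧ b.1 = (v, tip (v, w))) := by
  obtain ⟨⟨v, s⟩, hs⟩ := a
  obtain ⟨⟨w, t⟩, ht⟩ := b
  obtain ⟨hvw, hne, hcen⟩ | ⟨hadj, hs', ht'⟩ := h
  · simp only [BlowupVertex, Set.mem_ofPred_eq] at hvw hne hcen hs ht
    subst hvw
    rcases hcen with rfl | rfl
    · obtain ⟨w, hw, rfl⟩ := ht.resolve_left hne.symm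
      exact ⟨v, w, hw, Or.inr (Or.inr ⟨rfl, rfl⟩)⟩
    · obtain ⟨w, hw, rfl⟩ := hs.resolve_left hne
      exact ⟨v, w, hw, Or.inr (Or.inl ⟨rfl, rfl⟩)⟩
  · exact ⟨v, w, hadj, Or.inl ⟨Prod.ext rfl hs', Prod.ext rfl ht'⟩⟩

theorem blowup_reachable_center {v : V} {t : T} (hv : (v, f v) ∈ BlowupVertex Γ f tip)
    (ht : (v, t) ∈ BlowupVertex Γ f tip) :
    (blowup Γ f tip).Reachable ⟨(v, f v), hv⟩ ⟨(v, t), ht⟩ := by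
  obtain rfl | hne := eq_or_ne t (f v)
  · exact Reachable.refl _
  · exact Adj.reachable (Or.inl ⟨rfl, hne.symm, Or.inl rfl⟩)

theorem blowup_connected (hc : Γ.Connected) : (blowup Γ f tip).Connected := by
  let center (v : V) : BlowupVertex Γ f tip := ⟨(v, f v), Or.inl rfl⟩
  have hcross : ∀ v w, Γ.Adj v w → (blowup Γ f tip).Reachable (center v) (center w) := by
    intro v w h
    have hvw : (blowup Γ f tip).Adj
        ⟨(v, tip (v, w)), Or.inr ⟨w, h, rfl⟩⟩ ⟨(w, tip (w, v)), Or.inr ⟨v, h.symm, rfl⟩⟩ :=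
      Or.inr ⟨h, rfl, rfl⟩
    exact ((blowup_reachable_center _ _).trans hvw.reachable).trans
      (blowup_reachable_center _ _).symm
  have : Nonempty (BlowupVertex Γ f tip) := hc.nonempty.map center
  refine ⟨?_⟩
  rintro ⟨⟨a, s⟩, hs⟩ ⟨⟨b, t⟩, ht⟩
  refine ((blowup_reachable_center (Or.inl rfl) hs).symm.trans ?_).trans
    (blowup_reachable_center (Or.inl rfl) ht)
  exact mem_of_reachable (S := {z | (blowup Γ f tip).Reachable (center a) (center z)})
    (fun c d hcd hac => hac.trans (hcross c d hcd)) (hc a b) (Reachable.refl _)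

theorem isEdgeCut_blowup_of_adj (hT : Γ.IsTree) {p q : BlowupVertex Γ f tip}
    (h : Γ.Adj p.1.1 q.1.1) (hp : p.1.2 = tip (p.1.1, q.1.1)) (hq : q.1.2 = tip (q.1.1, p.1.1)) :
    IsEdgeCut (blowup Γ f tip) p q {a | a.1.1 ∈ halfTree Γ p.1.1 q.1.1} := by
  have hcut := isEdgeCut_halfTree hT h
  refine ⟨hcut.left_mem, hcut.right_notMem, ?_⟩
  rintro a b (⟨hab, -, -⟩ | ⟨hab, hta, htb⟩) ha hb
  · exact absurd ha (by simpa only [Set.mem_ofPred_eq, hab] using hb)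
  · obtain ⟨hap, hbq⟩ := hcut.eq_of_adj _ _ hab ha hb
    refine ⟨Subtype.ext (Prod.ext hap ?_), Subtype.ext (Prod.ext hbq ?_)⟩
    · rw [hta, hap, hbq, hp]
    · rw [htb, hap, hbq, hq]

/-- The side of the tip consists of the tip and of everything reached from the centre through it. -/
theorem isEdgeCut_blowup_tip (hT : Γ.IsTree) {p q : BlowupVertex Γ f tip} (h : p.1.1 = q.1.1)
    (hne : p.1.2 ≠ q.1.2) (hq : q.1.2 = f q.1.1) :
    IsEdgeCut (blowup Γ f tip) p q
      {a | a = p ∨ (a.1.1 ≠ p.1.1 ∧ tip (p.1.1, step Γ p.1.1 a.1.1) = p.1.2)} := by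
  refine ⟨Or.inl rfl, ?_, ?_⟩
  · rintro (rfl | hqp)
    · exact hne rfl
    · exact hqp.1 h.symm
  obtain ⟨⟨v, t⟩, ht⟩ := p
  obtain ⟨⟨w, t'⟩, ht'⟩ := q
  rintro ⟨⟨a, s⟩, hs⟩ ⟨⟨b, s'⟩, hs'⟩ hab ha hb
  simp only [blowup] at hab h hne hq ha hb ⊢
  subst h hq
  simp only [Set.mem_ofPred_eq, Subtype.mk.injEq, Prod.mk.injEq, ne_eq] at ha hb ⊢
  rcases hab with ⟨rfl, _, hcen⟩ | ⟨hadj, rfl, rfl⟩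
  · by_cases hav : a = v
    · subst hav
      have hst : s = t := by simpa using ha
      exact ⟨⟨rfl, hst⟩, rfl, hcen.resolve_left (hst ▸ hne)⟩
    · simp_all
  · exfalso
    by_cases hav : a = v
    · subst hav
      simp_all [step_of_adj hT hadj, hadj.ne.symm]
    · by_cases hbv : b = v
      · subst hbv
        simp_all [step_of_adj hT hadj.symm]
      · simp_all [step_eq_step_of_adj hT hadj hav hbv]

theorem isTree_blowup (hT : Γ.IsTree) : (blowup Γ f tip).IsTree := by
  refine isTree_of_isEdgeCut (blowup_connected hT.1) ?_
  rintro p q (⟨h, hne, hp | hq⟩ | ⟨hadj, hp, hq⟩)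
  · exact ⟨_, (isEdgeCut_blowup_tip hT h.symm hne.symm hp).compl⟩
  · exact ⟨_, isEdgeCut_blowup_tip hT h hne (h ▸ hq)⟩
  · exact ⟨_, isEdgeCut_blowup_of_adj hT hadj hp hq⟩

end Blowup

end Trees

section Actions

/-- The graph `Γ` is invariant under the action of `G` on its vertices. -/
class InvariantGraph (G : Type*) {V : Type*} [SMul G V] (Γ : SimpleGraph V) : Prop where
  smul_adj : ∀ (g : G) {x y : V}, Γ.Adj x y → Γ.Adj (g • x) (g • y)

/-- `G` acts on the tree `Γ` with finite vertex stabilizers and finitely many orbits of edges;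
finiteness of the quotient is expressed by a finite set `D` meeting every orbit of oriented
edges. -/
class ProperTreeAction (G : Type*) {V : Type*} [SMul G V] (Γ : SimpleGraph V) : Prop
    extends InvariantGraph G Γ where
  isTree : Γ.IsTree
  finite_stabilizer : ∀ v : V, {g : G | g • v = v}.Finite
  exists_finite_darts :
    ∃ D : Set (V × V), D.Finite ∧ ∀ x y, Γ.Adj x y → ∃ g : G, g • (x, y) ∈ D

variable {G V W T : Type*} [Group G] [MulAction G V] [MulAction G W] [MulAction G T]
  {Γ : SimpleGraph V}

section Invariant

variable [InvariantGraph G Γ]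

theorem smul_adj_iff (g : G) {x y : V} : Γ.Adj (g • x) (g • y) ↔ Γ.Adj x y :=
  ⟨fun h => by simpa using InvariantGraph.smul_adj g⁻¹ h, InvariantGraph.smul_adj g⟩

variable (Γ) in
/-- The automorphism of an invariant graph given by a group element. -/
def smulIso (g : G) : Γ ≃g Γ where
  toEquiv := MulAction.toPerm g
  map_rel_iff' := smul_adj_iff g

theorem dist_smul_smul (hc : Γ.Connected) (g : G) (x y : V) :
    Γ.dist (g • x) (g • y) = Γ.dist x y := by
  have hle : ∀ (k : G) (a b : V), Γ.dist (k • a) (k • b) ≤ Γ.dist a b := fun k a b => by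
    obtain ⟨p, hp⟩ := hc.exists_walk_length_eq_dist a b
    exact (dist_le (p.map (smulIso Γ k).toHom)).trans_eq (by rw [Walk.length_map, hp])
  refine le_antisymm (hle g x y) ?_
  simpa using hle g⁻¹ (g • x) (g • y)

theorem step_smul_smul (hT : Γ.IsTree) (g : G) (x y : V) :
    step Γ (g • x) (g • y) = g • step Γ x y := by
  obtain rfl | hne := eq_or_ne x y
  · simp only [step_self]
  · refine (eq_step hT (InvariantGraph.smul_adj g (step_adj hT.1 hne)) ?_).symm
    simp only [dist_smul_smul hT.1]
    exact dist_eq_dist_step_add_one hT.1 hne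

instance (f : V →[G] T) : InvariantGraph G (fiberGraph Γ f) where
  smul_adj g x y h := ⟨InvariantGraph.smul_adj g h.1, by rw [map_smul, map_smul, h.2]⟩

instance (r : V →[G] W) : InvariantGraph G (Γ.map r) where
  smul_adj g x y h := by
    obtain ⟨hne, a, b, hab, rfl, rfl⟩ := h
    exact ⟨fun h => hne (smul_left_cancel g h), g • a, g • b, InvariantGraph.smul_adj g hab,
      map_smul r g a, map_smul r g b⟩

instance : MulAction G Γ.ConnectedComponent where
  smul g := ConnectedComponent.map (smulIso Γ g).toHom
  one_smul := ConnectedComponent.ind fun x => congrArg Γ.connectedComponentMk (one_smul G x)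
  mul_smul g k := ConnectedComponent.ind fun x => congrArg Γ.connectedComponentMk (mul_smul g k x)

variable (G Γ) in
/-- The projection to the connected components as an equivariant map. -/
def componentHom : V →[G] Γ.ConnectedComponent where
  toFun := Γ.connectedComponentMk
  map_smul' _ _ := rfl

theorem exists_forall_smul_eq (hT : Γ.IsTree) (hinv : ∀ (g : G) (x : V), ¬ Γ.Adj x (g • x))
    (K : Subgroup G) [Finite K] : ∃ x : V, ∀ g ∈ K, g • x = x := by
  classical
  obtain ⟨v⟩ := hT.1.nonempty
  have : Nonempty V := ⟨v⟩
  have := Fintype.ofFinite K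
  let ecc (x : V) : ℕ := Finset.univ.sup fun k : K => Γ.dist x (k • v)
  obtain ⟨x, hx⟩ : ∃ x, ∀ y, ecc x ≤ ecc y :=
    ⟨Function.argmin ecc, fun y => Function.argmin_le ecc y⟩
  have hecc (y : V) (k : K) : Γ.dist y (k • v) ≤ ecc y :=
    Finset.le_sup (f := fun k : K => Γ.dist y (k • v)) (Finset.mem_univ k)
  refine ⟨x, fun g hg => by_contra fun hgx => ?_⟩
  have hxg : x ≠ g • x := Ne.symm hgx
  have hecc_smul : ecc (g • x) ≤ ecc x := by
    refine Finset.sup_le fun k _ => ?_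
    have := hecc x ((⟨g, hg⟩ : K)⁻¹ * k)
    rwa [← dist_smul_smul hT.1 g, mul_smul, Subgroup.smul_def (⟨g, hg⟩ : K)⁻¹,
      InvMemClass.coe_inv, smul_inv_smul] at this
  have hdist := hT.1.one_lt_dist_of_ne_of_not_adj hxg (hinv g x)
  obtain ⟨t, ht, htd⟩ := exists_adj_dist_eq hT.1 hxg
  obtain ⟨k, -, hk⟩ := Finset.exists_mem_eq_sup Finset.univ Finset.univ_nonempty
    fun k : K => Γ.dist t (k • v)
  have hmin : ecc x ≤ Γ.dist t (k • v) := (hx t).trans_eq hk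
  have hx_le := hecc x k
  -- moving from `x` towards `g • x` does not decrease the eccentricity, so the vertex `k • v`
  -- realizing it lies on the side of `x`, far from `g • x`
  obtain hfar | hnear := dist_eq_add_one_or_of_adj hT (k • v) ht
  · have := dist_eq_dist_add_dist hT ht htd hfar
    have := hecc (g • x) k
    rw [Γ.dist_comm (v := k • v), Γ.dist_comm (u := x) (v := k • v)] at *
    omega
  · omega

end Invariant

section Proper

theorem ProperTreeAction.connected (G : Type*) [SMul G V] {Γ : SimpleGraph V}
    [ProperTreeAction G Γ] : Γ.Connected :=
  (ProperTreeAction.isTree G (Γ := Γ)).1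

theorem exists_finite_vertices (G : Type*) [Group G] [MulAction G V] (Γ : SimpleGraph V)
    [ProperTreeAction G Γ] : ∃ D : Set V, D.Finite ∧ ∀ x, ∃ g : G, g • x ∈ D := by
  obtain ⟨D, hD, hDG⟩ := ProperTreeAction.exists_finite_darts (G := G) (Γ := Γ)
  have hc := ProperTreeAction.connected G (Γ := Γ)
  obtain ⟨v⟩ := hc.nonempty
  refine ⟨insert v (Prod.fst '' D), (hD.image _).insert _, fun x => ?_⟩
  obtain rfl | hne := eq_or_ne x v
  · exact ⟨1, by simp⟩
  · obtain ⟨g, hg⟩ := hDG _ _ (step_adj hc hne)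
    exact ⟨g, Or.inr ⟨_, hg, rfl⟩⟩

theorem finite_setOf_smul_eq (G : Type*) [Group G] [MulAction G V] (Γ : SimpleGraph V)
    [ProperTreeAction G Γ] (v w : V) : {g : G | g • v = w}.Finite := by
  by_cases h : ∃ k : G, k • v = w
  · obtain ⟨k, rfl⟩ := h
    refine ((ProperTreeAction.finite_stabilizer (Γ := Γ) v).image (k * ·)).subset fun g hg => ?_
    refine ⟨k⁻¹ * g, ?_, mul_inv_cancel_left k g⟩
    rw [Set.mem_ofPred_eq, mul_smul, show g • v = k • v from hg, inv_smul_smul]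
  · exact Set.Finite.subset Set.finite_empty fun g hg => h ⟨g, hg⟩

theorem ProperTreeAction.map [ProperTreeAction G Γ] {r : V →[G] W} (hr : Function.Surjective r)
    (hconn : ∀ x y, r x = r y → (fiberGraph Γ r).Reachable x y)
    (hfin : ∀ v, {w | r w = r v}.Finite) : ProperTreeAction G (Γ.map r) where
  isTree := isTree_map (ProperTreeAction.isTree G) hconn hr
  finite_stabilizer a := by
    obtain ⟨v, rfl⟩ := hr a
    refine ((hfin v).biUnion fun w _ => finite_setOf_smul_eq G Γ v w).subset fun g hg => ?_
    exact Set.mem_biUnion (x := g • v) ((map_smul r g v).trans hg) rfl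
  exists_finite_darts := by
    obtain ⟨D, hD, hDG⟩ := ProperTreeAction.exists_finite_darts (G := G) (Γ := Γ)
    refine ⟨Prod.map r r '' D, hD.image _, ?_⟩
    rintro _ _ ⟨-, x, y, hxy, rfl, rfl⟩
    obtain ⟨g, hg⟩ := hDG _ _ hxy
    exact ⟨g, _, hg, Prod.ext (map_smul r g x) (map_smul r g y)⟩

theorem componentHom_fiber_reachable {Z : SimpleGraph V} [InvariantGraph G Z] (hZ : Z ≤ Γ)
    {x y : V} (h : componentHom G Z x = componentHom G Z y) :
    (fiberGraph Γ (componentHom G Z)).Reachable x y :=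
  (ConnectedComponent.exact h).mono fun _ _ hab =>
    ⟨hZ hab, ConnectedComponent.sound hab.reachable⟩

theorem ProperTreeAction.map_componentHom [ProperTreeAction G Γ] {Z : SimpleGraph V}
    [InvariantGraph G Z] (hZ : Z ≤ Γ)
    (hfin : ∀ v, {w | Z.Reachable v w}.Finite) :
    ProperTreeAction G (Γ.map (componentHom G Z)) :=
  ProperTreeAction.map Quot.mk_surjective (fun _ _ => componentHom_fiber_reachable hZ)
    fun v => (hfin v).subset fun _ hw => (ConnectedComponent.exact hw).symm

end Proper

section Collapse

/-- The graph obtained from `Γ` by contracting all edges on which `f` is constant. -/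
abbrev collapse (Γ : SimpleGraph V) [InvariantGraph G Γ] (f : V →[G] T) :
    SimpleGraph (fiberGraph Γ f).ConnectedComponent :=
  Γ.map (componentHom G (fiberGraph Γ f))

/-- The map induced by `f` on the vertices of `collapse Γ f`. -/
def collapseMap (Γ : SimpleGraph V) [InvariantGraph G Γ] (f : V →[G] T) :
    (fiberGraph Γ f).ConnectedComponent →[G] T where
  toFun := ConnectedComponent.lift f fun _ _ p _ => eq_of_fiberGraph_reachable p.reachable
  map_smul' g := ConnectedComponent.ind fun x => map_smul f g x

theorem exists_adj_of_collapse_adj [InvariantGraph G Γ] {f : V →[G] T}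
    {a b : (fiberGraph Γ f).ConnectedComponent} (h : (collapse Γ f).Adj a b) :
    ∃ x y, Γ.Adj x y ∧ f x ≠ f y ∧ componentHom G (fiberGraph Γ f) x = a ∧
      componentHom G (fiberGraph Γ f) y = b := by
  obtain ⟨hne, x, y, hxy, rfl, rfl⟩ := h
  refine ⟨x, y, hxy, fun hf => hne (ConnectedComponent.sound ?_), rfl, rfl⟩
  exact Adj.reachable (G := fiberGraph Γ f) ⟨hxy, hf⟩

theorem ProperTreeAction.collapse [ProperTreeAction G Γ] {f : V →[G] T}
    (hfin : ∀ v, {w | (fiberGraph Γ f).Reachable v w}.Finite) :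
    ProperTreeAction G (collapse Γ f) :=
  ProperTreeAction.map_componentHom (fiberGraph_le Γ f) hfin

end Collapse

section Blowup

variable {f : V →[G] T} {tip : V × V →[G] T}

instance [InvariantGraph G Γ] : MulAction G (BlowupVertex Γ f tip) where
  smul g a := ⟨g • a.1, a.2.imp (fun h => by rw [Prod.smul_snd, h, Prod.smul_fst, map_smul])
    fun ⟨w, hw, h⟩ => ⟨g • w, InvariantGraph.smul_adj g hw, by
      rw [Prod.smul_snd, ← h, ← map_smul, Prod.smul_fst, Prod.smul_mk]⟩⟩
  one_smul a := Subtype.ext (one_smul G a.1)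
  mul_smul g k a := Subtype.ext (mul_smul g k a.1)

/-- The extension of `f` to the blow-up which sends each tip to its label. -/
def blowupMap (Γ : SimpleGraph V) [InvariantGraph G Γ] (f : V →[G] T) (tip : V × V →[G] T) :
    BlowupVertex Γ f tip →[G] T where
  toFun a := a.1.2
  map_smul' _ _ := rfl

instance [InvariantGraph G Γ] : InvariantGraph G (blowup Γ f tip) where
  smul_adj g a b hab := by
    rcases hab with ⟨hv, ht, hc⟩ | ⟨hadj, ha, hb⟩
    · refine Or.inl ⟨congrArg (g • ·) hv, fun h => ht (smul_left_cancel g h), hc.imp ?_ ?_⟩ <;>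
        exact fun h => (congrArg (g • ·) h).trans (map_smul f g _).symm
    · exact Or.inr ⟨InvariantGraph.smul_adj g hadj,
        (congrArg (g • ·) ha).trans (map_smul tip g (_, _)).symm,
        (congrArg (g • ·) hb).trans (map_smul tip g (_, _)).symm⟩

theorem exists_finite_darts_blowup [ProperTreeAction G Γ] :
    ∃ D : Set (BlowupVertex Γ f tip × BlowupVertex Γ f tip), D.Finite ∧
      ∀ a b, (blowup Γ f tip).Adj a b → ∃ g : G, g • (a, b) ∈ D := by
  obtain ⟨D, hD, hDG⟩ := ProperTreeAction.exists_finite_darts (G := G) (Γ := Γ)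
  let cross (p : V × V) : (V × T) × (V × T) := ((p.1, tip (p.1, p.2)), (p.2, tip (p.2, p.1)))
  let tipToCenter (p : V × V) : (V × T) × (V × T) := ((p.1, tip (p.1, p.2)), (p.1, f p.1))
  let centerToTip (p : V × V) : (V × T) × (V × T) := ((p.1, f p.1), (p.1, tip (p.1, p.2)))
  let coe : BlowupVertex Γ f tip × BlowupVertex Γ f tip → (V × T) × (V × T) := Prod.map (↑) (↑)
  have hcoe : Function.Injective coe := Subtype.val_injective.prodMap Subtype.val_injective
  refine ⟨coe ⁻¹' (cross '' D ∪ (tipToCenter '' D ∪ centerToTip '' D)),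
    ((hD.image _).union ((hD.image _).union (hD.image _))).preimage hcoe.injOn, fun a b hab => ?_⟩
  obtain ⟨v, w, hvw, hdart⟩ := exists_adj_of_blowup_adj hab
  obtain ⟨g, hg⟩ := hDG v w hvw
  have hcross : g • cross (v, w) = cross (g • (v, w)) := by
    simp only [cross, Prod.smul_mk, ← map_smul]
  have htip : g • tipToCenter (v, w) = tipToCenter (g • (v, w)) := by
    simp only [tipToCenter, Prod.smul_mk, ← map_smul]
  have hcenter : g • centerToTip (v, w) = centerToTip (g • (v, w)) := by
    simp only [centerToTip, Prod.smul_mk, ← map_smul]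
  refine ⟨g, ?_⟩
  rw [Set.mem_preimage, show coe (g • (a, b)) = g • (a.1, b.1) from rfl]
  rcases hdart with ⟨ha, hb⟩ | ⟨ha, hb⟩ | ⟨ha, hb⟩ <;> rw [ha, hb]
  · exact Or.inl ⟨_, hg, hcross.symm⟩
  · exact Or.inr (Or.inl ⟨_, hg, htip.symm⟩)
  · exact Or.inr (Or.inr ⟨_, hg, hcenter.symm⟩)

instance [ProperTreeAction G Γ] : ProperTreeAction G (blowup Γ f tip) where
  isTree := isTree_blowup (ProperTreeAction.isTree G)
  finite_stabilizer a := (ProperTreeAction.finite_stabilizer (Γ := Γ) a.1.1).subset fun g hg =>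
    congrArg (fun b : BlowupVertex Γ f tip => b.1.1) (show g • a = a from hg)
  exists_finite_darts := exists_finite_darts_blowup

end Blowup

section Barycentric

open Pointwise

/-- `v ↦ {v}`; together with `barycentricTip` it makes the labels of the blow-up the vertices of
the barycentric subdivision, an edge being represented by its set of endpoints. -/
def singletonHom (G V : Type*) [Group G] [MulAction G V] : V →[G] Set V where
  toFun v := {v}
  map_smul' _ _ := Set.smul_set_singleton.symm

/-- `(v, w) ↦ {v, w}`. -/
def barycentricTip (G V : Type*) [Group G] [MulAction G V] : V × V →[G] Set V where
  toFun p := {p.1, p.2}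
  map_smul' g p := by
    rw [Set.smul_set_insert, Set.smul_set_singleton]; rfl

theorem finite_fiberGraph_barycentric [InvariantGraph G Γ]
    (a : BlowupVertex Γ (singletonHom G V) (barycentricTip G V)) :
    {b | (fiberGraph (blowup Γ (singletonHom G V) (barycentricTip G V))
      (blowupMap Γ _ _)).Reachable a b}.Finite := by
  have hmem : ∀ b : BlowupVertex Γ (singletonHom G V) (barycentricTip G V), b.1.1 ∈ b.1.2 := by
    rintro ⟨⟨v, s⟩, (h : s = {v}) | ⟨w, -, (h : {v, w} = s)⟩⟩
    · exact h ▸ Set.mem_singleton v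
    · exact h ▸ Set.mem_insert v {w}
  have hlabel : a.1.2.Finite := by
    rcases a.2 with h | ⟨w, -, h⟩
    · exact h ▸ Set.finite_singleton _
    · exact h ▸ Set.toFinite {a.1.1, w}
  refine ((hlabel.prod (Set.finite_singleton a.1.2)).preimage
    Subtype.val_injective.injOn).subset fun b hb => ?_
  have hab : a.1.2 = b.1.2 := eq_of_fiberGraph_reachable (f := blowupMap Γ _ _) hb
  exact ⟨hab ▸ hmem b, hab.symm⟩

theorem exists_invariant_coloring {V : Type u} [MulAction G V] (Γ : SimpleGraph V)
    [ProperTreeAction G Γ] :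
    ∃ (W : Type u) (_ : MulAction G W) (Δ : SimpleGraph W) (c : Δ.Coloring Bool),
      ProperTreeAction G Δ ∧ ∀ (g : G) x, c (g • x) = c x := by
  classical
  let label := blowupMap Γ (singletonHom G V) (barycentricTip G V)
  let isVertex (s : Set V) : Bool := decide (∃ v, s = {v})
  have hpair : ∀ {v w : V}, v ≠ w → isVertex {v, w} = false := fun {v w} hvw => by
    simp only [isVertex, decide_eq_false_iff_not]
    rintro ⟨u, hu⟩
    have hv : v ∈ ({u} : Set V) := hu ▸ Set.mem_insert v {w}
    have hw : w ∈ ({u} : Set V) := hu ▸ Set.mem_insert_of_mem v rfl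
    exact hvw (hv.trans hw.symm)
  have hsingleton : ∀ v : V, isVertex {v} = true := fun v => decide_eq_true ⟨v, rfl⟩
  refine ⟨_, inferInstance, collapse (blowup Γ _ _) label,
    Coloring.mk (fun a => isVertex (collapseMap _ label a)) ?_,
    ProperTreeAction.collapse finite_fiberGraph_barycentric, fun g x => ?_⟩
  · intro a b hab
    obtain ⟨x, y, hxy, hne, rfl, rfl⟩ := exists_adj_of_collapse_adj hab
    obtain ⟨v, w, hvw, hdart⟩ := exists_adj_of_blowup_adj hxy
    change x.1.2 ≠ y.1.2 at hne
    change isVertex x.1.2 ≠ isVertex y.1.2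
    have hne_color : isVertex {v, w} ≠ isVertex {v} := by rw [hpair hvw.ne, hsingleton v]; decide
    rcases hdart with ⟨hx, hy⟩ | ⟨hx, hy⟩ | ⟨hx, hy⟩ <;> rw [hx, hy] at hne ⊢
    · exact absurd (Set.pair_comm v w) hne
    · exact hne_color
    · exact hne_color.symm
  · change isVertex _ = isVertex _
    rw [map_smul, decide_eq_decide]
    refine ⟨fun ⟨v, hv⟩ => ⟨g⁻¹ • v, ?_⟩, fun ⟨v, hv⟩ => ⟨g • v, ?_⟩⟩
    · rw [← Set.smul_set_singleton, ← hv, inv_smul_smul]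
    · rw [hv, Set.smul_set_singleton]

end Barycentric

end Actions

section OrbitSets

variable {G X Y : Type*} [Group G] [MulAction G X] [MulAction G Y] (N : Subgroup G)

/-- The set of `N`-orbits of the points of `P`; its cardinality is the complexity that decreases
under folds and collapses. -/
def orbitSet (P : Set X) : Set (Set X) := MulAction.orbit N '' P

theorem exists_finite_forall_subgroup_smul_mem [N.FiniteIndex] {P D : Set X} (hD : D.Finite)
    (h : ∀ p ∈ P, ∃ g : G, g • p ∈ D) :
    ∃ D' : Set X, D'.Finite ∧ ∀ p ∈ P, ∃ n ∈ N, n • p ∈ D' := by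
  refine ⟨⋃ q : G ⧸ N, (q.out⁻¹ • ·) '' D, Set.finite_iUnion fun _ => hD.image _,
    fun p hp => ?_⟩
  obtain ⟨g, hg⟩ := h p hp
  refine ⟨(g : G ⧸ N).out⁻¹ * g, QuotientGroup.eq.1 (QuotientGroup.out_eq' _), ?_⟩
  exact Set.mem_iUnion.2 ⟨g, g • p, hg, (mul_smul _ _ _).symm⟩

variable {N}

theorem finite_orbitSet [N.FiniteIndex] {P D : Set X} (hD : D.Finite)
    (h : ∀ p ∈ P, ∃ g : G, g • p ∈ D) : (orbitSet N P).Finite := by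
  obtain ⟨D', hD', hND'⟩ := exists_finite_forall_subgroup_smul_mem N hD h
  refine (hD'.image (MulAction.orbit N)).subset ?_
  rintro _ ⟨p, hp, rfl⟩
  obtain ⟨n, hn, hnp⟩ := hND' p hp
  exact ⟨n • p, hnp, MulAction.orbit_eq_iff.2 ⟨⟨n, hn⟩, rfl⟩⟩

variable (N) in
theorem image_orbit (F : X →[G] Y) (p : X) :
    F '' MulAction.orbit N p = MulAction.orbit N (F p) := by
  rw [MulAction.orbit, ← Set.range_comp]
  exact congrArg Set.range (funext fun n : N => map_smul F (n : G) p)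

theorem orbitSet_subset_image (F : X →[G] Y) {P : Set X} {R : Set Y} (hR : R ⊆ F '' P) :
    orbitSet N R ⊆ (F '' ·) '' orbitSet N P := by
  rintro _ ⟨_, hr, rfl⟩
  obtain ⟨p, hp, rfl⟩ := hR hr
  exact ⟨_, ⟨p, hp, rfl⟩, image_orbit N F p⟩

theorem ncard_orbitSet_le (F : X →[G] Y) {P : Set X} {R : Set Y} (hP : (orbitSet N P).Finite)
    (hR : R ⊆ F '' P) : (orbitSet N R).ncard ≤ (orbitSet N P).ncard :=
  (Set.ncard_le_ncard (orbitSet_subset_image F hR) (hP.image _)).trans (Set.ncard_image_le hP)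

theorem ncard_orbitSet_lt (F : X →[G] Y) {P : Set X} {R : Set Y} (hP : (orbitSet N P).Finite)
    (hR : R ⊆ F '' P) {p q : X} (hp : p ∈ P) (hq : q ∈ P) (hpq : ∀ n ∈ N, n • p ≠ q)
    (hF : F p = F q) : (orbitSet N R).ncard < (orbitSet N P).ncard := by
  refine (Set.ncard_le_ncard (orbitSet_subset_image F hR) (hP.image _)).trans_lt
    ((Set.ncard_image_le hP).lt_of_ne fun hcard => ?_)
  have horbit : MulAction.orbit N p = MulAction.orbit N q :=
    Set.injOn_of_ncard_image_eq hcard hP ⟨p, hp, rfl⟩ ⟨q, hq, rfl⟩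
      (by simp only [image_orbit, hF])
  obtain ⟨n, hn⟩ := MulAction.orbit_eq_iff.1 horbit.symm
  exact hpq n n.2 hn

theorem ncard_orbitSet_image (F : X →[G] Y) (hF : Function.Injective F) (P : Set X) :
    (orbitSet N (F '' P)).ncard = (orbitSet N P).ncard := by
  rw [← Set.ncard_image_of_injective (orbitSet N P) (Set.image_injective.2 hF)]
  simp only [orbitSet, Set.image_image, image_orbit]

end OrbitSets

section Darts

variable {G V : Type*} [Group G] [MulAction G V] (N : Subgroup G) [N.FiniteIndex]

/-- The oriented edges of `Γ`, as pairs of vertices. -/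
def darts {V : Type*} (Γ : SimpleGraph V) : Set (V × V) := {p | Γ.Adj p.1 p.2}

theorem finite_orbitSet_of_subset_darts (Γ : SimpleGraph V) [ProperTreeAction G Γ]
    {P : Set (V × V)} (hP : P ⊆ darts Γ) : (orbitSet N P).Finite := by
  obtain ⟨D, hD, hDG⟩ := ProperTreeAction.exists_finite_darts (G := G) (Γ := Γ)
  exact finite_orbitSet hD fun p hp => hDG p.1 p.2 (hP hp)

theorem finite_orbitSet_univ (Γ : SimpleGraph V) [ProperTreeAction G Γ] :
    (orbitSet N (Set.univ : Set V)).Finite := by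
  obtain ⟨D, hD, hDG⟩ := exists_finite_vertices G Γ
  exact finite_orbitSet hD fun p _ => hDG p

end Darts

section TrailsInQuotients

variable {G V W : Type*} [Group G] [MulAction G V] [MulAction G W] {N : Subgroup G}

/-- There is a sequence of vertices from some `x` to `n • x`, with consecutive vertices equal or
adjacent, whose image in the quotient graph by `N` traverses no oriented edge twice. Allowing
repetitions makes the notion stable under contracting edges. -/
def HasQuotientTrail (N : Subgroup G) (Γ : SimpleGraph V) (n : G) : Prop :=
  ∃ (k : ℕ) (x : ℕ → V), x k = n • x 0 ∧
    (∀ i < k, x i = x (i + 1) ∨ Γ.Adj (x i) (x (i + 1))) ∧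
    ∀ i j, i < j → j < k → x i ≠ x (i + 1) →
      ∀ m ∈ N, ¬ (m • x i = x j ∧ m • x (i + 1) = x (j + 1))

theorem HasQuotientTrail.mono {Z Γ : SimpleGraph V} (hZ : Z ≤ Γ) {n : G}
    (h : HasQuotientTrail N Z n) : HasQuotientTrail N Γ n := by
  obtain ⟨k, x, hk, hx, htrail⟩ := h
  exact ⟨k, x, hk, fun i hi => (hx i hi).imp_right (hZ ·), htrail⟩

/-- A walk of minimal length among those from a vertex to a nontrivial `N`-translate of it crosses
no `N`-orbit of edges twice, as it could be shortened otherwise. -/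
theorem exists_hasQuotientTrail_of_reachable {Z : SimpleGraph V} {n : G} (hn : n ∈ N) (hne : n ≠ 1)
    {w : V} (hw : Z.Reachable w (n • w)) :
    ∃ n ∈ N, n ≠ 1 ∧ HasQuotientTrail N Z n ∧ ∃ w, Z.Reachable w (n • w) := by
  classical
  have hex : ∃ k, ∃ n ∈ N, n ≠ 1 ∧ ∃ w, ∃ p : Z.Walk w (n • w), p.length = k :=
    ⟨_, n, hn, hne, w, hw.some, rfl⟩
  obtain ⟨n, hn, hne, w, p, hp⟩ := Nat.find_spec hex
  have hmin : ∀ m ∈ N, m ≠ 1 → ∀ x, ∀ q : Z.Walk x (m • x), p.length ≤ q.length :=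
    fun m hm hm1 x q => hp.trans_le (Nat.find_min' hex ⟨m, hm, hm1, x, q, rfl⟩)
  refine ⟨n, hn, hne, ⟨p.length, p.getVert, by simp, fun i hi => Or.inr (p.adj_getVert_succ hi),
    ?_⟩, w, p.reachable⟩
  rintro i j hij hj - m hm ⟨hmi, -⟩
  by_cases hm1 : m = 1
  · rw [hm1, one_smul] at hmi
    have hshort := hmin n hn hne w (((p.take i).copy rfl hmi).append (p.drop j))
    rw [Walk.length_append, Walk.length_copy, Walk.take_length, Walk.drop_length] at hshort
    omega
  · have hend : (p.drop i).getVert (j - i) = m • p.getVert i := by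
      rw [Walk.drop_getVert, hmi, Nat.add_sub_cancel' hij.le]
    have hshort := hmin m hm hm1 _ (((p.drop i).take (j - i)).copy rfl hend)
    rw [Walk.length_copy, Walk.take_length, Walk.drop_length] at hshort
    omega

theorem exists_reachable_smul_of_infinite [N.FiniteIndex] {D : Set V} (hD : D.Finite)
    (hDG : ∀ x, ∃ g : G, g • x ∈ D) {Z : SimpleGraph V} {v : V}
    (hv : {w | Z.Reachable v w}.Infinite) :
    ∃ n ∈ N, n ≠ 1 ∧ ∃ w, Z.Reachable w (n • w) := by
  obtain ⟨D', hD', hND'⟩ := exists_finite_forall_subgroup_smul_mem N (P := Set.univ) hD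
    fun x _ => hDG x
  choose a haN ha using fun x => hND' x trivial
  obtain ⟨x, hx, y, hy, hne, hxy⟩ := hv.exists_ne_map_eq_of_mapsTo
    (f := fun x => a x • x) (fun x _ => ha x) hD'
  have hy_eq : ((a y)⁻¹ * a x) • x = y := by rw [mul_smul, hxy, inv_smul_smul]
  refine ⟨(a y)⁻¹ * a x, N.mul_mem (N.inv_mem (haN y)) (haN x), fun h => hne ?_, x, ?_⟩
  · rw [← hy_eq, h, one_smul]
  · exact hy_eq.symm ▸ (Reachable.symm hx).trans hy

theorem isOfFinOrder_of_smul_eq (Γ : SimpleGraph V) [ProperTreeAction G Γ] {g : G} {v : V}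
    (hv : g • v = v) : IsOfFinOrder g :=
  finite_powers.1 <| (ProperTreeAction.finite_stabilizer (Γ := Γ) v).subset <|
    (Submonoid.powers_le (P := (MulAction.stabilizer G v).toSubmonoid)).2 hv

theorem eq_one_of_smul_eq (htf : ∀ n ∈ N, n ≠ 1 → ¬ IsOfFinOrder n) (Γ : SimpleGraph V)
    [ProperTreeAction G Γ] {n : G} (hn : n ∈ N) {v : V} (hv : n • v = v) : n = 1 := by
  by_contra hne
  exact htf n hn hne (isOfFinOrder_of_smul_eq Γ hv)

end TrailsInQuotients

section EquivariantMaps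

theorem nonempty_hom_of_forall_exists {G V T : Type*} [Group G] [MulAction G V] [MulAction G T]
    (h : ∀ v : V, ∃ t : T, ∀ g : G, g • v = v → g • t = t) : Nonempty (V →[G] T) := by
  choose t ht using h
  let rep (v : V) : V := (Quotient.mk (MulAction.orbitRel G V) v).out
  have hrep : ∀ (g : G) v, rep (g • v) = rep v := fun g v =>
    congrArg Quotient.out (Quotient.sound (s := MulAction.orbitRel G V) ⟨g, rfl⟩)
  have horbit : ∀ v, ∃ g : G, g • rep v = v := fun v =>
    MulAction.mem_orbit_symm.1 (Quotient.exact (s := MulAction.orbitRel G V) (Quotient.out_eq _))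
  choose a ha using horbit
  refine ⟨⟨fun v => a v • t (rep v), fun g v => ?_⟩⟩
  have hfix := ht (rep v) ((a (g • v))⁻¹ * (g * a v)) (by
    rw [mul_smul, mul_smul, ha, inv_smul_eq_iff, ← hrep g v, ha])
  rw [mul_smul, inv_smul_eq_iff, mul_smul] at hfix
  simpa only [hrep, id] using hfix.symm

variable {G : Type*} [Group G] {V T : Type u} [MulAction G V] [MulAction G T]
  {Γ : SimpleGraph V} {Θ : SimpleGraph T}

theorem nonempty_hom_of_isTree (Γ : SimpleGraph V) [ProperTreeAction G Γ] [InvariantGraph G Θ]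
    (hΘ : Θ.IsTree) (hinv : ∀ (g : G) (x : T), ¬ Θ.Adj x (g • x)) : Nonempty (V →[G] T) := by
  refine nonempty_hom_of_forall_exists fun v => ?_
  have : Finite (MulAction.stabilizer G v) := ProperTreeAction.finite_stabilizer (Γ := Γ) v
  exact exists_forall_smul_eq hΘ hinv (MulAction.stabilizer G v)

theorem exists_dist_le [ProperTreeAction G Γ] [InvariantGraph G Θ] (hΘ : Θ.IsTree) (f : V →[G] T) :
    ∃ L, ∀ x y, Γ.Adj x y → Θ.dist (f x) (f y) ≤ L := by
  obtain ⟨D, hD, hDG⟩ := ProperTreeAction.exists_finite_darts (G := G) (Γ := Γ)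
  refine ⟨hD.toFinset.sup fun p => Θ.dist (f p.1) (f p.2), fun x y hxy => ?_⟩
  obtain ⟨g, hg⟩ := hDG x y hxy
  rw [← dist_smul_smul hΘ.1 g, ← map_smul, ← map_smul]
  exact Finset.le_sup (f := fun p : V × V => Θ.dist (f p.1) (f p.2)) (hD.mem_toFinset.2 hg)

end EquivariantMaps

section Shortening

variable {G : Type*} [Group G] {T : Type u} [MulAction G T] {Θ : SimpleGraph T}

theorem dist_step_step (hΘ : Θ.IsTree) {a b : T} (h : 2 ≤ Θ.dist a b) :
    Θ.dist (step Θ a b) (step Θ b a) + 2 = Θ.dist a b := by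
  have hab : a ≠ b := by rintro rfl; simp at h
  have hstep := dist_eq_dist_step_add_one hΘ.1 hab
  have hsb : step Θ a b ≠ b := fun hs => by rw [hs, SimpleGraph.dist_self] at hstep; omega
  have hstep' := dist_eq_dist_step_add_one hΘ.1 hsb.symm
  rw [step_eq_step_of_adj hΘ (step_adj hΘ.1 hab) hab hsb, hstep, Θ.dist_comm (v := b), hstep',
    Θ.dist_comm]

variable [InvariantGraph G Θ]

open Classical in
/-- Labels for a blow-up that subdivides every edge with image of length at least two, mapping the
new vertices to the second and the last but one vertex of its image. -/
noncomputable def subdivisionTip {V : Type*} [MulAction G V] (hΘ : Θ.IsTree) (f : V →[G] T) :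
    V × V →[G] T where
  toFun p := if 2 ≤ Θ.dist (f p.1) (f p.2) then step Θ (f p.1) (f p.2) else f p.1
  map_smul' g p := by
    simp only [Prod.smul_fst, Prod.smul_snd, map_smul, dist_smul_smul hΘ.1, step_smul_smul hΘ,
      smul_ite]
    rfl

theorem dist_subdivisionTip_le {V : Type*} [MulAction G V] (hΘ : Θ.IsTree) (f : V →[G] T)
    (v w : V) : Θ.dist (subdivisionTip hΘ f (v, w)) (f v) ≤ 1 := by
  change Θ.dist (ite _ _ _) (f v) ≤ 1
  split_ifs with hd
  · have hne : f v ≠ f w := fun h => by simp [h] at hd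
    exact (dist_eq_one_iff_adj.2 (step_adj hΘ.1 hne).symm).le
  · simp

theorem dist_subdivisionTip_swap_le {V : Type*} [MulAction G V] (hΘ : Θ.IsTree) (f : V →[G] T)
    {v w : V} {L : ℕ} (h : Θ.dist (f v) (f w) ≤ L + 2) :
    Θ.dist (subdivisionTip hΘ f (v, w)) (subdivisionTip hΘ f (w, v)) ≤ L + 1 := by
  change Θ.dist (ite _ _ _) (ite _ _ _) ≤ L + 1
  simp only [Θ.dist_comm (u := f w)]
  split_ifs with hd
  · have := dist_step_step hΘ hd
    omega
  · omega

theorem exists_map_dist_le_one (hΘ : Θ.IsTree) {V : Type u} [MulAction G V] {Γ : SimpleGraph V}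
    [ProperTreeAction G Γ] (f : V →[G] T) {L : ℕ}
    (hL : ∀ x y, Γ.Adj x y → Θ.dist (f x) (f y) ≤ L + 1) :
    ∃ (W : Type u) (_ : MulAction G W) (Δ : SimpleGraph W) (_ : ProperTreeAction G Δ)
      (f' : W →[G] T), ∀ x y, Δ.Adj x y → Θ.dist (f' x) (f' y) ≤ 1 := by
  induction L generalizing V with
  | zero => exact ⟨V, _, Γ, inferInstance, f, hL⟩
  | succ L ih =>
    refine ih (Γ := blowup Γ f (subdivisionTip hΘ f)) (blowupMap Γ f _) fun x y hxy => ?_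
    change Θ.dist x.1.2 y.1.2 ≤ L + 1
    obtain ⟨v, w, hvw, ⟨hx, hy⟩ | ⟨hx, hy⟩ | ⟨hx, hy⟩⟩ := exists_adj_of_blowup_adj hxy <;>
      rw [hx, hy]
    · exact dist_subdivisionTip_swap_le hΘ f (hL v w hvw)
    · exact (dist_subdivisionTip_le hΘ f v w).trans (Nat.le_add_left 1 L)
    · exact Θ.dist_comm ▸ (dist_subdivisionTip_le hΘ f v w).trans (Nat.le_add_left 1 L)

end Shortening

section Folding

variable {G V T : Type*} [Group G] [MulAction G V] [MulAction G T]
  {Γ : SimpleGraph V} {Θ : SimpleGraph T}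

theorem injective_of_locally_injective (hΓ : Γ.IsTree) (hΘ : Θ.IsTree) {f : V → T}
    (hadj : ∀ x y, Γ.Adj x y → Θ.Adj (f x) (f y))
    (hinj : ∀ v w w', Γ.Adj v w → Γ.Adj v w' → f w = f w' → w = w') : Function.Injective f := by
  have hdist : ∀ n : ℕ, ∀ x y, Γ.dist x y = n → Θ.dist (f x) (f y) = n := by
    intro n
    induction n using Nat.strong_induction_on with
    | _ n ih =>
      intro x y hn
      obtain rfl | hxy := eq_or_ne x y
      · simpa using hn
      have hxt := step_adj hΓ.1 hxy
      have hdx := dist_eq_dist_step_add_one hΓ.1 hxy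
      set t := step Γ x y
      obtain hty | hty := eq_or_ne t y
      · rw [hty, SimpleGraph.dist_self] at hdx
        rw [← hn, hdx]
        exact dist_eq_one_iff_adj.2 (hadj _ _ (hty ▸ hxt))
      have hts := step_adj hΓ.1 hty
      have hdt := dist_eq_dist_step_add_one hΓ.1 hty
      set s := step Γ t y
      have hft := ih (Γ.dist t y) (by omega) t y rfl
      have hfs := ih (Γ.dist s y) (by omega) s y rfl
      have hstep : f s = step Θ (f t) (f y) := eq_step hΘ (hadj _ _ hts) (by omega)
      have hne : f x ≠ step Θ (f t) (f y) := fun hfx => by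
        have hxs : x = s := hinj t x s hxt.symm hts (hfx.trans hstep.symm)
        rw [hxs] at hdx
        omega
      rw [dist_eq_of_ne_step hΘ (hadj _ _ hxt.symm) hne, hft, ← hn, hdx]
  intro x y hxy
  have hd := hdist _ x y rfl
  rw [hxy, SimpleGraph.dist_self] at hd
  exact hΓ.1.dist_eq_zero_iff.1 hd.symm

/-- The oriented edges of `Γ` which `f` does not collapse to a vertex. -/
def essentialDarts (Γ : SimpleGraph V) (f : V → T) : Set (V × V) :=
  {p ∈ darts Γ | f p.1 ≠ f p.2}

theorem ncard_orbitSet_essentialDarts_collapse_le (N : Subgroup G) [N.FiniteIndex]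
    [ProperTreeAction G Γ] (f : V →[G] T) :
    (orbitSet N (essentialDarts (collapse Γ f) (collapseMap Γ f))).ncard ≤
      (orbitSet N (essentialDarts Γ f)).ncard := by
  let r := componentHom G (fiberGraph Γ f)
  let F : V × V →[G] _ × _ := ⟨Prod.map r r, fun g p => Prod.ext (map_smul r g _) (map_smul r g _)⟩
  refine ncard_orbitSet_le F (finite_orbitSet_of_subset_darts N Γ fun p hp => hp.1) ?_
  rintro ⟨a, b⟩ ⟨hab, -⟩
  obtain ⟨x, y, hxy, hne, rfl, rfl⟩ := exists_adj_of_collapse_adj hab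
  exact ⟨(x, y), ⟨hxy, hne⟩, rfl⟩

variable {c : Θ.Coloring Bool} (hc : ∀ (g : G) t, c (g • t) = c t) (b : Bool) (f : V →[G] T)

/-- Labels for a blow-up that folds at all vertices `v` of colour `b` (that is, `c (f v) = b`):
neighbours `w` of `v` with the same image yield the same tip. -/
def foldTip : V × V →[G] T where
  toFun p := if c (f p.1) = b then f p.2 else f p.1
  map_smul' g p := by
    simp only [Prod.smul_fst, Prod.smul_snd, map_smul, hc, smul_ite]; rfl

/-- The oriented edge of the fold which replaces an oriented edge of `Γ`, as a pair of labelled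
vertices. -/
def foldDart : V × V →[G] (V × T) × (V × T) where
  toFun p := if c (f p.1) = b then ((p.1, f p.1), (p.1, f p.2)) else ((p.2, f p.1), (p.2, f p.2))
  map_smul' g p := by
    simp only [Prod.smul_fst, Prod.smul_snd, map_smul, hc, smul_ite]; rfl

theorem foldTip_swap (hf : ∀ x y, Γ.Adj x y → Θ.Adj (f x) (f y)) {v w : V} (hvw : Γ.Adj v w) :
    foldTip hc b f (v, w) = foldTip hc b f (w, v) := by
  have hne := c.valid (hf v w hvw)
  change ite _ _ _ = ite _ _ _
  split_ifs with hv hw hw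
  · exact absurd (hv.trans hw.symm) hne
  · rfl
  · rfl
  · rw [Bool.eq_not.2 hv, Bool.eq_not.2 hw] at hne
    exact absurd rfl hne

theorem eq_or_adj_of_fold_adj (hf : ∀ x y, Γ.Adj x y → Θ.Adj (f x) (f y))
    {x y : BlowupVertex Γ f (foldTip hc b f)} (h : (blowup Γ f (foldTip hc b f)).Adj x y) :
    x.1.2 = y.1.2 ∨ Θ.Adj x.1.2 y.1.2 := by
  have htip : ∀ v w, Γ.Adj v w →
      foldTip hc b f (v, w) = f v ∨ Θ.Adj (foldTip hc b f (v, w)) (f v) := by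
    intro v w hvw
    change ite _ _ _ = _ ∨ Θ.Adj (ite _ _ _) _
    split_ifs
    · exact Or.inr (hf v w hvw).symm
    · exact Or.inl rfl
  obtain ⟨v, w, hvw, ⟨hx, hy⟩ | ⟨hx, hy⟩ | ⟨hx, hy⟩⟩ := exists_adj_of_blowup_adj h <;> rw [hx, hy]
  · exact Or.inl (foldTip_swap hc b f hf hvw)
  · exact htip v w hvw
  · exact (htip v w hvw).imp Eq.symm Adj.symm

theorem exists_foldDart_eq (hf : ∀ x y, Γ.Adj x y → Θ.Adj (f x) (f y))
    {x y : BlowupVertex Γ f (foldTip hc b f)} (h : (blowup Γ f (foldTip hc b f)).Adj x y)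
    (hne : x.1.2 ≠ y.1.2) : ∃ p ∈ darts Γ, foldDart hc b f p = (x.1, y.1) := by
  have htip : ∀ {v w}, foldTip hc b f (v, w) ≠ f v → c (f v) = b ∧ foldTip hc b f (v, w) = f w := by
    intro v w h
    have hcv : c (f v) = b := by_contra fun hcv => h (if_neg hcv)
    exact ⟨hcv, if_pos hcv⟩
  obtain ⟨v, w, hvw, ⟨hx, hy⟩ | ⟨hx, hy⟩ | ⟨hx, hy⟩⟩ := exists_adj_of_blowup_adj h <;>
    rw [hx, hy] at hne ⊢
  · exact absurd (foldTip_swap hc b f hf hvw) hne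
  · obtain ⟨hcv, heq⟩ := htip hne
    have hcw : c (f w) ≠ b := fun hcw => c.valid (hf v w hvw) (hcv.trans hcw.symm)
    exact ⟨(w, v), hvw.symm, heq ▸ if_neg hcw⟩
  · obtain ⟨hcv, heq⟩ := htip hne.symm
    exact ⟨(v, w), hvw, heq ▸ if_pos hcv⟩

theorem ncard_orbitSet_essentialDarts_fold_lt {N : Subgroup G} [N.FiniteIndex]
    (htf : ∀ n ∈ N, n ≠ 1 → ¬ IsOfFinOrder n) [ProperTreeAction G Γ]
    (hf : ∀ x y, Γ.Adj x y → Θ.Adj (f x) (f y)) {v w w' : V} (hvw : Γ.Adj v w)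
    (hvw' : Γ.Adj v w') (hne : w ≠ w') (hfw : f w = f w') (hcv : c (f v) = b) :
    (orbitSet N (essentialDarts (blowup Γ f (foldTip hc b f)) (blowupMap Γ f _))).ncard <
      (orbitSet N (essentialDarts Γ f)).ncard := by
  let X := BlowupVertex Γ f (foldTip hc b f)
  let coe : X × X →[G] (V × T) × (V × T) := ⟨fun p => (p.1.1, p.2.1), fun _ _ => rfl⟩
  have hcoe : Function.Injective coe := Subtype.val_injective.prodMap Subtype.val_injective
  rw [← ncard_orbitSet_image coe hcoe]
  refine ncard_orbitSet_lt (foldDart hc b f) (p := (v, w)) (q := (v, w'))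
    (finite_orbitSet_of_subset_darts N Γ fun p hp => hp.1) ?_ ⟨hvw, (hf v w hvw).ne⟩
    ⟨hvw', (hf v w' hvw').ne⟩ (fun n hn hnvw => hne ?_) ?_
  · rintro _ ⟨⟨x, y⟩, ⟨hxy, hne⟩, rfl⟩
    obtain ⟨p, hp, hpxy⟩ := exists_foldDart_eq hc b f hf hxy hne
    exact ⟨p, ⟨hp, (hf _ _ hp).ne⟩, hpxy⟩
  · obtain ⟨hv, hw⟩ := Prod.ext_iff.1 hnvw
    rwa [eq_one_of_smul_eq htf Γ hn hv, one_smul] at hw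
  · change ite _ _ _ = ite _ _ _
    rw [if_pos hcv, if_pos hcv, hfw]

end Folding

section Minimization

variable {G : Type*} [Group G] {N : Subgroup G} {V T : Type u} [MulAction G V] [MulAction G T]
  {Θ : SimpleGraph T}

theorem exists_map_eq_or_adj (Γ : SimpleGraph V) [ProperTreeAction G Γ] [InvariantGraph G Θ]
    (hΘ : Θ.IsTree) (hinv : ∀ (g : G) (x : T), ¬ Θ.Adj x (g • x)) :
    ∃ (W : Type u) (_ : MulAction G W) (Δ : SimpleGraph W) (_ : ProperTreeAction G Δ)
      (f : W →[G] T), ∀ x y, Δ.Adj x y → f x = f y ∨ Θ.Adj (f x) (f y) := by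
  obtain ⟨f⟩ := nonempty_hom_of_isTree (G := G) Γ hΘ hinv
  obtain ⟨L, hL⟩ := exists_dist_le (Γ := Γ) hΘ f
  obtain ⟨W, _, Δ, hΔ, f', hf'⟩ := exists_map_dist_le_one (Γ := Γ) hΘ f
    fun x y hxy => (hL x y hxy).trans (Nat.le_add_right L 1)
  refine ⟨W, _, Δ, hΔ, f', fun x y hxy => ?_⟩
  rcases Nat.le_one_iff_eq_zero_or_eq_one.1 (hf' x y hxy) with h | h
  · exact Or.inl (hΘ.1.dist_eq_zero_iff.1 h)
  · exact Or.inr (dist_eq_one_iff_adj.1 h)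

theorem exists_hasQuotientTrail_of_infinite [N.FiniteIndex] {Γ : SimpleGraph V}
    [ProperTreeAction G Γ] (f : V →[G] T) {v : V}
    (hv : {w | (fiberGraph Γ f).Reachable v w}.Infinite) :
    ∃ n ∈ N, n ≠ 1 ∧ HasQuotientTrail N Γ n ∧ ∃ t : T, n • t = t := by
  obtain ⟨D, hD, hDG⟩ := exists_finite_vertices G Γ
  obtain ⟨n, hn, hne, w, hw⟩ := exists_reachable_smul_of_infinite (N := N) hD hDG hv
  obtain ⟨n, hn, hne, htrail, w, hw⟩ := exists_hasQuotientTrail_of_reachable hn hne hw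
  refine ⟨n, hn, hne, htrail.mono (fiberGraph_le Γ f), f w, ?_⟩
  rw [← map_smul, eq_of_fiberGraph_reachable hw]

/-- An equivariant map to `Θ` with as few orbits of essential edges as possible: if its fibres are
finite, collapsing them gives a map which cannot be folded, hence an embedding. -/
theorem forall_eq_one_or_exists_hasQuotientTrail [N.FiniteIndex]
    (htf : ∀ n ∈ N, n ≠ 1 → ¬ IsOfFinOrder n) (Γ : SimpleGraph V) [ProperTreeAction G Γ]
    [InvariantGraph G Θ] (hΘ : Θ.IsTree) (c : Θ.Coloring Bool)
    (hc : ∀ (g : G) t, c (g • t) = c t) :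
    (∀ n ∈ N, (∀ t : T, n • t = t) → n = 1) ∨
    ∃ (W : Type u) (_ : MulAction G W) (Δ : SimpleGraph W), ProperTreeAction G Δ ∧
      ∃ n ∈ N, n ≠ 1 ∧ HasQuotientTrail N Δ n ∧ ∃ t : T, n • t = t := by
  have hinv : ∀ (g : G) (x : T), ¬ Θ.Adj x (g • x) := fun g x hx => c.valid hx (hc g x).symm
  have hex : ∃ m : ℕ, ∃ (W : Type u) (_ : MulAction G W) (Δ : SimpleGraph W)
      (_ : ProperTreeAction G Δ) (f : W →[G] T),
      (∀ x y, Δ.Adj x y → f x = f y ∨ Θ.Adj (f x) (f y)) ∧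
      (orbitSet N (essentialDarts Δ f)).ncard = m := by
    obtain ⟨W, _, Δ, hΔ, f, hf⟩ := exists_map_eq_or_adj (G := G) Γ hΘ hinv
    exact ⟨_, W, _, Δ, hΔ, f, hf, rfl⟩
  classical
  obtain ⟨W, _, Δ, hΔ, f, hf, hm⟩ := Nat.find_spec hex
  by_cases hfin : ∀ v, {w | (fiberGraph Δ f).Reachable v w}.Finite
  · refine Or.inl fun n hn hnT => ?_
    have := ProperTreeAction.collapse hfin
    have hadj : ∀ x y, (collapse Δ f).Adj x y → Θ.Adj (collapseMap Δ f x) (collapseMap Δ f y) := by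
      intro a b hab
      obtain ⟨x, y, hxy, hne, rfl, rfl⟩ := exists_adj_of_collapse_adj hab
      exact (hf x y hxy).resolve_left hne
    have hinj : Function.Injective (collapseMap Δ f) := by
      refine injective_of_locally_injective (ProperTreeAction.isTree G) hΘ hadj
        fun v w w' hvw hvw' hww' => by_contra fun hne => ?_
      refine Nat.find_min hex ((ncard_orbitSet_essentialDarts_fold_lt hc _ _ htf hadj hvw hvw' hne
        hww' rfl).trans_le ((ncard_orbitSet_essentialDarts_collapse_le N f).trans hm.le)) ?_
      exact ⟨_, _, _, inferInstance, _, fun x y => eq_or_adj_of_fold_adj hc _ _ hadj, rfl⟩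
    obtain ⟨v⟩ := (ProperTreeAction.connected G (Γ := collapse Δ f)).nonempty
    refine eq_one_of_smul_eq htf (collapse Δ f) hn (v := v) (hinj ?_)
    rw [map_smul, hnT]
  · right
    push Not at hfin
    obtain ⟨v, hv⟩ := hfin
    exact ⟨W, _, Δ, hΔ, exists_hasQuotientTrail_of_infinite f hv⟩

end Minimization

section ReducedTrees

variable {G : Type*} [Group G] {V W : Type u} [MulAction G V] [MulAction G W]
  {Γ : SimpleGraph V} {N : Subgroup G}

theorem HasQuotientTrail.map [InvariantGraph G Γ] (hT : Γ.IsTree) {r : V →[G] W}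
    (hfib : ∀ x y, r x = r y → (fiberGraph Γ r).Reachable x y) {n : G}
    (h : HasQuotientTrail N Γ n) : HasQuotientTrail N (Γ.map r) n := by
  obtain ⟨k, x, hk, hx, htrail⟩ := h
  have hadj : ∀ {i}, i < k → r (x i) ≠ r (x (i + 1)) → Γ.Adj (x i) (x (i + 1)) :=
    fun hi hne => (hx _ hi).resolve_left fun h => hne (congrArg r h)
  refine ⟨k, r ∘ x, ?_, fun i hi => or_iff_not_imp_left.2 fun hne => ?_, ?_⟩
  · simp only [Function.comp_apply, hk, map_smul]
  · exact ⟨hne, _, _, hadj hi hne, rfl, rfl⟩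
  · rintro i j hij hj hne m hm ⟨hmi, hmj⟩
    simp only [Function.comp_apply, ← map_smul] at hne hmi hmj
    have hi := hadj (hij.trans hj) hne
    have hne' : r (m • x i) ≠ r (m • x (i + 1)) := by
      rw [map_smul, map_smul]
      exact fun h => hne (smul_left_cancel m h)
    have hjadj := hadj hj (hmi ▸ hmj ▸ hne')
    exact htrail i j hij hj hi.ne m hm
      (eq_and_eq_of_contraction_eq hT hfib (InvariantGraph.smul_adj m hi) hjadj hne' hmi hmj)

theorem finite_neighborSet (G : Type*) [Group G] [MulAction G V] (Γ : SimpleGraph V)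
    [ProperTreeAction G Γ] (v : V) : (Γ.neighborSet v).Finite := by
  obtain ⟨D, hD, hDG⟩ := ProperTreeAction.exists_finite_darts (G := G) (Γ := Γ)
  refine (hD.biUnion fun d _ =>
    (finite_setOf_smul_eq G Γ v d.1).image fun g => g⁻¹ • d.2).subset fun w hw => ?_
  obtain ⟨g, hg⟩ := hDG v w hw
  exact Set.mem_biUnion hg ⟨g, rfl, inv_smul_smul g w⟩

/-- No orbit of edges between different orbits of vertices can be contracted: the stabilizer of an
endpoint of such an edge never fixes the other endpoint. -/
def IsReduced (G : Type*) [Group G] {V : Type*} [MulAction G V] (Γ : SimpleGraph V) : Prop :=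
  ∀ v a : V, Γ.Adj v a → (∀ g : G, g • v ≠ a) → ∃ g : G, g • v = v ∧ g • a ≠ a

section EdgeOrbit

variable {v a : V}

variable (G) in
/-- The graph formed by the `G`-translates of the edge between `v` and `a`. -/
def edgeOrbitGraph (hne : v ≠ a) : SimpleGraph V where
  Adj x y := ∃ g : G, (g • v = x ∧ g • a = y) ∨ (g • v = y ∧ g • a = x)
  symm := ⟨fun _ _ ⟨g, hg⟩ => ⟨g, hg.symm⟩⟩
  loopless := ⟨fun _ ⟨g, hg⟩ => hne <| smul_left_cancel g <|
    hg.elim (fun h => h.1.trans h.2.symm) fun h => h.1.trans h.2.symm⟩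

instance (hne : v ≠ a) : InvariantGraph G (edgeOrbitGraph G hne) where
  smul_adj g x y := by
    rintro ⟨k, h⟩
    refine ⟨g * k, h.imp ?_ ?_⟩ <;> rintro ⟨rfl, rfl⟩ <;>
      exact ⟨mul_smul _ _ _, mul_smul _ _ _⟩

theorem edgeOrbitGraph_le [InvariantGraph G Γ] (hva : Γ.Adj v a) :
    edgeOrbitGraph G hva.ne ≤ Γ := by
  rintro x y ⟨g, ⟨rfl, rfl⟩ | ⟨rfl, rfl⟩⟩
  · exact InvariantGraph.smul_adj g hva
  · exact (InvariantGraph.smul_adj g hva).symm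

/-- When the stabilizer of `v` fixes `a`, the components of the orbit of the edge are stars. -/
theorem finite_reachable_edgeOrbitGraph [ProperTreeAction G Γ] (hva : Γ.Adj v a)
    (hne : ∀ g : G, g • v ≠ a) (hfix : ∀ g : G, g • v = v → g • a = a) (x : V) :
    {w | (edgeOrbitGraph G hva.ne).Reachable x w}.Finite := by
  let star (k : G) : Set V := insert (k • a) {z | ∃ g : G, g • v = z ∧ g • a = k • a}
  have hstar (k : G) : ∀ y z, (edgeOrbitGraph G hva.ne).Adj y z → y ∈ star k → z ∈ star k := by
    rintro y z ⟨g, ⟨rfl, rfl⟩ | ⟨rfl, rfl⟩⟩ (hy | ⟨h, h1, h2⟩)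
    · exact absurd (by rw [mul_smul, hy, inv_smul_smul]) (hne (k⁻¹ * g))
    · have := hfix (g⁻¹ * h) (by rw [mul_smul, h1, inv_smul_smul])
      rw [mul_smul, inv_smul_eq_iff, h2] at this
      exact Or.inl this.symm
    · exact Or.inr ⟨g, rfl, hy⟩
    · exact absurd (by rw [mul_smul, h1, inv_smul_smul]) (hne (g⁻¹ * h))
  have hstar_finite (k : G) : (star k).Finite := by
    refine ((finite_neighborSet G Γ (k • a)).subset ?_).insert _
    rintro _ ⟨g, rfl, hg⟩
    exact hg ▸ (InvariantGraph.smul_adj g hva).symm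
  by_cases hx : ∃ k, x ∈ star k
  · obtain ⟨k, hk⟩ := hx
    exact (hstar_finite k).subset fun w hw => mem_of_reachable (hstar k) hw hk
  · refine (Set.finite_singleton x).subset fun w hw =>
      mem_of_reachable (S := {x}) ?_ hw (Set.mem_singleton x)
    rintro _ z ⟨g, ⟨h1, -⟩ | ⟨-, h2⟩⟩ rfl
    · exact absurd ⟨g, Or.inr ⟨g, h1, rfl⟩⟩ hx
    · exact absurd ⟨g, Or.inl h2.symm⟩ hx

end EdgeOrbit

theorem exists_ncard_orbitSet_lt [N.FiniteIndex] [ProperTreeAction G Γ] {v a : V}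
    (hva : Γ.Adj v a) (hne : ∀ g : G, g • v ≠ a) (hfix : ∀ g : G, g • v = v → g • a = a) {n : G}
    (h : HasQuotientTrail N Γ n) :
    ∃ (W : Type u) (_ : MulAction G W) (Δ : SimpleGraph W), ProperTreeAction G Δ ∧
      HasQuotientTrail N Δ n ∧
      (orbitSet N (Set.univ : Set W)).ncard < (orbitSet N (Set.univ : Set V)).ncard := by
  let r := componentHom G (edgeOrbitGraph G hva.ne)
  have hle := edgeOrbitGraph_le (G := G) hva
  have hr : Function.Surjective r := Quot.mk_surjective
  refine ⟨_, inferInstance, Γ.map r,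
    ProperTreeAction.map_componentHom hle (finite_reachable_edgeOrbitGraph hva hne hfix),
    h.map (ProperTreeAction.isTree G) fun _ _ => componentHom_fiber_reachable hle,
    ncard_orbitSet_lt r (finite_orbitSet_univ N Γ) ?_ (Set.mem_univ v) (Set.mem_univ a)
      (fun n _ => hne n) (ConnectedComponent.sound (Adj.reachable ⟨1, Or.inl ?_⟩))⟩
  · rw [Set.image_univ, hr.range_eq]
  · exact ⟨one_smul _ _, one_smul _ _⟩

theorem exists_isReduced [N.FiniteIndex] [ProperTreeAction G Γ] {n : G}
    (h : HasQuotientTrail N Γ n) :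
    ∃ (W : Type u) (_ : MulAction G W) (Δ : SimpleGraph W), ProperTreeAction G Δ ∧
      HasQuotientTrail N Δ n ∧ IsReduced G Δ := by
  have hex : ∃ m : ℕ, ∃ (W : Type u) (_ : MulAction G W) (Δ : SimpleGraph W),
      ProperTreeAction G Δ ∧ HasQuotientTrail N Δ n ∧
        (orbitSet N (Set.univ : Set W)).ncard = m := ⟨_, V, _, Γ, inferInstance, h, rfl⟩
  classical
  obtain ⟨W, _, Δ, hΔ, htrail, hm⟩ := Nat.find_spec hex
  refine ⟨W, _, Δ, hΔ, htrail, fun v a hva hne => ?_⟩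
  by_contra! hfix
  obtain ⟨W', _, Δ', hΔ', htrail', hlt⟩ := exists_ncard_orbitSet_lt hva hne hfix htrail
  exact Nat.find_min hex (hm ▸ hlt) ⟨W', _, Δ', hΔ', htrail', rfl⟩

end ReducedTrees

section Potentials

variable {V M : Type*} [Group M] {Γ : SimpleGraph V}

/-- The function `p` on the vertices has coboundary `c`. -/
def IsPotential (Γ : SimpleGraph V) (c : V → V → M) (p : V → M) : Prop :=
  ∀ v w, Γ.Adj v w → p w = p v * c v w

theorem exists_isPotential (hT : Γ.IsTree) (v₀ : V) (c : V → V → M)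
    (hc : ∀ v w, Γ.Adj v w → c v w * c w v = 1) : ∃ p, p v₀ = 1 ∧ IsPotential Γ c p := by
  let potentialAt (n : ℕ) : V → M := Nat.rec (fun _ => 1)
    (fun _ f v => f (step Γ v v₀) * c (step Γ v v₀) v) n
  let p (v : V) : M := potentialAt (Γ.dist v v₀) v
  have hp : ∀ v w, Γ.Adj v w → Γ.dist w v₀ = Γ.dist v v₀ + 1 → p w = p v * c v w := by
    intro v w hvw hd
    have hstep := eq_step hT hvw.symm hd
    simp only [p, hd]
    change potentialAt _ (step Γ w v₀) * c (step Γ w v₀) w = _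
    rw [← hstep]
  refine ⟨p, ?_, fun v w hvw => ?_⟩
  · simp only [p, dist_self]
    rfl
  · obtain hd | hd := dist_eq_add_one_or_of_adj hT v₀ hvw
    · exact hp v w hvw hd
    · rw [hp w v hvw.symm hd, mul_assoc, hc w v hvw.symm, mul_one]

variable {G : Type*} [Group G] [MulAction G V] [InvariantGraph G Γ]

theorem IsPotential.apply_smul (hconn : Γ.Connected) {c : V → V → M} {p : V → M}
    (hp : IsPotential Γ c p) {g : G} (hg : ∀ v w, c (g • v) (g • w) = c v w) {v₀ : V}
    (hv₀ : p v₀ = 1) (v : V) : p (g • v) = p (g • v₀) * p v := by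
  refine mem_of_reachable (S := {v | p (g • v) = p (g • v₀) * p v}) ?_ (hconn v₀ v) ?_
  · intro a b hab (ha : p (g • a) = _)
    change p (g • b) = p (g • v₀) * p b
    rw [hp _ _ (InvariantGraph.smul_adj g hab), hp _ _ hab, ha, hg, mul_assoc]
  · exact (mul_one (p (g • v₀))).symm.trans (congrArg _ hv₀.symm)

theorem eq_one_of_forall_generator {N : Subgroup G} {S : Set G} (hS : Subgroup.closure S = N)
    {p : V → M} (hinv : ∀ s ∈ S, ∀ v, p (s • v) = p v) (h : ∀ v, ∃ n ∈ N, p (n • v) = 1) (v : V) :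
    p v = 1 := by
  have hN : ∀ n ∈ N, ∀ w, p (n • w) = p w := by
    intro n hn
    rw [← hS] at hn
    induction hn using Subgroup.closure_induction with
    | mem s hs => exact hinv s hs
    | one => simp
    | mul x y _ _ hx hy => exact fun w => by rw [mul_smul, hx, hy]
    | inv x _ hx => exact fun w => by rw [← hx, smul_inv_smul]
  obtain ⟨n, hn, hnv⟩ := h v
  rw [← hN n hn, hnv]

end Potentials

section EulerCharacteristic

open Pointwise

variable {G V : Type*} [Group G] [MulAction G V] {Γ : SimpleGraph V} {N : Subgroup G}

/-- The finite set `V₀` contains exactly one vertex of every `N`-orbit. -/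
structure IsTransversal (N : Subgroup G) (V₀ : Finset V) : Prop where
  exists_smul_mem : ∀ v, ∃ n ∈ N, n • v ∈ V₀
  smul_eq : ∀ v ∈ V₀, ∀ n ∈ N, n • v ∈ V₀ → n • v = v

theorem exists_isTransversal (N : Subgroup G) [N.FiniteIndex] (Γ : SimpleGraph V)
    [ProperTreeAction G Γ] : ∃ V₀ : Finset V, IsTransversal N V₀ := by
  classical
  obtain ⟨D, hD, hDG⟩ := exists_finite_vertices G Γ
  obtain ⟨D', hD', hDN⟩ := exists_finite_forall_subgroup_smul_mem N hD fun x (_ : x ∈ Set.univ) =>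
    hDG x
  let rep (v : V) : V := (Quotient.mk (MulAction.orbitRel N V) v).out
  have hrep_smul {n : G} (hn : n ∈ N) (v : V) : rep (n • v) = rep v :=
    congrArg Quotient.out (Quotient.sound (s := MulAction.orbitRel N V) ⟨⟨n, hn⟩, rfl⟩)
  have hrep (v : V) : ∃ n ∈ N, n • v = rep v := by
    obtain ⟨n, hn⟩ := Quotient.exact (s := MulAction.orbitRel N V)
      (Quotient.out_eq (Quotient.mk _ v))
    exact ⟨n, n.2, hn⟩
  have hrep_rep (v : V) : rep (rep v) = rep v := by
    obtain ⟨n, hn, hnv⟩ := hrep v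
    rw [← hnv, hrep_smul hn, hnv]
  refine ⟨hD'.toFinset.image rep, fun v => ?_, ?_⟩
  · obtain ⟨n, hn, hnv⟩ := hrep v
    obtain ⟨m, hm, hmv⟩ := hDN v (Set.mem_univ v)
    refine ⟨n, hn, Finset.mem_image.2 ⟨m • v, hD'.mem_toFinset.2 hmv, ?_⟩⟩
    rw [hrep_smul hm, hnv]
  · intro v hv n hn hnv
    obtain ⟨d, -, rfl⟩ := Finset.mem_image.1 hv
    obtain ⟨d', -, hd'⟩ := Finset.mem_image.1 hnv
    rw [← hd', ← hrep_rep d', hd', hrep_smul hn, hrep_rep]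

theorem IsTransversal.card_le_two_mul_index [N.FiniteIndex] {V₀ : Finset V}
    (hV₀ : IsTransversal N V₀) {v₁ v₂ : V}
    (h : MulAction.orbit G v₁ ∪ MulAction.orbit G v₂ = Set.univ) : V₀.card ≤ 2 * N.index := by
  classical
  have := Fintype.ofFinite (G ⧸ N)
  have hG : ∀ w, ∃ (b : Bool) (g : G), g • cond b v₁ v₂ = w := fun w =>
    (h.ge (Set.mem_univ w)).elim (fun ⟨g, hg⟩ => ⟨true, g, hg⟩) fun ⟨g, hg⟩ => ⟨false, g, hg⟩
  choose b g hg using hG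
  have hcard := Finset.card_le_card_of_injOn (s := V₀) (t := Finset.univ)
    (fun w => (b w, (((g w)⁻¹ : G) : G ⧸ N))) (fun _ _ => Finset.mem_coe.2 (Finset.mem_univ _)) ?_
  · rwa [Finset.card_univ, Fintype.card_prod, Fintype.card_bool, ← Nat.card_eq_fintype_card]
      at hcard
  · intro v hv w hw hvw
    obtain ⟨hb, hgN⟩ := Prod.mk.injEq _ _ _ _ ▸ hvw
    rw [eq_comm, QuotientGroup.eq, inv_inv] at hgN
    have hmove : (g w * (g v)⁻¹) • v = w := by
      rw [mul_smul, inv_smul_eq_iff.2 (hg v).symm, hb, hg w]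
    exact (hV₀.smul_eq v hv _ hgN (hmove.symm ▸ hw)).symm.trans hmove

/-- The `N`-orbit of the unoriented edge with endpoints `x` and `y`. -/
def edgeOrbit (N : Subgroup G) (x y : V) : Set (Set V) := MulAction.orbit N ({x, y} : Set V)

theorem edgeOrbit_comm (x y : V) : edgeOrbit N x y = edgeOrbit N y x := by
  rw [edgeOrbit, Set.pair_comm, edgeOrbit]

theorem edgeOrbit_smul {n : G} (hn : n ∈ N) (x y : V) :
    edgeOrbit N (n • x) (n • y) = edgeOrbit N x y := by
  have hpair : ({n • x, n • y} : Set V) = (⟨n, hn⟩ : N) • ({x, y} : Set V) :=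
    (Set.image_pair _ x y).symm
  rw [edgeOrbit, hpair, MulAction.orbit_smul, edgeOrbit]

theorem exists_smul_eq_of_edgeOrbit_eq {x y x' y' : V} (h : edgeOrbit N x y = edgeOrbit N x' y') :
    ∃ n ∈ N, x = n • x' ∧ y = n • y' ∨ x = n • y' ∧ y = n • x' := by
  obtain ⟨n, hn⟩ := MulAction.orbit_eq_iff.1 h
  refine ⟨n, n.2, Set.pair_eq_pair_iff.1 ?_⟩
  exact hn.symm.trans (Set.image_pair _ x' y')

variable [Γ.LocallyFinite] {V₀ : Finset V}

variable (Γ V₀) in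
/-- The oriented edges with origin in `V₀`. -/
def dartsFrom : Finset (Σ _ : V, V) := V₀.sigma fun v => Γ.neighborFinset v

theorem mem_dartsFrom {d : Σ _ : V, V} : d ∈ dartsFrom Γ V₀ ↔ d.1 ∈ V₀ ∧ Γ.Adj d.1 d.2 := by
  rw [dartsFrom, Finset.mem_sigma, mem_neighborFinset]

theorem card_dartsFrom : (dartsFrom Γ V₀).card = ∑ v ∈ V₀, Γ.degree v :=
  Finset.card_sigma _ _

variable (Γ N V₀) in
open Classical in
/-- The `N`-orbits of the edges meeting `V₀`. -/
noncomputable def edgeOrbitsFrom : Finset (Set (Set V)) :=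
  (dartsFrom Γ V₀).image fun d => edgeOrbit N d.1 d.2

theorem card_dartsFrom_le (hfree : ∀ n ∈ N, ∀ v : V, n • v = v → n = 1)
    (hV₀ : IsTransversal N V₀) :
    (dartsFrom Γ V₀).card ≤ 2 * (edgeOrbitsFrom Γ N V₀).card := by
  classical
  refine Finset.card_le_mul_card_image _ _ fun b hb => ?_
  obtain ⟨d, hd, rfl⟩ := Finset.mem_image.1 hb
  obtain ⟨k, hk, hkV₀⟩ := hV₀.exists_smul_mem d.2
  refine (Finset.card_le_card (t := {d, ⟨k • d.2, k • d.1⟩}) ?_).trans Finset.card_le_two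
  rintro ⟨x, y⟩ hxy
  obtain ⟨hxy, horbit⟩ := Finset.mem_filter.1 hxy
  have hx := (mem_dartsFrom.1 hxy).1
  rw [Finset.mem_insert, Finset.mem_singleton]
  obtain ⟨n, hn, ⟨rfl, rfl⟩ | ⟨rfl, rfl⟩⟩ := exists_smul_eq_of_edgeOrbit_eq horbit
  · rw [hfree n hn d.1 (hV₀.smul_eq _ (mem_dartsFrom.1 hd).1 n hn hx)]
    exact Or.inl (by simp only [one_smul])
  · have hmove : (n * k⁻¹) • k • d.2 = n • d.2 := by rw [mul_smul, inv_smul_smul]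
    have hnk := N.mul_mem hn (N.inv_mem hk)
    rw [mul_inv_eq_one.1 (hfree _ hnk _ (hV₀.smul_eq _ hkV₀ _ hnk (hmove.symm ▸ hx)))]
    exact Or.inr rfl

theorem exists_isPotential_ite (hT : Γ.IsTree) (v₀ : V) (χ : edgeOrbitsFrom Γ N V₀ → ℤˣ) :
    ∃ p, p v₀ = 1 ∧
      IsPotential Γ (fun v w => Function.extend Subtype.val χ 1 (edgeOrbit N v w)) p :=
  exists_isPotential hT v₀ _ fun v w _ => by rw [edgeOrbit_comm w v, Int.units_mul_self]

/-- An assignment of signs to the edge orbits is determined by the values of its potential on `V₀`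
and at the translates of the base point by generators of `N`. -/
theorem card_edgeOrbitsFrom_le [InvariantGraph G Γ] (hT : Γ.IsTree) (hV₀ : IsTransversal N V₀)
    {S : Finset G} (hS : Subgroup.closure (S : Set G) = N) :
    (edgeOrbitsFrom Γ N V₀).card ≤ S.card + V₀.card := by
  classical
  obtain ⟨v₀⟩ := hT.1.nonempty
  choose p hp_base hp using exists_isPotential_ite (N := N) (V₀ := V₀) hT v₀
  let values (χ : edgeOrbitsFrom Γ N V₀ → ℤˣ) : (S → ℤˣ) × (V₀ → ℤˣ) :=
    (fun s => p χ (s.1 • v₀), fun v => p χ v)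
  have hvalues : Function.Injective values := by
    intro χ χ' h
    have hS_eq (s) (hs : s ∈ S) : p χ (s • v₀) = p χ' (s • v₀) :=
      congrFun (congrArg Prod.fst h) ⟨s, hs⟩
    have hV_eq (v) (hv : v ∈ V₀) : p χ v = p χ' v := congrFun (congrArg Prod.snd h) ⟨v, hv⟩
    have hsmul (χ) {n} (hn : n ∈ N) := (hp χ).apply_smul hT.1 (g := n)
      (fun v w => by rw [edgeOrbit_smul hn]) (hp_base χ)
    have hquot : ∀ v, p χ v / p χ' v = 1 := by
      refine eq_one_of_forall_generator hS (fun s hs v => ?_) fun v => ?_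
      · have hsN : s ∈ N := hS ▸ Subgroup.subset_closure hs
        rw [hsmul χ hsN, hsmul χ' hsN, hS_eq s hs, mul_div_mul_left_eq_div]
      · obtain ⟨n, hn, hnv⟩ := hV₀.exists_smul_mem v
        exact ⟨n, hn, div_eq_one.2 (hV_eq _ hnv)⟩
    funext ⟨e, he⟩
    obtain ⟨d, hd, rfl⟩ := Finset.mem_image.1 he
    have hadj := (mem_dartsFrom.1 hd).2
    have hc := hp χ _ _ hadj
    rw [div_eq_one.1 (hquot d.1), div_eq_one.1 (hquot d.2), hp χ' _ _ hadj, mul_right_inj] at hc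
    simpa only [Subtype.val_injective.extend_apply _ _ (⟨_, he⟩ : edgeOrbitsFrom Γ N V₀)]
      using hc.symm
  have hcard := Fintype.card_le_of_injective values hvalues
  simpa only [Fintype.card_prod, Fintype.card_fun, Fintype.card_units_int, Fintype.card_coe,
    ← pow_add, Nat.pow_le_pow_iff_right Nat.one_lt_two] using hcard

theorem sum_degree_le [InvariantGraph G Γ] (hT : Γ.IsTree)
    (hfree : ∀ n ∈ N, ∀ v : V, n • v = v → n = 1) (hV₀ : IsTransversal N V₀) {S : Finset G}
    (hS : Subgroup.closure (S : Set G) = N) :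
    ∑ v ∈ V₀, Γ.degree v ≤ 2 * (S.card + V₀.card) := by
  rw [← card_dartsFrom]
  exact (card_dartsFrom_le hfree hV₀).trans
    (Nat.mul_le_mul_left 2 (card_edgeOrbitsFrom_le hT hV₀ hS))

end EulerCharacteristic

section VertexBound

variable {G V : Type*} [Group G] [MulAction G V] {Γ : SimpleGraph V} {N : Subgroup G}
  [InvariantGraph G Γ]

theorem orbit_union_orbit_eq_univ (hconn : Γ.Connected) {v a : V}
    (hv : ∀ b, Γ.Adj v b → b ∈ MulAction.orbit G v ∪ MulAction.orbit G a)
    (ha : ∀ b, Γ.Adj a b → b ∈ MulAction.orbit G v ∪ MulAction.orbit G a) :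
    MulAction.orbit G v ∪ MulAction.orbit G a = Set.univ := by
  have hsmul {g : G} {x : V} (hx : g⁻¹ • x ∈ MulAction.orbit G v ∪ MulAction.orbit G a) :
      x ∈ MulAction.orbit G v ∪ MulAction.orbit G a := by
    rw [← smul_inv_smul g x]
    exact hx.imp (MulAction.mem_orbit_of_mem_orbit g) (MulAction.mem_orbit_of_mem_orbit g)
  refine Set.eq_univ_of_forall fun w => mem_of_reachable ?_ (hconn v w)
    (Or.inl (MulAction.mem_orbit_self v))
  rintro _ y hxy (⟨g, rfl⟩ | ⟨g, rfl⟩)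
  · exact hsmul (hv (g⁻¹ • y) (by simpa using InvariantGraph.smul_adj g⁻¹ hxy))
  · exact hsmul (ha (g⁻¹ • y) (by simpa using InvariantGraph.smul_adj g⁻¹ hxy))

theorem degree_smul [Γ.LocallyFinite] (g : G) (v : V) : Γ.degree (g • v) = Γ.degree v :=
  (smulIso Γ g).degree_eq v

theorem IsReduced.exists_two_adj [Γ.LocallyFinite] (hred : IsReduced G Γ) {v a : V}
    (hva : Γ.Adj v a) (hne : ∀ g : G, g • v ≠ a) :
    ∃ s : Finset V, s ⊆ Γ.neighborFinset v ∧ s.card = 2 ∧ (s : Set V) ⊆ MulAction.orbit G a := by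
  classical
  obtain ⟨g, hgv, hga⟩ := hred v a hva hne
  refine ⟨{a, g • a}, ?_, Finset.card_pair hga.symm, ?_⟩
  · have hadj := InvariantGraph.smul_adj g hva
    simp only [Finset.insert_subset_iff, Finset.singleton_subset_iff, mem_neighborFinset]
    exact ⟨hva, hgv ▸ hadj⟩
  · rw [Finset.coe_pair, Set.pair_subset_iff]
    exact ⟨MulAction.mem_orbit_self a, MulAction.mem_orbit a g⟩

section ManyOrbits

variable (hred : IsReduced G Γ) (hconn : Γ.Connected)
  (horbits : ∀ v a : V, MulAction.orbit G v ∪ MulAction.orbit G a ≠ Set.univ)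
include hconn horbits

theorem exists_adj_notMem_orbit (v : V) : ∃ a, Γ.Adj v a ∧ ∀ g : G, g • v ≠ a := by
  by_contra! h
  have hv : ∀ b, Γ.Adj v b → b ∈ MulAction.orbit G v ∪ MulAction.orbit G v :=
    fun b hb => Or.inl (h b hb)
  exact horbits v v (orbit_union_orbit_eq_univ hconn hv hv)

variable [Γ.LocallyFinite]
include hred

theorem two_le_degree (v : V) : 2 ≤ Γ.degree v := by
  obtain ⟨a, hva, hne⟩ := exists_adj_notMem_orbit (G := G) hconn horbits v
  obtain ⟨s, hs, hcard, -⟩ := hred.exists_two_adj hva hne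
  exact hcard ▸ Finset.card_le_card hs

theorem exists_adj_degree_ne_two {v : V} (hv : Γ.degree v = 2) :
    ∃ a, Γ.Adj v a ∧ Γ.degree a ≠ 2 := by
  obtain ⟨a, hva, hne⟩ := exists_adj_notMem_orbit (G := G) hconn horbits v
  have hsub {x y : V} (hxy : Γ.Adj x y) (hne : ∀ g : G, g • x ≠ y) (hx : Γ.degree x = 2) :
      ∀ b, Γ.Adj x b → b ∈ MulAction.orbit G y := fun b hb => by
    obtain ⟨s, hs, hcard, hsy⟩ := hred.exists_two_adj hxy hne
    have hs_eq : s = Γ.neighborFinset x := Finset.eq_of_subset_of_card_le hs (hcard ▸ hx.le)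
    exact hsy (Finset.mem_coe.2 (hs_eq ▸ (mem_neighborFinset _ _ _).2 hb))
  refine ⟨a, hva, fun ha => horbits v a (orbit_union_orbit_eq_univ hconn ?_ ?_)⟩
  · exact fun b hb => Or.inr (hsub hva hne hv b hb)
  · refine fun b hb => Or.inl (hsub hva.symm (fun g hg => hne g⁻¹ ?_) ha b hb)
    rw [← hg, inv_smul_smul]

theorem card_filter_degree_eq_two_le {V₀ : Finset V} (hV₀ : IsTransversal N V₀) :
    (V₀.filter (Γ.degree · = 2)).card ≤ ∑ v ∈ V₀ with Γ.degree v ≠ 2, Γ.degree v := by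
  classical
  rw [← card_dartsFrom]
  have hdart (v : V) : ∃ d : Σ _ : V, V, Γ.degree v = 2 →
      d ∈ dartsFrom Γ (V₀.filter (Γ.degree · ≠ 2)) ∧ ∃ n ∈ N, d.2 = n • v := by
    by_cases hv : Γ.degree v = 2
    · obtain ⟨a, hva, ha⟩ := exists_adj_degree_ne_two hred hconn horbits hv
      obtain ⟨n, hn, hna⟩ := hV₀.exists_smul_mem a
      refine ⟨⟨n • a, n • v⟩, fun _ => ⟨mem_dartsFrom.2 ⟨?_, ?_⟩, n, hn, rfl⟩⟩
      · exact Finset.mem_filter.2 ⟨hna, (degree_smul n a).trans_ne ha⟩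
      · exact InvariantGraph.smul_adj n hva.symm
    · exact ⟨⟨v, v⟩, fun h => absurd h hv⟩
  choose d hd using hdart
  refine Finset.card_le_card_of_injOn d (fun v hv => (hd v (Finset.mem_filter.1 hv).2).1) ?_
  intro v hv w hw hvw
  obtain ⟨hvV₀, hv⟩ := Finset.mem_filter.1 hv
  obtain ⟨hwV₀, hw⟩ := Finset.mem_filter.1 hw
  obtain ⟨-, n, hn, hnv⟩ := hd v hv
  obtain ⟨-, m, hm, hmw⟩ := hd w hw
  have hmove : (m⁻¹ * n) • v = w := by rw [mul_smul, ← hnv, hvw, hmw, inv_smul_smul]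
  rw [← hmove]
  exact (hV₀.smul_eq v hvV₀ _ (N.mul_mem (N.inv_mem hm) hn) (hmove.symm ▸ hwV₀)).symm

theorem nine_mul_card_le {V₀ : Finset V} (hV₀ : IsTransversal N V₀) :
    9 * V₀.card ≤ 4 * ∑ v ∈ V₀, Γ.degree v := by
  have hcard : (V₀.filter (Γ.degree · = 2)).card + (V₀.filter (Γ.degree · ≠ 2)).card = V₀.card :=
    Finset.card_filter_add_card_filter_not _
  have hsum : ∑ v ∈ V₀ with Γ.degree v = 2, Γ.degree v + ∑ v ∈ V₀ with Γ.degree v ≠ 2, Γ.degree v =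
      ∑ v ∈ V₀, Γ.degree v := Finset.sum_filter_add_sum_filter_not _ _ _
  have htwo : ∑ v ∈ V₀ with Γ.degree v = 2, Γ.degree v =
      (V₀.filter (Γ.degree · = 2)).card * 2 :=
    Finset.sum_const_nat fun v hv => (Finset.mem_filter.1 hv).2
  have hthree : (V₀.filter (Γ.degree · ≠ 2)).card * 3 ≤
      ∑ v ∈ V₀ with Γ.degree v ≠ 2, Γ.degree v := by
    rw [← smul_eq_mul]
    refine Finset.card_nsmul_le_sum _ _ _ fun v hv => ?_
    exact (two_le_degree hred hconn horbits v).lt_of_ne' (Finset.mem_filter.1 hv).2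
  have := card_filter_degree_eq_two_le hred hconn horbits hV₀
  omega

end ManyOrbits

theorem IsReduced.card_le [N.FiniteIndex] [Γ.LocallyFinite] (hred : IsReduced G Γ) (hT : Γ.IsTree)
    (hfree : ∀ n ∈ N, ∀ v : V, n • v = v → n = 1) {V₀ : Finset V} (hV₀ : IsTransversal N V₀)
    {S : Finset G} (hS : Subgroup.closure (S : Set G) = N) :
    V₀.card ≤ 8 * S.card + 2 * N.index := by
  by_cases horbits : ∃ v a : V, MulAction.orbit G v ∪ MulAction.orbit G a = Set.univ
  · obtain ⟨v, a, h⟩ := horbits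
    exact (hV₀.card_le_two_mul_index h).trans (Nat.le_add_left _ _)
  · push Not at horbits
    have := nine_mul_card_le hred hT.1 horbits hV₀
    have := sum_degree_le hT hfree hV₀ hS
    omega

end VertexBound

section Displacement

variable {G V : Type*} [Group G] [MulAction G V] {Γ : SimpleGraph V} {N : Subgroup G}

theorem dist_le_card_filter_ne [DecidableEq V] (hconn : Γ.Connected) {x : ℕ → V} {k : ℕ}
    (hx : ∀ i < k, x i = x (i + 1) ∨ Γ.Adj (x i) (x (i + 1))) :
    Γ.dist (x 0) (x k) ≤ ((Finset.range k).filter fun i => x i ≠ x (i + 1)).card := by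
  induction k with
  | zero => simp
  | succ k ih =>
    have ih := ih fun i hi => hx i (hi.trans k.lt_succ_self)
    rw [Finset.range_add_one, Finset.filter_insert]
    obtain heq | hadj := hx k k.lt_succ_self
    · rwa [if_neg (not_not.2 heq), ← heq]
    · rw [if_pos hadj.ne, Finset.card_insert_of_notMem (by simp)]
      have := hconn.dist_triangle (u := x 0) (v := x k) (w := x (k + 1))
      rw [dist_eq_one_iff_adj.2 hadj] at this
      omega

theorem HasQuotientTrail.exists_dist_le [InvariantGraph G Γ] [Γ.LocallyFinite]
    (hconn : Γ.Connected) {V₀ : Finset V} (hV₀ : IsTransversal N V₀) {n : G}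
    (h : HasQuotientTrail N Γ n) : ∃ x, Γ.dist x (n • x) ≤ ∑ v ∈ V₀, Γ.degree v := by
  classical
  obtain ⟨k, x, hk, hx, htrail⟩ := h
  choose a haN ha using hV₀.exists_smul_mem
  let dart (i : ℕ) : Σ _ : V, V := ⟨a (x i) • x i, a (x i) • x (i + 1)⟩
  have hdart {i j : ℕ} (hij : i < j) (hj : j < k) (hne : x i ≠ x (i + 1)) : dart i ≠ dart j := by
    intro h
    simp only [dart, Sigma.mk.injEq, heq_eq_eq] at h
    refine htrail i j hij hj hne ((a (x j))⁻¹ * a (x i))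
      (N.mul_mem (N.inv_mem (haN _)) (haN _)) ⟨?_, ?_⟩
    · rw [mul_smul, h.1, inv_smul_smul]
    · rw [mul_smul, h.2, inv_smul_smul]
  refine ⟨x 0, ?_⟩
  rw [← hk, ← card_dartsFrom]
  refine (dist_le_card_filter_ne hconn hx).trans (Finset.card_le_card_of_injOn dart ?_ ?_)
  · intro i hi
    obtain ⟨hik, hne⟩ := Finset.mem_filter.1 hi
    exact mem_dartsFrom.2 ⟨ha _, InvariantGraph.smul_adj _
      ((hx i (Finset.mem_range.1 hik)).resolve_left hne)⟩
  · intro i hi j hj hij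
    obtain ⟨hik, hine⟩ := Finset.mem_filter.1 hi
    obtain ⟨hjk, hjne⟩ := Finset.mem_filter.1 hj
    by_contra hne
    obtain hlt | hlt := lt_or_gt_of_ne hne
    · exact hdart hlt (Finset.mem_range.1 hjk) hine hij
    · exact hdart hlt (Finset.mem_range.1 hik) hjne hij.symm

end Displacement

section TablePresentations

variable {G ι : Type*} [Group G] {e e' : ι → G}

/-- The multiplication table of a tuple of group elements. -/
def mulTable (e : ι → G) : Set (ι × ι × ι) := {p | e p.1 * e p.2.1 = e p.2.2}

/-- The tuple `e` generates `G`, and the relations of its multiplication table present `G`. The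
universal property is only required for homomorphisms to `G` itself, which is enough to compare two
such tuples in the same group. -/
structure IsTablePresentation (e : ι → G) : Prop where
  closure_range : Subgroup.closure (Set.range e) = ⊤
  exists_monoidHom (s : ι → G) (hs : mulTable e ⊆ mulTable s) : ∃ ψ : G →* G, ∀ i, ψ (e i) = s i

theorem IsTablePresentation.exists_mulEquiv (he : IsTablePresentation e)
    (he' : IsTablePresentation e') (h : mulTable e = mulTable e') :
    ∃ σ : G ≃* G, ∀ i, σ (e i) = e' i := by
  obtain ⟨ψ, hψ⟩ := he.exists_monoidHom e' h.subset
  obtain ⟨θ, hθ⟩ := he'.exists_monoidHom e h.superset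
  refine ⟨ψ.toMulEquiv θ (MonoidHom.eq_of_eqOn_dense he.closure_range ?_)
    (MonoidHom.eq_of_eqOn_dense he'.closure_range ?_), hψ⟩ <;>
  · rintro _ ⟨i, rfl⟩
    simp only [MonoidHom.comp_apply, MonoidHom.id_apply, hψ, hθ]

-- There are finitely many possible multiplication tables: take one presentation for each.
theorem exists_finset_forall_isTablePresentation (G ι : Type*) [Group G] [Finite ι] :
    ∃ F : Finset G, 1 ∉ F ∧ ∀ e : ι → G, IsTablePresentation e → ∀ i, e i ≠ 1 →
      ∃ σ : G ≃* G, ∃ f ∈ F, σ f = e i := by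
  classical
  choose r hr hr' using fun t : mulTable '' {e : ι → G | IsTablePresentation e} => t.2
  have hfin : (⋃ t, Set.range (r t)).Finite := Set.finite_iUnion fun t => Set.finite_range (r t)
  refine ⟨hfin.toFinset.erase 1, Finset.notMem_erase _ _, fun e he i hi => ?_⟩
  let t : mulTable '' {e : ι → G | IsTablePresentation e} := ⟨_, e, he, rfl⟩
  obtain ⟨σ, hσ⟩ := (hr t).exists_mulEquiv he (hr' t)
  refine ⟨σ, r t i, Finset.mem_erase.2 ⟨fun h => hi ?_, ?_⟩, hσ i⟩
  · rw [← hσ i, h, map_one]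
  · exact hfin.mem_toFinset.2 (Set.mem_iUnion.2 ⟨t, i, rfl⟩)

end TablePresentations

section PartialHomomorphisms

variable {G H : Type*} [Group G] [Group H] {B : Set G} {s : G → H}

/-- The map `s` is multiplicative on the products of elements of `B` that stay in `B`. -/
def IsMulOn (B : Set G) (s : G → H) : Prop :=
  ∀ a ∈ B, ∀ b ∈ B, a * b ∈ B → s (a * b) = s a * s b

theorem IsMulOn.map_one (hs : IsMulOn B s) (h : 1 ∈ B) : s 1 = 1 := by
  have := hs 1 h 1 h (by rwa [mul_one])
  rw [mul_one] at this
  exact mul_eq_left.1 this.symm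

theorem exists_monoidHom_of_forall_map_mul (hB : Subgroup.closure B = ⊤) (c : G → H)
    (hc : ∀ x, ∀ a ∈ B, c (x * a) = c x * s a) : ∃ ψ : G →* H, ∀ a ∈ B, ψ a = s a := by
  have hc' : ∀ g x : G, c (x * g) = c x * ((c 1)⁻¹ * c g) := fun g => by
    induction (hB ▸ Subgroup.mem_top g : g ∈ Subgroup.closure B) using
      Subgroup.closure_induction with
    | mem a ha =>
      intro x
      have := hc 1 a ha
      rw [one_mul] at this
      rw [hc x a ha, this, inv_mul_cancel_left]
    | one => simp
    | mul a d _ _ iha ihd =>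
      intro x
      rw [← mul_assoc, ihd, iha, ihd a]
      group
    | inv a _ iha =>
      have hinv : ∀ x, c (x * a⁻¹) = c x * ((c 1)⁻¹ * c a)⁻¹ := fun x => by
        rw [eq_mul_inv_iff_mul_eq, ← iha, inv_mul_cancel_right]
      intro x
      have := hinv 1
      rw [one_mul] at this
      rw [hinv, this, inv_mul_cancel_left]
  refine ⟨MonoidHom.mk' (fun g => (c 1)⁻¹ * c g) fun a d => ?_, fun a ha => ?_⟩
  · rw [hc' d a, mul_assoc]
  · have := hc 1 a ha
    rw [one_mul] at this
    rw [MonoidHom.mk'_apply, this, inv_mul_cancel_left]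

theorem isTablePresentation_of_forall_isMulOn {ι : Type*} {e : ι → G}
    (hclosure : Subgroup.closure (Set.range e) = ⊤) (hone : 1 ∈ Set.range e)
    (hext : ∀ s : G → G, IsMulOn (Set.range e) s → ∃ ψ : G →* G, ∀ a ∈ Set.range e, ψ a = s a) :
    IsTablePresentation e := by
  refine ⟨hclosure, fun s hs => ?_⟩
  obtain ⟨u, hu⟩ := hone
  have hfactors : s.FactorsThrough e := fun i j hij => by
    have hu_mul (k : ι) (hk : e k = e j) : s u * s k = s j :=
      @hs (u, k, j) (by simp only [mulTable, Set.mem_ofPred_eq, hu, one_mul, hk])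
    exact mul_left_cancel ((hu_mul i hij).trans (hu_mul j rfl).symm)
  obtain ⟨ψ, hψ⟩ := hext (Function.extend e s 1) <| by
    rintro _ ⟨i, rfl⟩ _ ⟨j, rfl⟩ ⟨k, hk⟩
    rw [← hk, hfactors.extend_apply, hfactors.extend_apply, hfactors.extend_apply]
    exact (@hs (i, j, k) hk.symm).symm
  exact ⟨ψ, fun i => (hψ _ ⟨i, rfl⟩).trans (hfactors.extend_apply 1 i)⟩

end PartialHomomorphisms

section DisplacementBalls

variable {G H V : Type*} [Group G] [Group H] [MulAction G V] {Γ : SimpleGraph V} {v₀ : V} {R : ℕ}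

/-- The group elements moving the base point `v₀` by at most `r`. -/
def displacementBall (G : Type*) [Group G] [MulAction G V] (Γ : SimpleGraph V) (v₀ : V) (r : ℕ) :
    Set G :=
  {g | Γ.dist v₀ (g • v₀) ≤ r}

theorem one_mem_displacementBall (r : ℕ) : 1 ∈ displacementBall G Γ v₀ r := by
  simp [displacementBall]

theorem exists_dist_le_and_dist_le (hc : Γ.Connected) {x y : V} (h : Γ.dist x y ≤ 2 * R) :
    ∃ z, Γ.dist z x ≤ R ∧ Γ.dist z y ≤ R := by
  obtain ⟨p, hp⟩ := hc.exists_walk_length_eq_dist x y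
  refine ⟨p.getVert R, ?_, ?_⟩
  · rw [Γ.dist_comm]
    exact (dist_le (p.take R)).trans ((p.take_length R).trans_le (min_le_left _ _))
  · have := (dist_le (p.drop R)).trans_eq (p.drop_length R)
    omega

variable [InvariantGraph G Γ]

theorem inv_mul_mem_displacementBall (hc : Γ.Connected) {v : V} {x y : G}
    (hx : Γ.dist v (x • v₀) ≤ R) (hy : Γ.dist v (y • v₀) ≤ R) :
    x⁻¹ * y ∈ displacementBall G Γ v₀ (2 * R) := by
  have := hc.dist_triangle (u := x • v₀) (v := v) (w := y • v₀)
  have := Γ.dist_comm (u := v) (v := x • v₀)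
  change Γ.dist v₀ ((x⁻¹ * y) • v₀) ≤ 2 * R
  rw [← dist_smul_smul hc x, ← mul_smul, mul_inv_cancel_left]
  omega

theorem closure_displacementBall (hc : Γ.Connected)
    (hR : ∀ v, ∃ g : G, Γ.dist v (g • v₀) < R) :
    Subgroup.closure (displacementBall G Γ v₀ (2 * R)) = ⊤ := by
  have hnear : ∀ (k : ℕ) (v : V), Γ.dist v v₀ = k → ∀ g : G, Γ.dist v (g • v₀) ≤ R →
      g ∈ Subgroup.closure (displacementBall G Γ v₀ (2 * R)) := by
    intro k
    induction k with
    | zero =>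
      intro v hv g hg
      obtain rfl := hc.dist_eq_zero_iff.1 hv
      exact Subgroup.subset_closure (hg.trans (by omega))
    | succ k ih =>
      intro v hv g hg
      have hne : v ≠ v₀ := fun h => by simp [h] at hv
      have hadj := step_adj hc hne
      have hstep := dist_eq_dist_step_add_one hc hne
      obtain ⟨g', hg'⟩ := hR (step Γ v v₀)
      have hvg' := hc.dist_triangle (u := v) (v := step Γ v v₀) (w := g' • v₀)
      rw [dist_eq_one_iff_adj.2 hadj] at hvg'
      have := mul_mem (ih _ (by omega) g' hg'.le) <| Subgroup.subset_closure <|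
        inv_mul_mem_displacementBall hc (by omega : Γ.dist v (g' • v₀) ≤ R) hg
      rwa [mul_inv_cancel_left] at this
  exact (Subgroup.eq_top_iff' _).2 fun g => hnear _ (g • v₀) rfl g (by simp)

section Extension

variable {s : G → H} (hs : IsMulOn (displacementBall G Γ v₀ (2 * R)) s)

include hs

theorem IsMulOn.map_inv_mul_mul_map_inv_mul (hc : Γ.Connected) {v : V} {x y z : G}
    (hx : Γ.dist v (x • v₀) ≤ R) (hy : Γ.dist v (y • v₀) ≤ R) (hz : Γ.dist v (z • v₀) ≤ R) :
    s (x⁻¹ * y) * s (y⁻¹ * z) = s (x⁻¹ * z) := by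
  have hxyz : x⁻¹ * y * (y⁻¹ * z) = x⁻¹ * z := by group
  rw [← hs _ (inv_mul_mem_displacementBall hc hx hy) _ (inv_mul_mem_displacementBall hc hy hz),
    hxyz]
  exact hxyz ▸ inv_mul_mem_displacementBall hc hx hz

variable {b : V → G} (hb : ∀ v, Γ.dist v (b v • v₀) < R) {p : V → H}
  (hp : IsPotential Γ (fun v w => s ((b v)⁻¹ * b w)) p)

include hb hp

theorem IsMulOn.potential_mul_eq (hc : Γ.Connected) (x : G) {v : V} (hv : Γ.dist v (x • v₀) ≤ R) :
    p v * s ((b v)⁻¹ * x) = p (x • v₀) * s ((b (x • v₀))⁻¹ * x) := by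
  induction hk : Γ.dist v (x • v₀) generalizing v with
  | zero => rw [hc.dist_eq_zero_iff.1 hk]
  | succ k ih =>
    have hne : v ≠ x • v₀ := fun h => by simp [h] at hk
    have hadj := step_adj hc hne
    have hstep := dist_eq_dist_step_add_one hc hne
    have hbv := hc.dist_triangle (u := step Γ v (x • v₀)) (v := v) (w := b v • v₀)
    rw [dist_eq_one_iff_adj.2 hadj.symm] at hbv
    have hx : Γ.dist (step Γ v (x • v₀)) (x • v₀) ≤ R := by omega
    rw [← ih hx (by omega), hp _ _ hadj.symm, mul_assoc,
      hs.map_inv_mul_mul_map_inv_mul hc (hb _).le (hbv.trans (Nat.one_add_le_iff.2 (hb v)))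
        hx]

end Extension

theorem IsMulOn.exists_monoidHom (hT : Γ.IsTree) (hR : ∀ v, ∃ g : G, Γ.dist v (g • v₀) < R)
    {s : G → H} (hs : IsMulOn (displacementBall G Γ v₀ (2 * R)) s) :
    ∃ ψ : G →* H, ∀ a ∈ displacementBall G Γ v₀ (2 * R), ψ a = s a := by
  have hc := hT.1
  choose b hb using hR
  have hbadj {v w : V} (hvw : Γ.Adj v w) : Γ.dist v (b w • v₀) ≤ R := by
    have := hc.dist_triangle (u := v) (v := w) (w := b w • v₀)
    rw [dist_eq_one_iff_adj.2 hvw] at this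
    exact this.trans (Nat.one_add_le_iff.2 (hb w))
  obtain ⟨p, -, hp⟩ := exists_isPotential hT v₀ (fun v w => s ((b v)⁻¹ * b w)) fun v w hvw => by
    rw [hs.map_inv_mul_mul_map_inv_mul hc (hb v).le (hbadj hvw) (hb v).le, inv_mul_cancel,
      hs.map_one (one_mem_displacementBall _)]
  refine exists_monoidHom_of_forall_map_mul
    (closure_displacementBall hc fun v => ⟨b v, hb v⟩)
    (fun x => p (x • v₀) * s ((b (x • v₀))⁻¹ * x)) fun x a ha => ?_
  obtain ⟨z, hzx, hzxa⟩ := exists_dist_le_and_dist_le (x := x • v₀) (y := (x * a) • v₀) hc <| by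
    rw [mul_smul, dist_smul_smul hc]
    exact ha
  have hx := inv_mul_mem_displacementBall hc (hb z).le hzx
  have hxa := inv_mul_mem_displacementBall hc (hb z).le hzxa
  rw [← mul_assoc] at hxa
  rw [← hs.potential_mul_eq hb hp hc x hzx, ← hs.potential_mul_eq hb hp hc (x * a) hzxa,
    ← mul_assoc (b z)⁻¹, hs _ hx a ha hxa, mul_assoc]

theorem isTablePresentation_of_range_eq {ι : Type*} {e : ι → G} (hT : Γ.IsTree)
    (hR : ∀ v, ∃ g : G, Γ.dist v (g • v₀) < R)
    (he : Set.range e = displacementBall G Γ v₀ (2 * R)) : IsTablePresentation e :=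
  isTablePresentation_of_forall_isMulOn (he ▸ closure_displacementBall hT.1 hR)
    (he ▸ one_mem_displacementBall _) (he ▸ fun _ hs => hs.exists_monoidHom hT hR)

end DisplacementBalls

section OrbitDistance

variable {G V : Type*} [Group G] [MulAction G V] {Γ : SimpleGraph V} (v₀ : V)

/-- The distance in `Γ` from a vertex to the orbit of the base point `v₀`. -/
noncomputable def orbitDist (G : Type*) [Group G] [MulAction G V] (Γ : SimpleGraph V) (v₀ v : V) :
    ℕ :=
  ⨅ g : G, Γ.dist v (g • v₀)

theorem orbitDist_le (v : V) (g : G) : orbitDist G Γ v₀ v ≤ Γ.dist v (g • v₀) :=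
  ciInf_le (OrderBot.bddBelow _) g

theorem exists_dist_eq_orbitDist (v : V) : ∃ g : G, Γ.dist v (g • v₀) = orbitDist G Γ v₀ v :=
  ciInf_mem fun g : G => Γ.dist v (g • v₀)

theorem orbitDist_smul [InvariantGraph G Γ] (hc : Γ.Connected) (g : G) (v : V) :
    orbitDist G Γ v₀ (g • v) = orbitDist G Γ v₀ v := by
  have hle (g : G) (v : V) : orbitDist G Γ v₀ (g • v) ≤ orbitDist G Γ v₀ v := by
    obtain ⟨k, hk⟩ := exists_dist_eq_orbitDist (G := G) (Γ := Γ) v₀ v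
    rw [← hk, ← dist_smul_smul hc g, ← mul_smul]
    exact orbitDist_le v₀ _ _
  exact le_antisymm (hle g v) (by simpa only [inv_smul_smul] using hle g⁻¹ (g • v))

theorem exists_orbitDist_eq (hc : Γ.Connected) {v : V} {j : ℕ} (hj : j ≤ orbitDist G Γ v₀ v) :
    ∃ w, orbitDist G Γ v₀ w = j := by
  induction hk : orbitDist G Γ v₀ v generalizing v with
  | zero => exact ⟨v, by omega⟩
  | succ k ih =>
    obtain rfl | hlt := hj.eq_or_lt
    · exact ⟨v, rfl⟩
    obtain ⟨g, hg⟩ := exists_dist_eq_orbitDist (G := G) (Γ := Γ) v₀ v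
    have hne : v ≠ g • v₀ := fun h => by simp [← h, hk] at hg
    have hstep := dist_eq_dist_step_add_one hc hne
    have hle := orbitDist_le (Γ := Γ) v₀ (step Γ v (g • v₀)) g
    obtain ⟨g', hg'⟩ := exists_dist_eq_orbitDist (G := G) (Γ := Γ) v₀ (step Γ v (g • v₀))
    have hle' := orbitDist_le (Γ := Γ) v₀ v g'
    have htri := hc.dist_triangle (u := v) (v := step Γ v (g • v₀)) (w := g' • v₀)
    rw [dist_eq_one_iff_adj.2 (step_adj hc hne)] at htri
    exact ih (v := step Γ v (g • v₀)) (by omega) (by omega)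

theorem IsTransversal.exists_dist_smul_lt [InvariantGraph G Γ] (hc : Γ.Connected) {N : Subgroup G}
    {V₀ : Finset V} (hV₀ : IsTransversal N V₀) (v : V) :
    ∃ g : G, Γ.dist v (g • v₀) < V₀.card := by
  classical
  obtain ⟨g, hg⟩ := exists_dist_eq_orbitDist (G := G) (Γ := Γ) v₀ v
  refine ⟨g, hg.trans_lt ?_⟩
  have hsub : Finset.range (orbitDist G Γ v₀ v + 1) ⊆ V₀.image (orbitDist G Γ v₀) := fun j hj => by
    obtain ⟨w, hw⟩ := exists_orbitDist_eq v₀ hc (Finset.mem_range_succ_iff.1 hj)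
    obtain ⟨n, -, hn⟩ := hV₀.exists_smul_mem w
    exact Finset.mem_image.2 ⟨_, hn, by rw [orbitDist_smul v₀ hc, hw]⟩
  simpa using (Finset.card_le_card hsub).trans Finset.card_image_le

theorem dist_pow_smul_le [InvariantGraph G Γ] (hc : Γ.Connected) (g : G) (x : V) (k : ℕ) :
    Γ.dist x (g ^ k • x) ≤ k * Γ.dist x (g • x) := by
  induction k with
  | zero => simp
  | succ k ih =>
    calc Γ.dist x (g ^ (k + 1) • x)
        ≤ Γ.dist x (g ^ k • x) + Γ.dist (g ^ k • x) (g ^ (k + 1) • x) := hc.dist_triangle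
      _ ≤ k * Γ.dist x (g • x) + Γ.dist x (g • x) := by
        rw [pow_succ, mul_smul, dist_smul_smul hc]
        exact Nat.add_le_add_right ih _
      _ = (k + 1) * Γ.dist x (g • x) := (Nat.succ_mul _ _).symm

end OrbitDistance

section BallCounting

variable {G V : Type*} [Group G] [MulAction G V] {Γ : SimpleGraph V} [Γ.LocallyFinite] {L : ℕ}

theorem exists_card_le_of_degree_le (hc : Γ.Connected) (hL : ∀ v, Γ.degree v ≤ L) (v₀ : V) (r : ℕ) :
    ∃ B : Finset V, B.card ≤ (L + 1) ^ r ∧ ∀ v, Γ.dist v v₀ ≤ r → v ∈ B := by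
  classical
  induction r with
  | zero =>
    refine ⟨{v₀}, by simp, fun v hv => ?_⟩
    exact Finset.mem_singleton.2 (hc.dist_eq_zero_iff.1 (Nat.le_zero.1 hv))
  | succ r ih =>
    obtain ⟨B, hB, hmem⟩ := ih
    refine ⟨B.biUnion fun v => insert v (Γ.neighborFinset v), ?_, fun v hv => ?_⟩
    · refine (Finset.card_biUnion_le_card_mul _ _ (L + 1) fun v _ => ?_).trans
        (Nat.mul_le_mul_right _ hB)
      exact (Finset.card_insert_le _ _).trans (Nat.succ_le_succ (hL v))
    · rw [Finset.mem_biUnion]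
      obtain rfl | hne := eq_or_ne v v₀
      · exact ⟨v, hmem v (by simp), Finset.mem_insert_self _ _⟩
      · have hstep := dist_eq_dist_step_add_one hc hne
        exact ⟨step Γ v v₀, hmem _ (by omega), Finset.mem_insert_of_mem <|
          (Γ.mem_neighborFinset _ _).2 (step_adj hc hne).symm⟩

theorem exists_range_eq_displacementBall (hc : Γ.Connected) (hL : ∀ v, Γ.degree v ≤ L)
    {N : Subgroup G} [N.FiniteIndex] (hfree : ∀ n ∈ N, ∀ v : V, n • v = v → n = 1) (v₀ : V)
    (r : ℕ) :
    ∃ e : Fin ((L + 1) ^ r * N.index) → G, Set.range e = displacementBall G Γ v₀ r := by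
  obtain ⟨B, hB, hmem⟩ := exists_card_le_of_degree_le hc hL v₀ r
  let f (g : displacementBall G Γ v₀ r) : B × G ⧸ N :=
    (⟨g.1 • v₀, hmem _ (Γ.dist_comm.trans_le g.2)⟩, ((g.1⁻¹ : G) : G ⧸ N))
  have hf : f.Injective := fun g g' h => by
    obtain ⟨hv, hN⟩ := Prod.ext_iff.1 h
    rw [QuotientGroup.eq, inv_inv] at hN
    have hfix : (g.1 * g'.1⁻¹) • g'.1 • v₀ = g'.1 • v₀ := by
      rw [mul_smul, inv_smul_smul]
      exact congrArg Subtype.val hv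
    exact Subtype.ext (mul_inv_eq_one.1 (hfree _ hN _ hfix))
  have : Finite (displacementBall G Γ v₀ r) := Finite.of_injective f hf
  have hcard : Nat.card (displacementBall G Γ v₀ r) ≤ (L + 1) ^ r * N.index := by
    refine (Nat.card_le_card_of_injective f hf).trans ?_
    rw [Nat.card_prod, Nat.card_eq_fintype_card, Fintype.card_coe]
    exact Nat.mul_le_mul_right _ hB
  have : Nonempty (displacementBall G Γ v₀ r) := ⟨⟨1, one_mem_displacementBall r⟩⟩
  have emb : displacementBall G Γ v₀ r ↪ Fin ((L + 1) ^ r * N.index) :=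
    (Finite.equivFin _).toEmbedding.trans (Fin.castLEEmb hcard)
  refine ⟨Subtype.val ∘ Function.invFun emb, ?_⟩
  rw [(Function.invFun_surjective emb.injective).range_comp, Subtype.range_coe]

end BallCounting

section UniformTestSet

variable {G : Type*} [Group G]

-- On a reduced tree all bounds depend only on the rank and the index of `N` and on `M`; hence so
-- does the length of a tuple presenting `G` by its multiplication table and containing `n ^ M`.
theorem exists_finset_forall_hasQuotientTrail {N : Subgroup G} [N.FiniteIndex]
    (htf : ∀ n ∈ N, n ≠ 1 → ¬ IsOfFinOrder n) (hfg : N.FG) {M : ℕ} (hM : M ≠ 0) :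
    ∃ F : Finset G, 1 ∉ F ∧ ∀ (V : Type u) (_ : MulAction G V) (Γ : SimpleGraph V),
      ProperTreeAction G Γ → ∀ n ∈ N, n ≠ 1 → HasQuotientTrail N Γ n →
        ∃ σ : G ≃* G, ∃ f ∈ F, σ f = n ^ M := by
  obtain ⟨S, hS⟩ := hfg
  let K := 8 * S.card + 2 * N.index
  let L := 2 * (S.card + K)
  let R := K + M * L
  obtain ⟨F, hF₁, hF⟩ := exists_finset_forall_isTablePresentation G
    (Fin ((L + 1) ^ (2 * R) * N.index))
  refine ⟨F, hF₁, fun V' _ Γ' _ n hn hne htrail' => ?_⟩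
  obtain ⟨V, _, Γ, _, htrail, hred⟩ := exists_isReduced htrail'
  have hT : Γ.IsTree := ProperTreeAction.isTree G
  have hfree : ∀ n ∈ N, ∀ v : V, n • v = v → n = 1 := fun n hn v => eq_one_of_smul_eq htf Γ hn
  let _ : Γ.LocallyFinite := fun v => (finite_neighborSet G Γ v).fintype
  obtain ⟨V₀, hV₀⟩ := exists_isTransversal N Γ
  have hK : V₀.card ≤ K := hred.card_le hT hfree hV₀ hS
  have hsum : ∑ v ∈ V₀, Γ.degree v ≤ L := (sum_degree_le hT hfree hV₀ hS).trans (by omega)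
  have hL (v : V) : Γ.degree v ≤ L := by
    obtain ⟨m, -, hm⟩ := hV₀.exists_smul_mem v
    rw [← degree_smul m v]
    exact (Finset.single_le_sum (fun _ _ => Nat.zero_le _) hm).trans hsum
  obtain ⟨x, hx⟩ := htrail.exists_dist_le hT.1 hV₀
  obtain ⟨e, he⟩ := exists_range_eq_displacementBall hT.1 hL hfree x (2 * R)
  have hpow : n ^ M ∈ displacementBall G Γ x (2 * R) := by
    have := (dist_pow_smul_le hT.1 n x M).trans (Nat.mul_le_mul_left M (hx.trans hsum))
    exact this.trans (by omega)
  obtain ⟨i, hi⟩ : n ^ M ∈ Set.range e := he ▸ hpow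
  have hnear (v : V) : ∃ g : G, Γ.dist v (g • x) < R := by
    obtain ⟨g, hg⟩ := hV₀.exists_dist_smul_lt x hT.1 v
    exact ⟨g, hg.trans_le (hK.trans (Nat.le_add_right _ _))⟩
  have hpow_ne : n ^ M ≠ 1 := fun h =>
    htf n hn hne (isOfFinOrder_iff_pow_eq_one.2 ⟨M, Nat.pos_of_ne_zero hM, h⟩)
  exact hi ▸ hF e (isTablePresentation_of_range_eq hT hnear he) i (hi ▸ hpow_ne)

end UniformTestSet

section Cuts

variable {X : Type*} {Γ : SimpleGraph X} {C D : Set X}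

/-- The oriented edge boundary of a vertex set `C`: the darts leaving `C`, encoded as pairs. -/
def edgeBoundary (Γ : SimpleGraph X) (C : Set X) : Set (X × X) :=
  {e | e.1 ∈ C ∧ e.2 ∉ C ∧ Γ.Adj e.1 e.2}

/-- The size of a cut. It is an extended natural number, so that infinite cuts never count as
small. -/
noncomputable def cutSize (Γ : SimpleGraph X) (C : Set X) : ℕ∞ := (edgeBoundary Γ C).encard

theorem cutSize_compl (C : Set X) : cutSize Γ Cᶜ = cutSize Γ C := by
  have h : edgeBoundary Γ Cᶜ = Prod.swap ⁻¹' edgeBoundary Γ C := by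
    ext ⟨a, b⟩
    simp only [edgeBoundary, Set.mem_ofPred_eq, Set.mem_compl_iff, not_not, Set.mem_preimage,
      Prod.fst_swap, Prod.snd_swap, Γ.adj_comm b a]
    tauto
  rw [cutSize, h, Set.encard_preimage_of_bijective Prod.swap_bijective, cutSize]

theorem cutSize_preimage (e : Γ ≃g Γ) (C : Set X) : cutSize Γ (e ⁻¹' C) = cutSize Γ C := by
  have h : edgeBoundary Γ (e ⁻¹' C) = Prod.map e e ⁻¹' edgeBoundary Γ C := by
    ext ⟨a, b⟩
    simp only [edgeBoundary, Set.mem_ofPred_eq, Set.mem_preimage, Prod.map_apply, e.map_adj_iff]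
  rw [cutSize, h, Set.encard_preimage_of_bijective (e.bijective.prodMap e.bijective), cutSize]

theorem encard_add_encard_le {α : Type*} {A B P Q : Set α} (hunion : A ∪ B ⊆ P ∪ Q)
    (hinter : A ∩ B ⊆ P ∩ Q) : A.encard + B.encard ≤ P.encard + Q.encard := by
  rw [← Set.encard_union_add_encard_inter A B, ← Set.encard_union_add_encard_inter P Q]
  exact add_le_add (Set.encard_le_encard hunion) (Set.encard_le_encard hinter)

theorem ncard_add_ncard_lt {α : Type*} {A B P Q : Set α} (hP : P.Finite) (hQ : Q.Finite)
    (hunion : A ∪ B ⊂ P ∪ Q) (hinter : A ∩ B ⊆ P ∩ Q) :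
    A.ncard + B.ncard < P.ncard + Q.ncard := by
  have hA : A.Finite := (hP.union hQ).subset (Set.subset_union_left.trans hunion.1)
  have hB : B.Finite := (hP.union hQ).subset (Set.subset_union_right.trans hunion.1)
  rw [← Set.ncard_union_add_ncard_inter A B hA hB, ← Set.ncard_union_add_ncard_inter P Q hP hQ]
  exact add_lt_add_of_lt_of_le (Set.ncard_lt_ncard hunion (hP.union hQ))
    (Set.ncard_le_ncard hinter (hP.subset Set.inter_subset_left))

theorem cutSize_inter_add_cutSize_compl_inter_compl_le (C D : Set X) :
    cutSize Γ (C ∩ D) + cutSize Γ (Cᶜ ∩ Dᶜ) ≤ cutSize Γ C + cutSize Γ D := by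
  rw [← Set.compl_union, cutSize_compl]
  refine encard_add_encard_le ?_ ?_
  · rintro ⟨a, b⟩ (⟨⟨haC, haD⟩, hb, hab⟩ | ⟨haC | haD, hb, hab⟩)
    · by_cases hbC : b ∈ C
      · exact Or.inr ⟨haD, fun hbD => hb ⟨hbC, hbD⟩, hab⟩
      · exact Or.inl ⟨haC, hbC, hab⟩
    · exact Or.inl ⟨haC, fun h => hb (Or.inl h), hab⟩
    · exact Or.inr ⟨haD, fun h => hb (Or.inr h), hab⟩
  · rintro ⟨a, b⟩ ⟨⟨ha, -, hab⟩, -, hb, -⟩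
    exact ⟨⟨ha.1, fun h => hb (Or.inl h), hab⟩, ha.2, fun h => hb (Or.inr h), hab⟩

theorem eq_empty_or_eq_univ_of_cutSize_eq_zero (hc : Γ.Preconnected) (h : cutSize Γ C = 0) :
    C = ∅ ∨ C = Set.univ := by
  refine C.eq_empty_or_nonempty.imp_right fun ⟨x, hx⟩ => Set.eq_univ_of_forall fun y => ?_
  by_contra hy
  obtain ⟨p⟩ := hc x y
  obtain ⟨d, -, hd, hd'⟩ := p.exists_boundary_dart C hx hy
  exact Set.eq_empty_iff_forall_notMem.1 (Set.encard_eq_zero.1 h) d.toProd ⟨hd, hd', d.adj⟩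

theorem cutSize_eq_add_of_closed {A : Set X} (hA : A ⊆ C)
    (hclosed : ∀ a ∈ A, ∀ b ∈ C, Γ.Adj a b → b ∈ A) :
    cutSize Γ C = cutSize Γ A + cutSize Γ (C \ A) := by
  rw [cutSize, cutSize, cutSize, ← Set.encard_union_eq]
  · congr 1
    ext ⟨a, b⟩
    constructor
    · rintro ⟨ha, hb, hab⟩
      by_cases haA : a ∈ A
      · exact Or.inl ⟨haA, fun hbA => hb (hA hbA), hab⟩
      · exact Or.inr ⟨⟨ha, haA⟩, fun hbA => hb hbA.1, hab⟩
    · rintro (⟨ha, hb, hab⟩ | ⟨ha, hb, hab⟩)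
      · exact ⟨hA ha, fun hbC => hb (hclosed a ha b hbC hab), hab⟩
      · exact ⟨ha.1, fun hbC => hb ⟨hbC, fun hbA => ha.2 (hclosed b hbA a ha.1 hab.symm)⟩, hab⟩
  · exact Set.disjoint_left.2 fun e he he' => he'.1.2 he.1

/-- The cuts of size at most `k` with both sides connected that contain `x` and not `y`. -/
def tightCuts (Γ : SimpleGraph X) (k : ℕ) (x y : X) : Set (Set X) :=
  {D | (Γ.induce D).Preconnected ∧ (Γ.induce Dᶜ).Preconnected ∧ cutSize Γ D ≤ k ∧ x ∈ D ∧ y ∉ D}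

theorem reachable_of_induce_preconnected (h : (Γ.induce C).Preconnected) {x y : X} (hx : x ∈ C)
    (hy : y ∈ C) : Γ.Reachable x y :=
  (h ⟨x, hx⟩ ⟨y, hy⟩).map (Embedding.induce C).toHom

theorem induce_deleteEdges_eq {x y : X} (h : x ∉ D ∨ y ∉ D) :
    (Γ.deleteEdges {s(x, y)}).induce D = Γ.induce D := by
  ext a b
  simp only [comap_adj, deleteEdges_adj, Set.mem_singleton_iff, and_iff_left_iff_imp]
  rintro - hab
  rcases Sym2.eq_iff.1 hab with ⟨ha, hb⟩ | ⟨ha, hb⟩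
  · exact h.elim (fun h => h (ha ▸ a.2)) fun h => h (hb ▸ b.2)
  · exact h.elim (fun h => h (hb ▸ b.2)) fun h => h (ha ▸ a.2)

theorem cutSize_deleteEdges_add_one_le {x y : X} (hxy : Γ.Adj x y) (hx : x ∈ D) (hy : y ∉ D) :
    cutSize (Γ.deleteEdges {s(x, y)}) D + 1 ≤ cutSize Γ D := by
  have hnot : (x, y) ∉ edgeBoundary (Γ.deleteEdges {s(x, y)}) D := fun h =>
    ((deleteEdges_adj).1 h.2.2).2 rfl
  rw [cutSize, ← Set.encard_insert_of_notMem hnot]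
  refine Set.encard_le_encard (Set.insert_subset ⟨hx, hy, hxy⟩ fun e he => ?_)
  exact ⟨he.1, he.2.1, deleteEdges_le _ he.2.2⟩

/-- If deleting the edge `x — y` leaves `x` and `y` connected, a walk between them crosses every
such cut in another edge; otherwise the only such cut is the component of `x`. -/
theorem finite_tightCuts_of_adj (k : ℕ) : ∀ (Γ : SimpleGraph X) {x y : X}, Γ.Adj x y →
    (tightCuts Γ k x y).Finite := by
  induction k with
  | zero =>
    refine fun Γ x y hxy => Set.finite_empty.subset fun D ⟨_, _, hsize, hx, hy⟩ => ?_
    have hempty := Set.encard_eq_zero.1 (nonpos_iff_eq_zero.1 hsize)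
    exact Set.eq_empty_iff_forall_notMem.1 hempty (x, y) ⟨hx, hy, hxy⟩
  | succ k ih =>
    intro Γ x y hxy
    have hconn : ∀ {E : Set X}, x ∉ E ∨ y ∉ E → (Γ.induce E).Preconnected →
        ((Γ.deleteEdges {s(x, y)}).induce E).Preconnected := fun hE h => by
      rwa [induce_deleteEdges_eq hE]
    by_cases hreach : (Γ.deleteEdges {s(x, y)}).Reachable x y
    · obtain ⟨p⟩ := hreach
      refine (p.darts.finite_toSet.biUnion fun d _ => ih _ d.adj).subset ?_
      rintro D ⟨hD, hD', hsize, hx, hy⟩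
      obtain ⟨d, hd, hfst, hsnd⟩ := p.exists_boundary_dart D hx hy
      refine Set.mem_biUnion hd ⟨hconn (Or.inr hy) hD, hconn (Or.inl (not_not.2 hx)) hD', ?_,
        hfst, hsnd⟩
      exact (ENat.add_le_add_iff_right ENat.one_ne_top).1
        ((cutSize_deleteEdges_add_one_le hxy hx hy).trans (by exact_mod_cast hsize))
    · refine (Set.finite_singleton {z | (Γ.deleteEdges {s(x, y)}).Reachable x z}).subset ?_
      rintro D ⟨hD, hD', -, hx, hy⟩
      ext z
      refine ⟨reachable_of_induce_preconnected (hconn (Or.inr hy) hD) hx, fun hz => ?_⟩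
      by_contra hzD
      exact hreach (hz.trans
        (reachable_of_induce_preconnected (hconn (Or.inl (not_not.2 hx)) hD') hzD hy))

theorem finite_tightCuts (hc : Γ.Preconnected) (k : ℕ) (x y : X) :
    (tightCuts Γ k x y).Finite := by
  obtain ⟨p⟩ := hc x y
  refine (p.darts.finite_toSet.biUnion fun d _ => finite_tightCuts_of_adj k Γ d.adj).subset ?_
  rintro D ⟨hD, hD', hsize, hx, hy⟩
  obtain ⟨d, hd, hfst, hsnd⟩ := p.exists_boundary_dart D hx hy
  exact Set.mem_biUnion hd ⟨hD, hD', hsize, hfst, hsnd⟩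

/-- Two sets cross if all four corners they determine are nonempty. -/
def Crosses (C D : Set X) : Prop :=
  (C ∩ D).Nonempty ∧ (C ∩ Dᶜ).Nonempty ∧ (Cᶜ ∩ D).Nonempty ∧ (Cᶜ ∩ Dᶜ).Nonempty

theorem Crosses.symm (h : Crosses C D) : Crosses D C := by
  simpa only [Crosses, Set.inter_comm D, Set.inter_comm Dᶜ] using ⟨h.1, h.2.2.1, h.2.1, h.2.2.2⟩

theorem crosses_compl_right : Crosses C Dᶜ ↔ Crosses C D := by
  simp only [Crosses, _root_.compl_compl]
  tauto

theorem crosses_compl_left : Crosses Cᶜ D ↔ Crosses C D :=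
  ⟨fun h => (crosses_compl_right.1 h.symm).symm, fun h => (crosses_compl_right.2 h.symm).symm⟩

theorem crosses_preimage (e : X ≃ X) : Crosses (e ⁻¹' C) (e ⁻¹' D) ↔ Crosses C D := by
  simp only [Crosses, ← Set.preimage_compl, ← Set.preimage_inter,
    e.surjective.nonempty_preimage]

theorem Crosses.crosses_or_of_inter {F : Set X} (h : Crosses F (C ∩ D))
    (hCD : (Cᶜ ∩ Dᶜ).Nonempty) : Crosses F C ∨ Crosses F D := by
  obtain ⟨⟨a, haF, haC, haD⟩, ⟨b, hbF, hb⟩, ⟨c, hcF, hcC, hcD⟩, ⟨d, hdF, hd⟩⟩ := h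
  obtain ⟨z, hzC, hzD⟩ := hCD
  have crosses_left : ∀ {u v}, u ∈ F → u ∉ C → v ∉ F → v ∉ C → Crosses F C :=
    fun hu hu' hv hv' => ⟨⟨a, haF, haC⟩, ⟨_, hu, hu'⟩, ⟨c, hcF, hcC⟩, ⟨_, hv, hv'⟩⟩
  have crosses_right : ∀ {u v}, u ∈ F → u ∉ D → v ∉ F → v ∉ D → Crosses F D :=
    fun hu hu' hv hv' => ⟨⟨a, haF, haD⟩, ⟨_, hu, hu'⟩, ⟨c, hcF, hcD⟩, ⟨_, hv, hv'⟩⟩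
  by_cases hzF : z ∈ F
  · by_cases hdC : d ∈ C
    · exact Or.inr (crosses_right hzF hzD hdF fun hdD => hd ⟨hdC, hdD⟩)
    · exact Or.inl (crosses_left hzF hzC hdF hdC)
  · by_cases hbC : b ∈ C
    · exact Or.inr (crosses_right hbF (fun hbD => hb ⟨hbC, hbD⟩) hzF hzD)
    · exact Or.inl (crosses_left hbF hbC hzF hzC)

theorem Crosses.crosses_of_inter_of_compl_inter_compl {F : Set X} (h : Crosses F (C ∩ D))
    (h' : Crosses F (Cᶜ ∩ Dᶜ)) : Crosses F C := by
  obtain ⟨⟨a, haF, ha⟩, -, ⟨b, hbF, hb⟩, -⟩ := h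
  obtain ⟨⟨c, hcF, hc⟩, -, ⟨d, hdF, hd⟩, -⟩ := h'
  exact ⟨⟨a, haF, ha.1⟩, ⟨c, hcF, hc.1⟩, ⟨b, hbF, hb.1⟩, ⟨d, hdF, hd.1⟩⟩

/-- A set separates two ultrafilters if it belongs to exactly one of them. Ultrafilters play the
role of the ends of the graph. -/
def Separates (p q : Ultrafilter X) (C : Set X) : Prop := C ∈ p ↔ C ∉ q

variable {p q r s : Ultrafilter X} {K : ℕ}

theorem Separates.compl (h : Separates p q C) : Separates p q Cᶜ := by
  simp only [Separates, Ultrafilter.compl_mem_iff_notMem] at h ⊢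
  tauto

theorem Separates.or_sdiff {A : Set X} (hA : A ⊆ C) (h : Separates p q C) :
    Separates p q A ∨ Separates p q (C \ A) := by
  have hmem : ∀ u : Ultrafilter X, C ∈ u ↔ A ∈ u ∨ C \ A ∈ u := fun u => by
    rw [← Ultrafilter.union_mem_iff, Set.union_sdiff_cancel hA]
  have hdisj : ∀ u : Ultrafilter X, ¬ (A ∈ u ∧ C \ A ∈ u) := fun u hu =>
    u.empty_notMem (Set.inter_sdiff_self A C ▸ Filter.inter_mem hu.1 hu.2)
  have := hdisj p
  have := hdisj q
  simp only [Separates, hmem] at h ⊢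
  tauto

/-- A smallest cut separating `p` from `q`, of size at most `K`. -/
structure IsMinCut (Γ : SimpleGraph X) (K : ℕ) (p q : Ultrafilter X) (C : Set X) : Prop where
  separates : Separates p q C
  cutSize_le : cutSize Γ C ≤ K
  min : ∀ D, Separates p q D → cutSize Γ C ≤ cutSize Γ D

theorem IsMinCut.cutSize_ne_top (h : IsMinCut Γ K p q C) : cutSize Γ C ≠ ⊤ :=
  ne_top_of_le_ne_top (ENat.natCast_ne_top K) h.cutSize_le

theorem IsMinCut.of_le (h : IsMinCut Γ K p q C) (hD : Separates p q D)
    (hle : cutSize Γ D ≤ cutSize Γ C) : IsMinCut Γ K p q D :=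
  ⟨hD, hle.trans h.cutSize_le, fun E hE => hle.trans (h.min E hE)⟩

theorem IsMinCut.compl (h : IsMinCut Γ K p q C) : IsMinCut Γ K p q Cᶜ :=
  h.of_le h.separates.compl (cutSize_compl C).le

theorem IsMinCut.induce_preconnected (hc : Γ.Preconnected) (h : IsMinCut Γ K p q C) :
    (Γ.induce C).Preconnected := by
  intro x y
  let A : Set X := {z | ∃ hz : z ∈ C, (Γ.induce C).Reachable x ⟨z, hz⟩}
  have hA : A ⊆ C := fun z hz => hz.1
  have hxA : x.1 ∈ A := ⟨x.2, .refl x⟩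
  have hclosed : ∀ a ∈ A, ∀ b ∈ C, Γ.Adj a b → b ∈ A := fun a ha b hb hab =>
    ⟨hb, ha.2.trans (Adj.reachable (G := Γ.induce C) (v := ⟨b, hb⟩) hab)⟩
  suffices hCA : C ⊆ A from (hCA y.2).2
  have hadd := cutSize_eq_add_of_closed hA hclosed
  have hne := h.cutSize_ne_top
  rcases h.separates.or_sdiff hA with hsep | hsep
  · have hzero : cutSize Γ (C \ A) = 0 := by
      have hle := h.min A hsep
      rw [hadd] at hle hne
      exact nonpos_iff_eq_zero.1 ((ENat.add_le_add_iff_left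
        (ne_top_of_le_ne_top hne le_self_add)).1 (by rwa [add_zero]))
    rcases eq_empty_or_eq_univ_of_cutSize_eq_zero hc hzero with hempty | huniv
    · exact Set.sdiff_eq_empty.1 hempty
    · exact absurd hxA (huniv.symm ▸ Set.mem_univ x.1 : x.1 ∈ C \ A).2
  · have hzero : cutSize Γ A = 0 := by
      have hle := h.min (C \ A) hsep
      rw [hadd] at hle hne
      exact nonpos_iff_eq_zero.1 ((ENat.add_le_add_iff_right
        (ne_top_of_le_ne_top hne le_add_self)).1 (by rwa [zero_add]))
    rcases eq_empty_or_eq_univ_of_cutSize_eq_zero hc hzero with hempty | huniv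
    · exact absurd hxA (hempty ▸ Set.notMem_empty _)
    · exact huniv ▸ Set.subset_univ C

theorem IsMinCut.mem_tightCuts (hc : Γ.Preconnected) (h : IsMinCut Γ K p q C) {x y : X}
    (hx : x ∈ C) (hy : y ∉ C) : C ∈ tightCuts Γ K x y :=
  ⟨h.induce_preconnected hc, h.compl.induce_preconnected hc, h.cutSize_le, hx, hy⟩

theorem isMinCut_map_iff (e : Γ ≃g Γ) :
    IsMinCut Γ K (p.map e) (q.map e) C ↔ IsMinCut Γ K p q (e ⁻¹' C) := by
  have hmin : (∀ D, Separates (p.map e) (q.map e) D → cutSize Γ C ≤ cutSize Γ D) ↔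
      ∀ D, Separates p q D → cutSize Γ (e ⁻¹' C) ≤ cutSize Γ D := by
    rw [iff_comm, e.injective.preimage_surjective.forall]
    simp only [cutSize_preimage]
    rfl
  exact ⟨fun h => ⟨h.separates, (cutSize_preimage e C).trans_le h.cutSize_le, hmin.1 h.min⟩,
    fun h => ⟨h.separates, (cutSize_preimage e C).symm.trans_le h.cutSize_le, hmin.2 h.min⟩⟩

/-- The minimal cuts that cross `C`, over all pairs of ultrafilters. -/
def crossingCuts (Γ : SimpleGraph X) (K : ℕ) (C : Set X) : Set (Set X) :=
  {F | (∃ p q, IsMinCut Γ K p q F) ∧ Crosses F C}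

theorem crossingCuts_compl (C : Set X) : crossingCuts Γ K Cᶜ = crossingCuts Γ K C := by
  simp only [crossingCuts, crosses_compl_right]

theorem map_surjective_of_iso (e : Γ ≃g Γ) :
    Function.Surjective (Ultrafilter.map e : Ultrafilter X → Ultrafilter X) := fun p =>
  ⟨p.map e.symm, by
    rw [Ultrafilter.map_map, show (e ∘ e.symm : X → X) = id from funext e.apply_symm_apply,
      Ultrafilter.map_id]⟩

theorem ncard_crossingCuts_preimage (e : Γ ≃g Γ) (C : Set X) :
    (crossingCuts Γ K (e ⁻¹' C)).ncard = (crossingCuts Γ K C).ncard := by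
  have h : crossingCuts Γ K C = (e ⁻¹' ·) ⁻¹' crossingCuts Γ K (e ⁻¹' C) := by
    ext F
    refine and_congr ?_ (crosses_preimage e.toEquiv).symm
    rw [(map_surjective_of_iso e).exists₂]
    simp only [isMinCut_map_iff]
  rw [Set.ncard, Set.ncard, h, Set.encard_preimage_of_bijective]
  exact ⟨Set.preimage_injective.2 e.surjective, e.injective.preimage_surjective⟩

theorem exists_mem_edgeBoundary_of_induce_preconnected {F : Set X}
    (hF : (Γ.induce F).Preconnected) (h : (F ∩ C).Nonempty) (h' : (F ∩ Cᶜ).Nonempty) :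
    ∃ e ∈ edgeBoundary Γ C, e.1 ∈ F := by
  obtain ⟨x, hxF, hxC⟩ := h
  obtain ⟨y, hyF, hyC⟩ := h'
  obtain ⟨p⟩ := hF ⟨x, hxF⟩ ⟨y, hyF⟩
  obtain ⟨d, -, hd, hd'⟩ := p.exists_boundary_dart (Subtype.val ⁻¹' C) hxC hyC
  exact ⟨(d.fst, d.snd), ⟨hd, hd', d.adj⟩, d.fst.2⟩

theorem finite_crossingCuts (hc : Γ.Preconnected) (hC : cutSize Γ C ≠ ⊤) :
    (crossingCuts Γ K C).Finite := by
  have hfin : (edgeBoundary Γ C).Finite := Set.encard_ne_top_iff.1 hC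
  refine (hfin.biUnion fun e _ => hfin.biUnion fun e' _ =>
    finite_tightCuts hc K e.1 e'.1).subset ?_
  rintro F ⟨⟨p, q, hF⟩, h₁, h₂, h₃, h₄⟩
  obtain ⟨e, he, heF⟩ :=
    exists_mem_edgeBoundary_of_induce_preconnected (hF.induce_preconnected hc) h₁ h₂
  obtain ⟨e', he', hmem⟩ :=
    exists_mem_edgeBoundary_of_induce_preconnected (hF.compl.induce_preconnected hc) h₃ h₄
  exact Set.mem_biUnion he (Set.mem_biUnion he' (hF.mem_tightCuts hc heF hmem))

/-- Passing from two crossing cuts to opposite corners does not create new crossings, and `C`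
itself, which crosses `D`, crosses neither corner. -/
theorem IsMinCut.ncard_crossingCuts_add_lt (hc : Γ.Preconnected) (hC : IsMinCut Γ K p q C)
    (hD : cutSize Γ D ≠ ⊤) (hcross : Crosses C D) :
    (crossingCuts Γ K (C ∩ D)).ncard + (crossingCuts Γ K (Cᶜ ∩ Dᶜ)).ncard <
      (crossingCuts Γ K C).ncard + (crossingCuts Γ K D).ncard := by
  refine ncard_add_ncard_lt (finite_crossingCuts hc hC.cutSize_ne_top) (finite_crossingCuts hc hD)
    ⟨?_, fun hsub => ?_⟩ ?_
  · rintro F (⟨hF, hFcross⟩ | ⟨hF, hFcross⟩)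
    · exact (hFcross.crosses_or_of_inter hcross.2.2.2).imp (⟨hF, ·⟩) (⟨hF, ·⟩)
    · refine (hFcross.crosses_or_of_inter ?_).imp (⟨hF, crosses_compl_right.1 ·⟩)
        (⟨hF, crosses_compl_right.1 ·⟩)
      simpa only [_root_.compl_compl] using hcross.1
  · rcases hsub (Or.inr ⟨⟨p, q, hC⟩, hcross⟩) with ⟨-, h⟩ | ⟨-, h⟩
    · obtain ⟨x, hx, hx'⟩ := h.2.2.1
      exact hx hx'.1
    · obtain ⟨x, hx, hx'⟩ := h.1
      exact hx'.1 hx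
  · rintro F ⟨⟨hF, hinter⟩, -, hcompl⟩
    refine ⟨⟨hF, hinter.crosses_of_inter_of_compl_inter_compl hcompl⟩, hF, ?_⟩
    rw [Set.inter_comm] at hinter hcompl
    exact hinter.crosses_of_inter_of_compl_inter_compl hcompl

/-- A minimal cut that crosses as few minimal cuts as possible. -/
structure IsOptimalCut (Γ : SimpleGraph X) (K : ℕ) (p q : Ultrafilter X) (C : Set X) : Prop
    extends IsMinCut Γ K p q C where
  ncard_le : ∀ D, IsMinCut Γ K p q D →
    (crossingCuts Γ K C).ncard ≤ (crossingCuts Γ K D).ncard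

theorem IsOptimalCut.compl (h : IsOptimalCut Γ K p q C) : IsOptimalCut Γ K p q Cᶜ :=
  ⟨h.toIsMinCut.compl, crossingCuts_compl (Γ := Γ) (K := K) C ▸ h.ncard_le⟩

theorem isOptimalCut_map_iff (e : Γ ≃g Γ) :
    IsOptimalCut Γ K (p.map e) (q.map e) C ↔ IsOptimalCut Γ K p q (e ⁻¹' C) := by
  have hle : (∀ D, IsMinCut Γ K (p.map e) (q.map e) D →
      (crossingCuts Γ K C).ncard ≤ (crossingCuts Γ K D).ncard) ↔
      ∀ D, IsMinCut Γ K p q D →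
        (crossingCuts Γ K (e ⁻¹' C)).ncard ≤ (crossingCuts Γ K D).ncard := by
    rw [iff_comm, e.injective.preimage_surjective.forall]
    simp only [ncard_crossingCuts_preimage, isMinCut_map_iff]
  exact ⟨fun h => ⟨(isMinCut_map_iff e).1 h.toIsMinCut, hle.1 h.ncard_le⟩,
    fun h => ⟨(isMinCut_map_iff e).2 h.toIsMinCut, hle.2 h.ncard_le⟩⟩

theorem exists_isOptimalCut (hsep : Separates p q C) (hK : cutSize Γ C ≤ K) :
    ∃ D, IsOptimalCut Γ K p q D := by
  have hmin : {D | IsMinCut Γ K p q D}.Nonempty := by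
    let S : Set (Set X) := {D | Separates p q D}
    exact ⟨Function.argminOn (cutSize Γ) S ⟨C, hsep⟩, Function.argminOn_mem _ S _,
      (Function.argminOn_le _ S hsep).trans hK, fun D hD => Function.argminOn_le _ S hD⟩
  let c : Set X → ℕ := fun D => (crossingCuts Γ K D).ncard
  exact ⟨Function.argminOn c _ hmin, Function.argminOn_mem c _ hmin,
    fun D hD => Function.argminOn_le c {D | IsMinCut Γ K p q D} hD⟩

theorem IsMinCut.cutSize_le_of_inter (hC : IsMinCut Γ K p q C)
    (hinter : Separates p q (C ∩ D)) : cutSize Γ (Cᶜ ∩ Dᶜ) ≤ cutSize Γ D :=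
  (ENat.add_le_add_iff_left hC.cutSize_ne_top).1 ((add_le_add_left (hC.min _ hinter) _).trans
    (cutSize_inter_add_cutSize_compl_inter_compl_le C D))

theorem IsOptimalCut.not_separates_of_crosses (hc : Γ.Preconnected)
    (hC : IsOptimalCut Γ K p q C) (hD : IsOptimalCut Γ K r s D) (hcross : Crosses C D)
    (hinter : Separates p q (C ∩ D)) : ¬ Separates r s (Cᶜ ∩ Dᶜ) := by
  intro hcompl
  have hle : cutSize Γ (C ∩ D) ≤ cutSize Γ C := by
    have h := hD.compl.cutSize_le_of_inter (D := Cᶜ) (by rwa [Set.inter_comm])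
    rwa [_root_.compl_compl, _root_.compl_compl, Set.inter_comm, cutSize_compl] at h
  have hlt := hC.ncard_crossingCuts_add_lt hc hD.cutSize_ne_top hcross
  have hCle := hC.ncard_le _ (hC.toIsMinCut.of_le hinter hle)
  have hDle := hD.ncard_le _ (hD.toIsMinCut.of_le hcompl (hC.cutSize_le_of_inter hinter))
  omega

theorem IsOptimalCut.of_separates (hC : IsOptimalCut Γ K p q C) (hD : IsOptimalCut Γ K r s D)
    (hCD : Separates p q D) (hDC : Separates r s C) : IsOptimalCut Γ K p q D := by
  have hDmin := hC.toIsMinCut.of_le hCD (hD.min C hDC)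
  have hCmin := hD.toIsMinCut.of_le hDC (hC.min D hCD)
  exact ⟨hDmin, fun E hE => (hD.ncard_le C hCmin).trans (hC.ncard_le E hE)⟩

/-- Whatever sides the four ultrafilters lie on, some opposite pair of corners separates both pairs
(or separates `p` and `q` twice, while `C` and `D` are interchangeable). -/
theorem IsOptimalCut.not_crosses (hc : Γ.Preconnected) (hC : IsOptimalCut Γ K p q C)
    (hD : IsOptimalCut Γ K r s D) : ¬ Crosses C D := by
  intro hcross
  have hcross' : Crosses C Dᶜ := crosses_compl_right.2 hcross
  have h₁ := hC.not_separates_of_crosses hc hD hcross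
  have h₂ := hC.compl.not_separates_of_crosses hc hD.compl (crosses_compl_left.2 hcross')
  have h₃ := hC.not_separates_of_crosses hc hD.compl hcross'
  have h₄ := hC.compl.not_separates_of_crosses hc hD (crosses_compl_left.2 hcross)
  have h₅ := fun hCD hDC => hC.not_separates_of_crosses hc (hC.of_separates hD hCD hDC) hcross
  have h₆ := fun hCD hDC =>
    hC.not_separates_of_crosses hc (hC.of_separates hD hCD hDC).compl hcross'
  have hCsep := hC.separates
  have hDsep := hD.separates
  have hinter : ∀ (u : Ultrafilter X) (A B : Set X), A ∩ B ∈ u ↔ A ∈ u ∧ B ∈ u :=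
    fun u A B => Filter.inter_mem_iff
  simp only [Separates, hinter, Ultrafilter.compl_mem_iff_notMem, not_not]
    at h₁ h₂ h₃ h₄ h₅ h₆ hCsep hDsep
  clear hC hD hcross hcross' hinter
  by_cases hDp : D ∈ p <;> by_cases hDq : D ∈ q <;> by_cases hCr : C ∈ r <;>
    by_cases hCs : C ∈ s <;> grind

end Cuts

open scoped Pointwise

section DualTree

variable {X : Type*} {O x y a b : Set (Set X)} {C D : Set X}

/-- A family of cuts that is closed under complements, nested, and in which only finitely many
members separate any two given points. -/
structure IsNestedCutSystem (O : Set (Set X)) : Prop where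
  compl_mem : ∀ C ∈ O, Cᶜ ∈ O
  not_crosses : ∀ C ∈ O, ∀ D ∈ O, ¬ Crosses C D
  nonempty : ∀ C ∈ O, C.Nonempty
  finite_separating : ∀ v w : X, {C | C ∈ O ∧ v ∈ C ∧ w ∉ C}.Finite

/-- A consistent choice of one side of each cut in `O`, pointing towards any given point for all
but finitely many cuts. The orientations are the vertices of the tree dual to `O`. -/
structure IsOrientation (O x : Set (Set X)) : Prop where
  subset : x ⊆ O
  mem_iff_compl_notMem : ∀ C ∈ O, (C ∈ x ↔ Cᶜ ∉ x)
  mem_of_subset : ∀ C ∈ x, ∀ D ∈ O, C ⊆ D → D ∈ x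
  finite_notMem : ∀ v : X, {C | C ∈ O ∧ v ∈ C ∧ C ∉ x}.Finite

theorem IsOrientation.compl_mem (hx : IsOrientation O x) (hC : C ∈ O) (h : C ∉ x) : Cᶜ ∈ x :=
  not_not.1 fun h' => h ((hx.mem_iff_compl_notMem C hC).2 h')

theorem IsOrientation.compl_notMem (hx : IsOrientation O x) (h : C ∈ x) : Cᶜ ∉ x :=
  (hx.mem_iff_compl_notMem C (hx.subset h)).1 h

theorem IsOrientation.eq_of_subset (hx : IsOrientation O x) (hy : IsOrientation O y)
    (h : x ⊆ y) : x = y := by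
  refine h.antisymm fun D hD => not_not.1 fun hDx => ?_
  exact hy.compl_notMem hD (h (hx.compl_mem (hy.subset hD) hDx))

theorem IsOrientation.compl_mem_sdiff (hx : IsOrientation O x) (hy : IsOrientation O y)
    (h : C ∈ x \ y) : Cᶜ ∈ y \ x :=
  ⟨hy.compl_mem (hx.subset h.1) h.2, hx.compl_notMem h.1⟩

theorem IsOrientation.sdiff_eq_singleton_compl (hx : IsOrientation O x) (hy : IsOrientation O y)
    (h : x \ y = {C}) : y \ x = {Cᶜ} := by
  refine Set.eq_singleton_iff_unique_mem.2
    ⟨hx.compl_mem_sdiff hy (h ▸ Set.mem_singleton C), fun D hD => ?_⟩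
  exact (compl_eq_comm.1 (h ▸ hy.compl_mem_sdiff hx hD : Dᶜ ∈ ({C} : Set (Set X)))).symm

theorem subset_or_subset_of_not_crosses (h : ¬ Crosses C D) :
    C ⊆ Dᶜ ∨ C ⊆ D ∨ D ⊆ C ∨ Dᶜ ⊆ C := by
  simp only [← Set.disjoint_compl_right_iff_subset, _root_.compl_compl,
    Set.disjoint_iff_inter_eq_empty, ← Set.not_nonempty_iff_eq_empty]
  rw [Set.inter_comm D, Set.inter_comm Dᶜ]
  simp only [Crosses] at h
  tauto

theorem IsOrientation.subset_of_sdiff_eq_singleton (hO : IsNestedCutSystem O)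
    (hx : IsOrientation O x) (hy : IsOrientation O y) (ha : IsOrientation O a)
    (hb : IsOrientation O b) (hxy : x \ y = {C}) (hab : a \ b = {C}) : a ⊆ x := by
  obtain ⟨⟨hCx, hCy⟩, hxy⟩ := Set.eq_singleton_iff_unique_mem.1 hxy
  obtain ⟨⟨hCa, hCb⟩, hab⟩ := Set.eq_singleton_iff_unique_mem.1 hab
  intro D hDa
  by_contra hDx
  have hCO := hx.subset hCx
  have hDO := ha.subset hDa
  have hDb : D ∈ b := by
    by_contra hDb
    exact hDx (hab D ⟨hDa, hDb⟩ ▸ hCx)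
  have hDy : Dᶜ ∈ y := by
    by_contra hDy
    have hDC := hxy Dᶜ ⟨hx.compl_mem hDO hDx, hDy⟩
    exact ha.compl_notMem hDa (hDC ▸ hCa)
  rcases subset_or_subset_of_not_crosses (hO.not_crosses C hCO D hDO) with h | h | h | h
  · exact ha.compl_notMem hDa (ha.mem_of_subset C hCa _ (hO.compl_mem D hDO) h)
  · exact hDx (hx.mem_of_subset C hCx D hDO h)
  · exact hCb (hb.mem_of_subset D hDb C hCO h)
  · exact hCy (hy.mem_of_subset _ hDy C hCO h)

theorem IsOrientation.eq_and_eq_of_sdiff_eq_singleton (hO : IsNestedCutSystem O)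
    (hx : IsOrientation O x) (hy : IsOrientation O y) (ha : IsOrientation O a)
    (hb : IsOrientation O b) (hxy : x \ y = {C}) (hab : a \ b = {C}) : a = x ∧ b = y :=
  ⟨ha.eq_of_subset hx (hx.subset_of_sdiff_eq_singleton hO hy ha hb hxy hab),
    hb.eq_of_subset hy (hy.subset_of_sdiff_eq_singleton hO hx hb ha
      (hx.sdiff_eq_singleton_compl hy hxy) (ha.sdiff_eq_singleton_compl hb hab))⟩

theorem IsOrientation.finite_sdiff [Nonempty X] (hO : IsNestedCutSystem O)
    (hx : IsOrientation O x) (hy : IsOrientation O y) : (x \ y).Finite := by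
  obtain ⟨v⟩ := ‹Nonempty X›
  refine ((hy.finite_notMem v).union ((hx.finite_notMem v).image compl)).subset ?_
  rintro C ⟨hCx, hCy⟩
  have hCO := hx.subset hCx
  by_cases hv : v ∈ C
  · exact Or.inl ⟨hCO, hv, hCy⟩
  · exact Or.inr ⟨Cᶜ, ⟨hO.compl_mem C hCO, hv, hx.compl_notMem hCx⟩, _root_.compl_compl C⟩

theorem isOrientation_setOf_mem (hO : IsNestedCutSystem O) (v : X) :
    IsOrientation O {C | C ∈ O ∧ v ∈ C} where
  subset _ hC := hC.1
  mem_iff_compl_notMem C hC := by simp [hC, hO.compl_mem C hC]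
  mem_of_subset _ hC _ hD hCD := ⟨hD, hCD hC.2⟩
  finite_notMem w := (hO.finite_separating w v).subset fun _ hC =>
    ⟨hC.1, hC.2.1, fun hv => hC.2.2 ⟨hC.1, hv⟩⟩

theorem IsOrientation.insert_compl (hO : IsNestedCutSystem O) (hx : IsOrientation O x)
    (hC : C ∈ x) (hmin : ∀ D ∈ x, D ⊆ C → D = C) : IsOrientation O (insert Cᶜ (x \ {C})) := by
  have hCO := hx.subset hC
  have hne : C ≠ Cᶜ := fun h => by
    obtain ⟨z, hz⟩ := hO.nonempty C hCO
    exact (h ▸ hz : z ∈ Cᶜ) hz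
  refine ⟨?_, fun D hD => ?_, fun A hA B hB hAB => ?_, fun v => ?_⟩
  · exact Set.insert_subset (hO.compl_mem C hCO) (Set.sdiff_subset.trans hx.subset)
  · have hDx := hx.mem_iff_compl_notMem D hD
    have hCx := hx.mem_iff_compl_notMem C hCO
    have hDC : Dᶜ = C ↔ D = Cᶜ := compl_eq_comm.trans eq_comm
    simp only [Set.mem_insert_iff, Set.mem_sdiff, Set.mem_singleton_iff, compl_inj_iff, hDC]
    by_cases h₁ : D = C
    · simp [h₁, hne]
    · by_cases h₂ : D = Cᶜ
      · simp [h₂, hne.symm]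
      · tauto
  · by_cases hBC : B = Cᶜ
    · exact Or.inl hBC
    rcases hA with rfl | ⟨hA, hAC⟩
    · have hBx : B ∈ x := by
        by_contra hBx
        exact hBC (compl_eq_comm.1
          (hmin _ (hx.compl_mem hB hBx) (Set.compl_subset_comm.1 hAB))).symm
      refine Or.inr ⟨hBx, fun hBC' => ?_⟩
      obtain ⟨z, hz⟩ := hO.nonempty _ (hO.compl_mem C hCO)
      exact hz (Set.mem_singleton_iff.1 hBC' ▸ hAB hz)
    · exact Or.inr ⟨hx.mem_of_subset A hA B hB hAB, fun hBC' => hAC (hmin A hA (hBC' ▸ hAB))⟩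
  · refine ((hx.finite_notMem v).insert C).subset fun D ⟨hD, hvD, hDx⟩ => ?_
    exact or_iff_not_imp_left.2 fun hDC => ⟨hD, hvD, fun h => hDx (Or.inr ⟨h, hDC⟩)⟩

/-- The vertices of the tree dual to the cut system `O`. -/
def Orientation (O : Set (Set X)) : Type _ := {x : Set (Set X) // IsOrientation O x}

/-- Two orientations are adjacent if they differ on exactly one cut. -/
def dualGraph (O : Set (Set X)) : SimpleGraph (Orientation O) where
  Adj x y := ∃ C, x.1 \ y.1 = {C}
  symm := ⟨fun x y ⟨_, h⟩ => ⟨_, x.2.sdiff_eq_singleton_compl y.2 h⟩⟩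
  loopless := ⟨fun x ⟨C, h⟩ => (h ▸ Set.mem_singleton C : C ∈ x.1 \ x.1).2
    (h ▸ Set.mem_singleton C : C ∈ x.1 \ x.1).1⟩

theorem exists_dualGraph_adj_of_ne [Nonempty X] (hO : IsNestedCutSystem O) {x y : Orientation O}
    (hne : x ≠ y) : ∃ z : Orientation O, (dualGraph O).Adj x z ∧ z.1 \ y.1 ⊂ x.1 \ y.1 := by
  have hnonempty : (x.1 \ y.1).Nonempty := by
    rw [Set.nonempty_iff_ne_empty, Ne, Set.sdiff_eq_empty]
    exact fun h => hne (Subtype.ext (x.2.eq_of_subset y.2 h))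
  obtain ⟨C, ⟨hCx, hCy⟩, hmin⟩ := (x.2.finite_sdiff hO y.2).exists_minimal hnonempty
  have hmin' : ∀ D ∈ x.1, D ⊆ C → D = C := fun D hD hDC => hDC.antisymm <|
    hmin ⟨hD, fun hDy => hCy (y.2.mem_of_subset D hDy C (x.2.subset hCx) hDC)⟩ hDC
  have hCy' : Cᶜ ∈ y.1 := y.2.compl_mem (x.2.subset hCx) hCy
  have hCne : C ≠ Cᶜ := fun h => hCy (h ▸ hCy')
  refine ⟨⟨_, x.2.insert_compl hO hCx hmin'⟩, ⟨C, ?_⟩, ?_, fun h => ?_⟩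
  · refine Set.eq_singleton_iff_unique_mem.2 ⟨⟨hCx, ?_⟩, fun D ⟨hD, hD'⟩ => ?_⟩
    · exact fun h => h.elim hCne fun h => h.2 rfl
    · exact not_not.1 fun hDC => hD' (Or.inr ⟨hD, hDC⟩)
  · rintro D ⟨rfl | ⟨hD, -⟩, hDy⟩
    · exact absurd hCy' hDy
    · exact ⟨hD, hDy⟩
  · exact (h ⟨hCx, hCy⟩).1.elim hCne fun h => h.2 rfl

theorem dualGraph_connected [Nonempty X] (hO : IsNestedCutSystem O) :
    (dualGraph O).Connected := by
  have : Nonempty (Orientation O) :=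
    ‹Nonempty X›.map fun v => ⟨_, isOrientation_setOf_mem hO v⟩
  refine ⟨fun x y => ?_⟩
  induction hn : (x.1 \ y.1).ncard using Nat.strong_induction_on generalizing x with
  | _ n ih =>
    rcases eq_or_ne x y with rfl | hne
    · exact .refl x
    obtain ⟨z, hxz, hlt⟩ := exists_dualGraph_adj_of_ne hO hne
    exact hxz.reachable.trans
      (ih _ (hn ▸ Set.ncard_lt_ncard hlt (x.2.finite_sdiff hO y.2)) z rfl)

theorem dualGraph_isTree [Nonempty X] (hO : IsNestedCutSystem O) : (dualGraph O).IsTree := by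
  refine isTree_of_isEdgeCut (dualGraph_connected hO) fun x y ⟨C, hC⟩ => ⟨{z | C ∈ z.1}, ?_⟩
  have hCmem : C ∈ x.1 \ y.1 := hC ▸ Set.mem_singleton C
  refine ⟨hCmem.1, hCmem.2, fun a b ⟨E, hE⟩ ha hb => ?_⟩
  have hCE : C = E := (hE ▸ ⟨ha, hb⟩ : C ∈ ({E} : Set (Set X)))
  obtain ⟨h₁, h₂⟩ := x.2.eq_and_eq_of_sdiff_eq_singleton hO y.2 a.2 b.2 hC (hCE ▸ hE)
  exact ⟨Subtype.ext h₁, Subtype.ext h₂⟩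

variable {G : Type*} [Group G] [MulAction G X]

theorem IsOrientation.smul (hO : ∀ g : G, ∀ C ∈ O, g • C ∈ O) (hx : IsOrientation O x) (g : G) :
    IsOrientation O (g • x) := by
  refine ⟨?_, fun C hC => ?_, fun C hC D hD hCD => ?_, fun v => ?_⟩
  · rintro _ ⟨C, hC, rfl⟩
    exact hO g C (hx.subset hC)
  · rw [Set.mem_smul_set_iff_inv_smul_mem, Set.mem_smul_set_iff_inv_smul_mem, Set.smul_set_compl]
    exact hx.mem_iff_compl_notMem _ (hO _ C hC)
  · rw [Set.mem_smul_set_iff_inv_smul_mem] at hC ⊢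
    exact hx.mem_of_subset _ hC _ (hO _ D hD) (Set.smul_set_subset_smul_set_iff.2 hCD)
  · refine ((hx.finite_notMem (g⁻¹ • v)).image (g • ·)).subset fun C ⟨hC, hv, hCx⟩ => ?_
    exact ⟨g⁻¹ • C, ⟨hO _ C hC, Set.smul_mem_smul_set hv,
      fun h => hCx (Set.mem_smul_set_iff_inv_smul_mem.2 h)⟩, smul_inv_smul g C⟩

/-- The translation action on orientations of an invariant cut system. -/
@[reducible] def orientationAction (hO : ∀ g : G, ∀ C ∈ O, g • C ∈ O) :
    MulAction G (Orientation O) where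
  smul g x := ⟨g • x.1, x.2.smul hO g⟩
  one_smul x := Subtype.ext (one_smul G x.1)
  mul_smul g h x := Subtype.ext (mul_smul g h x.1)

theorem properTreeAction_dualGraph [Nonempty X] (hO : IsNestedCutSystem O)
    (hinv : ∀ g : G, ∀ C ∈ O, g • C ∈ O)
    (hrep : ∃ R : Set (Set X), R.Finite ∧ ∀ C ∈ O, ∃ g : G, g • C ∈ R)
    (hstab : ∀ x, IsOrientation O x → {g : G | g • x = x}.Finite) :
    let _ := orientationAction hinv
    ProperTreeAction G (dualGraph O) := by
  let _ := orientationAction hinv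
  have smul_sdiff : ∀ (g : G) {x y : Orientation O} {C : Set X}, x.1 \ y.1 = {C} →
      (g • x).1 \ (g • y).1 = {g • C} := fun g x y C h => by
    change g • x.1 \ g • y.1 = _
    rw [← Set.smul_set_sdiff, h, Set.smul_set_singleton]
  refine @ProperTreeAction.mk G _ _ _ ⟨?_⟩ (dualGraph_isTree hO) ?_ ?_
  · exact fun g x y ⟨C, h⟩ => ⟨g • C, smul_sdiff g h⟩
  · exact fun x => (hstab x.1 x.2).subset fun g hg => congrArg Subtype.val hg
  · obtain ⟨R, hR, hR'⟩ := hrep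
    refine ⟨⋃ C ∈ R, {e | e.1.1 \ e.2.1 = {C}}, hR.biUnion fun C _ => ?_, fun x y ⟨C, h⟩ => ?_⟩
    · refine Set.Subsingleton.finite fun ⟨a, b⟩ hab ⟨x, y⟩ hxy => ?_
      obtain ⟨h₁, h₂⟩ := x.2.eq_and_eq_of_sdiff_eq_singleton hO y.2 a.2 b.2 hxy hab
      exact Prod.ext (Subtype.ext h₁) (Subtype.ext h₂)
    · have hC : C ∈ x.1 \ y.1 := h ▸ Set.mem_singleton C
      obtain ⟨g, hg⟩ := hR' C (x.2.subset hC.1)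
      exact ⟨g, Set.mem_biUnion hg (smul_sdiff g h)⟩

end DualTree

section AlmostInvariant

variable {H : Type*} [Group H] {C D : Set H} {c : H}

/-- `D` and its right translate by `c` differ in finitely many elements. -/
def AlmostInvariant (D : Set H) (c : H) : Prop :=
  ∀ᶠ g in Filter.cofinite, (g * c ∈ D ↔ g ∈ D)

theorem AlmostInvariant.of_mem_closure {S : Set H} (h : ∀ s ∈ S, AlmostInvariant D s)
    (hc : c ∈ Subgroup.closure S) : AlmostInvariant D c := by
  have comp_mul_right : ∀ {P : H → Prop} (a : H), (∀ᶠ g in Filter.cofinite, P g) →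
      ∀ᶠ g in Filter.cofinite, P (g * a) := fun a =>
    (mul_left_injective a).tendsto_cofinite.eventually
  induction hc using Subgroup.closure_induction with
  | mem x hx => exact h x hx
  | one => exact Filter.Eventually.of_forall fun g => by rw [mul_one]
  | mul a b _ _ ha hb =>
    filter_upwards [ha, comp_mul_right a hb] with g hga hgb
    rw [← mul_assoc, hgb, hga]
  | inv a _ ha =>
    filter_upwards [comp_mul_right a⁻¹ ha] with g hg
    rw [← hg, inv_mul_cancel_right]

theorem AlmostInvariant.preimage {H' : Type*} [Group H'] {f : H →* H'} (hf : Function.Injective f)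
    {B : Set H'} (hB : AlmostInvariant B (f c)) : AlmostInvariant (f ⁻¹' B) c := by
  simpa only [AlmostInvariant, Set.mem_preimage, map_mul] using
    hf.tendsto_cofinite.eventually hB

theorem eq_of_periodic_of_eventually_eq {α : Type*} {f : ℤ → α} {j : ℤ} (hj : j ≠ 0)
    (hper : Function.Periodic f j) (h : ∀ᶠ n in Filter.cofinite, f (n + 1) = f n) (n : ℤ) :
    f n = f 0 := by
  have hstep : ∀ n, f (n + 1) = f n := fun n => by
    have hinj : Function.Injective fun k : ℤ => n + k * j := fun k l hkl =>
      mul_right_cancel₀ hj (add_left_cancel hkl)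
    obtain ⟨k, hk⟩ := (hinj.tendsto_cofinite.eventually h).exists
    have hshift : ∀ m, f (m + k * j) = f m := fun m => by
      simpa only [Int.cast_id] using hper.int_mul k m
    rwa [add_right_comm, hshift, hshift] at hk
  simpa using (show Function.Periodic f 1 from hstep).int_mul n 0

theorem AlmostInvariant.zpow_mem_iff (hC : AlmostInvariant C c) (hc : ¬ IsOfFinOrder c) {j : ℤ}
    (hj : j ≠ 0) (hper : c ^ j • C = C) (n : ℤ) : c ^ n ∈ C ↔ (1 : H) ∈ C := by
  have hinj := injective_zpow_iff_not_isOfFinOrder.2 hc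
  have hstep : ∀ᶠ m : ℤ in Filter.cofinite, (c ^ (m + 1) ∈ C) = (c ^ m ∈ C) := by
    filter_upwards [hinj.tendsto_cofinite.eventually hC] with m hm
    rw [zpow_add_one, hm]
  have hperiodic : Function.Periodic (fun m : ℤ => c ^ m ∈ C) j := fun m => by
    change (c ^ (m + j) ∈ C) = (c ^ m ∈ C)
    rw [add_comm, zpow_add, ← smul_eq_mul]
    conv_lhs => rw [← hper]
    rw [Set.smul_mem_smul_set_iff]
  simpa using eq_of_periodic_of_eventually_eq hj hperiodic hstep n

/-- An end of the cyclic group generated by `c`, as seen in the ambient group. -/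
noncomputable def powerEnd (c : H) : Ultrafilter H :=
  (Filter.hyperfilter ℕ).map (c ^ ·)

theorem mem_powerEnd_of_finite (h : {n : ℕ | c ^ n ∉ C}.Finite) : C ∈ powerEnd c :=
  Filter.mem_hyperfilter_of_finite_compl h

theorem mem_powerEnd_of_forall (h : ∀ n ≠ 0, c ^ n ∈ C) : C ∈ powerEnd c :=
  mem_powerEnd_of_finite <| (Set.finite_singleton 0).subset fun _ hn =>
    not_not.1 fun hn₀ => hn (h _ hn₀)

theorem infinite_zpow_notMem_of_separates (h : Separates (powerEnd c) (powerEnd c⁻¹) C) :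
    {m : ℤ | c ^ m ∉ C}.Infinite := by
  intro hfin
  refine h.1 (mem_powerEnd_of_finite ?_) (mem_powerEnd_of_finite ?_)
  · simpa only [Set.preimage_ofPred_eq, zpow_natCast] using
      hfin.preimage Nat.cast_injective.injOn
  · simpa only [Set.preimage_ofPred_eq, Function.comp_apply, zpow_neg, zpow_natCast, inv_pow] using
      hfin.preimage (neg_injective.comp (Nat.cast_injective (R := ℤ))).injOn

theorem separates_powerEnd_map_iff {H' : Type*} [Group H'] (f : H →* H') {B : Set H'} :
    Separates (powerEnd (f c)) (powerEnd (f c)⁻¹) B ↔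
      Separates (powerEnd c) (powerEnd c⁻¹) (f ⁻¹' B) := by
  have hmap : ∀ a : H, powerEnd (f a) = (powerEnd a).map f := fun a => by
    simp only [powerEnd, Ultrafilter.map_map, Function.comp_def, map_pow]
  rw [← map_inv, hmap, hmap]
  rfl

theorem AlmostInvariant.zpow_smul_ne (hC : AlmostInvariant C c) (hc : ¬ IsOfFinOrder c)
    (hsep : Separates (powerEnd c) (powerEnd c⁻¹) C) {j : ℤ} (hj : j ≠ 0) : c ^ j • C ≠ C := by
  intro hper
  have hconst := hC.zpow_mem_iff hc hj hper
  obtain ⟨m, hm⟩ := (infinite_zpow_notMem_of_separates hsep).nonempty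
  obtain ⟨n, hn⟩ := (infinite_zpow_notMem_of_separates hsep.compl).nonempty
  exact hm ((hconst m).2 ((hconst n).1 (not_not.1 hn)))

variable {N : Subgroup H} {T : Set H}

theorem AlmostInvariant.preimage_isComplement (hT : Subgroup.IsComplement (N : Set H) T)
    (hfin : T.Finite) {B : Set N} (hB : ∀ n, AlmostInvariant B n) (c : H) :
    AlmostInvariant {g | (hT.equiv g).1 ∈ B} c := by
  have hfst : ∀ (n : N) (g : H), (hT.equiv (n * g)).1 = n * (hT.equiv g).1 := fun n g => by
    rw [hT.equiv_mul_left]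
  have hcoset : ∀ t : H, ∀ᶠ n : N in Filter.cofinite,
      ((hT.equiv (n * t * c)).1 ∈ B ↔ (hT.equiv (n * t)).1 ∈ B) := fun t => by
    let r : H → N := fun g => (hT.equiv g).1
    have hn : ∀ᶠ n : N in Filter.cofinite,
        (n * r t * ((r t)⁻¹ * r (t * c)) ∈ B ↔ n * r t ∈ B) :=
      (mul_left_injective (r t)).tendsto_cofinite.eventually (hB _)
    simpa only [mul_assoc, hfst, mul_inv_cancel_left] using hn
  refine (hfin.biUnion fun t _ => (hcoset t).image fun n : N => (n * t : H)).subset fun g hg => ?_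
  have hmul := hT.equiv_fst_mul_equiv_snd g
  refine Set.mem_biUnion (hT.equiv g).2.2 ⟨(hT.equiv g).1, fun h => hg ?_, hmul⟩
  rwa [Set.mem_ofPred_eq, hmul] at h

end AlmostInvariant

section FreeGroupEnds

variable {ι : Type*} [DecidableEq ι]

theorem getLast?_reduce_cons {L : List (ι × Bool)} (hL : FreeGroup.IsReduced L) {a : ι × Bool}
    (hnil : L ≠ []) (hsingle : L ≠ [(a.1, !a.2)]) :
    (FreeGroup.reduce (a :: L)).getLast? = L.getLast? := by
  rw [FreeGroup.reduce.cons, hL.reduce_eq]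
  rcases L with - | ⟨b, L⟩
  · exact absurd rfl hnil
  · dsimp only
    split_ifs with h
    · rcases L with - | ⟨b', L⟩
      · exact absurd (by rw [h.1, h.2, Bool.not_not]) hsingle
      · rw [List.getLast?_cons_cons]
    · rw [List.getLast?_cons_cons]

theorem head?_toWord_eq_iff (g : FreeGroup ι) (l : ι × Bool) :
    g.toWord.head? = some l ↔ g⁻¹.toWord.getLast? = some (l.1, !l.2) := by
  have hinj : Function.Injective fun x : ι × Bool => (x.1, !x.2) := fun x y h => by
    simpa [Prod.ext_iff] using h
  rw [FreeGroup.toWord_inv, FreeGroup.invRev, List.getLast?_reverse, List.head?_map,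
    ← Option.map_some (f := fun x : ι × Bool => (x.1, !x.2)), (Option.map_injective hinj).eq_iff]

theorem almostInvariant_startsWith (l : ι × Bool) (c : FreeGroup ι) :
    AlmostInvariant (FreeGroup.startsWith l) c := by
  refine AlmostInvariant.of_mem_closure (S := Set.range FreeGroup.of) ?_
    (FreeGroup.closure_range_of ι ▸ Subgroup.mem_top c)
  rintro _ ⟨a, rfl⟩
  filter_upwards [Filter.eventually_cofinite_ne 1,
    Filter.eventually_cofinite_ne (FreeGroup.of a)⁻¹] with g hg hg'
  have hword : (g * FreeGroup.of a)⁻¹.toWord = FreeGroup.reduce ((a, false) :: g⁻¹.toWord) := by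
    rw [mul_inv_rev, FreeGroup.toWord_mul]
    rfl
  simp only [FreeGroup.startsWith, Set.mem_ofPred_eq, ← List.head?_eq_getElem?,
    head?_toWord_eq_iff]
  rw [hword, getLast?_reduce_cons FreeGroup.isReduced_toWord]
  · rwa [Ne, FreeGroup.toWord_eq_nil_iff, inv_eq_one]
  · intro h
    rw [Bool.not_false, ← FreeGroup.toWord_of, FreeGroup.toWord_inj] at h
    exact hg' (inv_eq_iff_eq_inv.1 h)

theorem pow_mem_startsWith {w : List (ι × Bool)} (hw : FreeGroup.IsCyclicallyReduced w)
    {l : ι × Bool} (hl : w.head? = some l) {n : ℕ} (hn : n ≠ 0) :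
    FreeGroup.mk w ^ n ∈ FreeGroup.startsWith l := by
  rw [FreeGroup.startsWith, Set.mem_ofPred_eq, FreeGroup.toWord_pow, FreeGroup.toWord_mk,
    hw.isReduced.reduce_eq, (hw.flatten_replicate n).isReduced.reduce_eq,
    ← List.head?_eq_getElem?, List.head?_flatten_replicate hn, hl]

theorem inv_pow_notMem_startsWith {w : List (ι × Bool)} (hw : FreeGroup.IsCyclicallyReduced w)
    {l : ι × Bool} (hl : w.head? = some l) {n : ℕ} (hn : n ≠ 0) :
    (FreeGroup.mk w)⁻¹ ^ n ∉ FreeGroup.startsWith l := by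
  rw [FreeGroup.startsWith, Set.mem_ofPred_eq, ← List.head?_eq_getElem?, head?_toWord_eq_iff,
    inv_pow, inv_inv, FreeGroup.toWord_pow, FreeGroup.toWord_mk, hw.isReduced.reduce_eq,
    (hw.flatten_replicate n).isReduced.reduce_eq, List.getLast?_flatten_replicate hn]
  intro hlast
  exact Bool.not_ne_self _ (hw.2 _ hlast l hl rfl)

theorem exists_separates_powerEnd_conj_startsWith {c : FreeGroup ι} (hc : c ≠ 1) :
    ∃ u l, Separates (powerEnd (u * c * u⁻¹)) (powerEnd (u * c * u⁻¹)⁻¹)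
      (FreeGroup.startsWith l) := by
  let w := FreeGroup.reduceCyclically c.toWord
  have hw : FreeGroup.IsCyclicallyReduced w :=
    FreeGroup.reduceCyclically.isCyclicallyReduced FreeGroup.isReduced_toWord
  let u := FreeGroup.mk (FreeGroup.reduceCyclically.conjugator c.toWord)
  have hconj : c = u * FreeGroup.mk w * u⁻¹ := by
    conv_lhs => rw [← FreeGroup.mk_toWord (x := c),
      ← FreeGroup.reduceCyclically.conj_conjugator_reduceCyclically c.toWord]
    simp only [u, w, FreeGroup.inv_mk, FreeGroup.mul_mk]
  have hw' : u⁻¹ * c * u⁻¹⁻¹ = FreeGroup.mk w := by rw [hconj]; group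
  have hne : w ≠ [] := fun h => hc (by rw [hconj, h, ← FreeGroup.one_eq_mk]; group)
  have hl := List.head?_eq_some_head hne
  refine ⟨u⁻¹, w.head hne, ?_⟩
  rw [hw']
  refine iff_of_true (mem_powerEnd_of_forall fun n => pow_mem_startsWith hw hl) ?_
  rw [← Ultrafilter.compl_mem_iff_notMem]
  exact mem_powerEnd_of_forall fun n => inv_pow_notMem_startsWith hw hl

theorem finite_of_fg_freeGroup {ι : Type*} (h : Group.FG (FreeGroup ι)) : Finite ι := by
  obtain ⟨S, hS⟩ := h.1
  let M := Multiplicative (ZMod 2)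
  have : Finite (FreeGroup ι →* M) :=
    Finite.of_injective (fun (f : FreeGroup ι →* M) (s : S) => f s) fun f g hfg =>
      MonoidHom.eq_of_eqOn_dense hS fun s hs => congrFun hfg ⟨s, hs⟩
  have : Finite (ι → M) := Finite.of_equiv _ FreeGroup.lift.symm
  classical
  refine Finite.of_injective (fun i : ι => (Pi.mulSingle i (.ofAdd 1) : ι → M)) fun i j hij => ?_
  by_contra hne
  have hval := congrFun hij i
  simp only [Pi.mulSingle_eq_same, Pi.mulSingle_eq_of_ne hne] at hval
  exact absurd hval (by decide)

end FreeGroupEnds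

section OptimalCuts

variable {X : Type*} {Γ : SimpleGraph X} {K : ℕ} {C : Set X}

/-- The cuts of size at most `K` that are optimal for some pair of ends. -/
def optimalCuts (Γ : SimpleGraph X) (K : ℕ) : Set (Set X) :=
  {C | ∃ p q, IsOptimalCut Γ K p q C}

theorem isNestedCutSystem_optimalCuts (hc : Γ.Preconnected) :
    IsNestedCutSystem (optimalCuts Γ K) where
  compl_mem _ := fun ⟨p, q, h⟩ => ⟨p, q, h.compl⟩
  not_crosses _ := fun ⟨_, _, hC⟩ _ ⟨_, _, hD⟩ => hC.not_crosses hc hD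
  nonempty C := fun ⟨p, q, h⟩ => by
    rw [Set.nonempty_iff_ne_empty]
    rintro rfl
    exact p.empty_notMem (h.separates.2 q.empty_notMem)
  finite_separating v w := (finite_tightCuts hc K v w).subset fun _ ⟨⟨_, _, h⟩, hv, hw⟩ =>
    h.toIsMinCut.mem_tightCuts hc hv hw

variable {G : Type*} [Group G] [MulAction G X]

theorem smul_mem_optimalCuts [InvariantGraph G Γ] (g : G) (hC : C ∈ optimalCuts Γ K) :
    g • C ∈ optimalCuts Γ K := by
  obtain ⟨p, q, h⟩ := hC
  obtain ⟨p, rfl⟩ := map_surjective_of_iso (smulIso Γ g⁻¹) p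
  obtain ⟨q, rfl⟩ := map_surjective_of_iso (smulIso Γ g⁻¹) q
  exact ⟨p, q, Set.preimage_smul_inv g C ▸ (isOptimalCut_map_iff _).1 h⟩

theorem exists_finite_representatives_optimalCuts [InvariantGraph G Γ] (hc : Γ.Preconnected)
    {D : Set (X × X)} (hD : D.Finite) (hD' : ∀ x y, Γ.Adj x y → ∃ g : G, g • (x, y) ∈ D) :
    ∃ R : Set (Set X), R.Finite ∧ ∀ C ∈ optimalCuts Γ K, ∃ g : G, g • C ∈ R := by
  have hO := isNestedCutSystem_optimalCuts (K := K) hc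
  refine ⟨⋃ d ∈ D, {C | C ∈ optimalCuts Γ K ∧ d.1 ∈ C ∧ d.2 ∉ C},
    hD.biUnion fun d _ => hO.finite_separating d.1 d.2, fun C hC => ?_⟩
  have hboundary : (edgeBoundary Γ C).Nonempty := by
    rw [← Set.encard_ne_zero]
    intro h
    rcases eq_empty_or_eq_univ_of_cutSize_eq_zero hc h with rfl | rfl
    · exact Set.not_nonempty_empty (hO.nonempty _ hC)
    · simpa only [Set.compl_univ, Set.not_nonempty_empty] using
        hO.nonempty _ (hO.compl_mem _ hC)
  obtain ⟨⟨x, y⟩, hx, hy, hxy⟩ := hboundary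
  obtain ⟨g, hg⟩ := hD' x y hxy
  exact ⟨g, Set.mem_biUnion hg ⟨smul_mem_optimalCuts g hC, Set.smul_mem_smul_set hx,
    fun h => hy (Set.smul_mem_smul_set_iff.1 h)⟩⟩

theorem IsOrientation.exists_zpow_smul_eq {O x : Set (Set X)} (hO : IsNestedCutSystem O)
    (hx : IsOrientation O x) {c : G} (hcx : c • x = x) (hC : C ∈ x) {v : X}
    (hinf : {m : ℤ | c ^ m • v ∉ C}.Infinite) :
    ∃ j : ℤ, j ≠ 0 ∧ c ^ j • C = C := by
  have hfix : ∀ m : ℤ, c ^ m • x = x := fun m =>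
    (MulAction.stabilizer G x).zpow_mem (MulAction.mem_stabilizer_iff.2 hcx) m
  have hmaps : Set.MapsTo (fun m : ℤ => (c ^ (-m) • C)ᶜ) {m | c ^ m • v ∉ C}
      {D | D ∈ O ∧ v ∈ D ∧ D ∉ x} := fun m hm => by
    have hmem : c ^ (-m) • C ∈ x := hfix (-m) ▸ Set.smul_mem_smul_set hC
    refine ⟨hO.compl_mem _ (hx.subset hmem), fun hv => hm ?_, hx.compl_notMem hmem⟩
    rwa [Set.mem_smul_set_iff_inv_smul_mem, zpow_neg, inv_inv] at hv
  obtain ⟨m, -, n, -, hne, heq⟩ := hinf.exists_ne_map_eq_of_mapsTo hmaps (hx.finite_notMem v)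
  refine ⟨m - n, sub_ne_zero.2 hne, ?_⟩
  rw [sub_eq_add_neg, zpow_add, mul_smul, ← compl_injective heq, ← mul_smul, ← zpow_add,
    add_neg_cancel, zpow_zero, one_smul]

end OptimalCuts

section CayleyGraph

variable {G : Type*} [Group G] {S A : Set G} {K : ℕ}

instance : InvariantGraph G (mulCayley S) where
  smul_adj _ _ _ := mulCayley_adj_mul_iff_right.2

theorem mulCayley_preconnected (hS : Subgroup.closure S = ⊤) : (mulCayley S).Preconnected := by
  have key : ∀ g ∈ Subgroup.closure S, ∀ x, (mulCayley S).Reachable x (x * g) := by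
    intro g hg
    induction hg using Subgroup.closure_induction with
    | mem s hs =>
      intro x
      by_cases hne : x = x * s
      · rw [← hne]
      · exact ((mulCayley_adj' S _ _).2 ⟨hne, s, hs, .inl rfl⟩).reachable
    | one => exact fun x => by rw [mul_one]
    | mul a b _ _ ha hb => exact fun x => mul_assoc x a b ▸ (ha x).trans (hb _)
    | inv a _ ha => exact fun x => by simpa using (ha (x * a⁻¹)).symm
  intro x y
  simpa using key (x⁻¹ * y) (hS ▸ Subgroup.mem_top _) x

theorem almostInvariant_of_cutSize_ne_top (hS : Subgroup.closure S = ⊤)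
    (hA : cutSize (mulCayley S) A ≠ ⊤) (c : G) : AlmostInvariant A c := by
  refine AlmostInvariant.of_mem_closure (fun s hs => ?_) (hS ▸ Subgroup.mem_top c)
  have hfin : (edgeBoundary (mulCayley S) A).Finite := Set.encard_ne_top_iff.1 hA
  refine ((hfin.image Prod.fst).union ((hfin.image Prod.snd))).subset fun g hg => ?_
  have hadj : (mulCayley S).Adj g (g * s) :=
    (mulCayley_adj' S _ _).2 ⟨fun h => hg (show g * s ∈ A ↔ g ∈ A by rw [← h]), s, hs, .inl rfl⟩
  by_cases hgA : g ∈ A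
  · exact Or.inl ⟨(g, g * s), ⟨hgA, fun h => hg (iff_of_true h hgA), hadj⟩, rfl⟩
  · refine Or.inr ⟨(g * s, g), ⟨?_, hgA, hadj.symm⟩, rfl⟩
    exact not_not.1 fun h => hg (iff_of_false h hgA)

theorem cutSize_ne_top_of_almostInvariant (hS : S.Finite) (hA : ∀ c, AlmostInvariant A c) :
    cutSize (mulCayley S) A ≠ ⊤ := by
  refine Set.encard_ne_top_iff.2 (((hS.union hS.inv).biUnion fun s _ =>
    (hA s).image fun g => (g, g * s)).subset ?_)
  rintro ⟨a, b⟩ ⟨ha, hb, hab⟩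
  have hgen : a⁻¹ * b ∈ S ∪ S⁻¹ := by
    simpa only [Set.mem_union, Set.mem_inv, mul_inv_rev, inv_inv] using
      ((mulCayley_adj S a b).1 hab).2
  refine Set.mem_biUnion hgen ⟨a, fun h => hb ?_, congrArg (a, ·) (mul_inv_cancel_left a b)⟩
  simpa only [mul_inv_cancel_left] using h.2 ha

theorem exists_finite_darts_mulCayley (hS : S.Finite) : ∃ D : Set (G × G), D.Finite ∧
    ∀ x y, (mulCayley S).Adj x y → ∃ g : G, g • (x, y) ∈ D := by
  refine ⟨{1} ×ˢ (S ∪ S⁻¹), (Set.finite_singleton 1).prod (hS.union hS.inv), fun x y h => ?_⟩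
  refine ⟨x⁻¹, inv_mul_cancel x, ?_⟩
  simpa only [Set.mem_union, Set.mem_inv, Prod.smul_mk, smul_eq_mul, mul_inv_rev, inv_inv] using
    ((mulCayley_adj S x y).1 h).2

theorem smul_ne_of_separates_powerEnd (hS : Subgroup.closure S = ⊤) {x : Set (Set G)}
    (hx : IsOrientation (optimalCuts (mulCayley S) K) x) {c : G} (hc : ¬ IsOfFinOrder c)
    (hsep : Separates (powerEnd c) (powerEnd c⁻¹) A) (hK : cutSize (mulCayley S) A ≤ K) :
    c • x ≠ x := by
  intro hcx
  obtain ⟨C, hC, hCx⟩ :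
      ∃ C, IsOptimalCut (mulCayley S) K (powerEnd c) (powerEnd c⁻¹) C ∧ C ∈ x := by
    obtain ⟨C, hC⟩ := exists_isOptimalCut hsep hK
    by_cases h : C ∈ x
    · exact ⟨C, hC, h⟩
    · exact ⟨Cᶜ, hC.compl, hx.compl_mem ⟨_, _, hC⟩ h⟩
  have hinf := infinite_zpow_notMem_of_separates hC.separates
  obtain ⟨j, hj, hper⟩ := hx.exists_zpow_smul_eq
    (isNestedCutSystem_optimalCuts (mulCayley_preconnected hS))
    hcx hCx (v := (1 : G))
    (by simpa only [smul_eq_mul, mul_one] using hinf)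
  have hinvariant := almostInvariant_of_cutSize_ne_top hS hC.cutSize_ne_top c
  exact hinvariant.zpow_smul_ne hc hC.separates hj hper

end CayleyGraph

section Tree

variable {G : Type*} [Group G] (N : Subgroup G)

theorem not_isOfFinOrder_of_isFreeGroup [IsFreeGroup N] :
    ∀ n ∈ N, n ≠ 1 → ¬ IsOfFinOrder n := by
  intro n hn hne
  have : IsMulTorsionFree N :=
    (IsFreeGroup.toFreeGroup N).injective.isMulTorsionFree (IsFreeGroup.toFreeGroup N).toMonoidHom
  rw [← N.coe_mk n hn, ← N.coe_subtype, N.subtype_injective.isOfFinOrder_iff]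
  exact not_isOfFinOrder_of_isMulTorsionFree fun h => hne (congrArg Subtype.val h)

variable [N.FiniteIndex]

variable {N} in
theorem finite_of_forall_mem_eq_one {K : Subgroup G}
    (h : ∀ n ∈ N, n ∈ K → n = 1) : Finite K :=
  Finite.of_injective (fun k : K => (k.1 : G ⧸ N)) fun a b hab => Subtype.ext <|
    inv_mul_eq_one.1 (h _ (QuotientGroup.eq.1 hab) (K.mul_mem (K.inv_mem a.2) b.2))

theorem exists_finite_separating_powerEnd [IsFreeGroup N] (hfg : Group.FG G) :
    ∃ 𝒜 : Set (Set G), 𝒜.Finite ∧ (∀ A ∈ 𝒜, ∀ c, AlmostInvariant A c) ∧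
      ∀ h ∈ N, h ≠ 1 → ∃ u : G, ∃ A ∈ 𝒜,
        Separates (powerEnd (u * h * u⁻¹)) (powerEnd (u * h * u⁻¹)⁻¹) A := by
  classical
  let ψ := IsFreeGroup.toFreeGroup N
  have : Group.FG N := N.fg_of_index_ne_zero
  have : Finite (IsFreeGroup.Generators N) :=
    finite_of_fg_freeGroup (Group.fg_of_surjective (f := ψ.toMonoidHom) ψ.surjective)
  obtain ⟨T, hT, hT₁⟩ := Subgroup.exists_isComplement_right N 1
  let B : IsFreeGroup.Generators N × Bool → Set N := fun l =>
    ψ.toMonoidHom ⁻¹' FreeGroup.startsWith l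
  let A : IsFreeGroup.Generators N × Bool → Set G := fun l => {g | (hT.equiv g).1 ∈ B l}
  have hAB : ∀ l, N.subtype ⁻¹' A l = ψ.toMonoidHom ⁻¹' FreeGroup.startsWith l :=
    fun l => Set.ext fun n => by
    have hn : (hT.equiv (n : G)).1 = n := hT.equiv_fst_eq_self_of_mem_of_one_mem hT₁ n.2
    change (hT.equiv (n : G)).1 ∈ B l ↔ n ∈ B l
    rw [hn]
  refine ⟨Set.range A, Set.finite_range A, ?_, fun h hN hne => ?_⟩
  · rintro _ ⟨l, rfl⟩
    exact AlmostInvariant.preimage_isComplement hT hT.finite_right fun n =>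
      (almostInvariant_startsWith l (ψ n)).preimage ψ.injective
  · obtain ⟨u, l, hsep⟩ := exists_separates_powerEnd_conj_startsWith (c := ψ ⟨h, hN⟩) fun hψ =>
      hne (congrArg Subtype.val ((map_eq_one_iff ψ ψ.injective).1 hψ))
    refine ⟨ψ.symm u, A l, Set.mem_range_self l, ?_⟩
    have hconj : u * ψ ⟨h, hN⟩ * u⁻¹ =
        ψ.toMonoidHom (ψ.symm u * ⟨h, hN⟩ * (ψ.symm u)⁻¹) := by
      simp
    rw [hconj, separates_powerEnd_map_iff, ← hAB l] at hsep
    exact (separates_powerEnd_map_iff N.subtype).2 hsep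

end Tree

theorem exists_properTreeAction {G : Type u} [Group G] (hfg : Group.FG G)
    (hG : VirtuallyFree G) : ∃ (V : Type u) (_ : MulAction G V) (Γ : SimpleGraph V),
      ProperTreeAction G Γ := by
  obtain ⟨N, _, ⟨_⟩⟩ := hG
  obtain ⟨S, hS⟩ := hfg.1
  obtain ⟨𝒜, h𝒜, hinvariant, hsep⟩ := exists_finite_separating_powerEnd N hfg
  have hfin : ∀ A ∈ 𝒜, cutSize (mulCayley (S : Set G)) A ≠ ⊤ := fun A hA =>
    cutSize_ne_top_of_almostInvariant S.finite_toSet (hinvariant A hA)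
  obtain ⟨K, hK⟩ : ∃ K : ℕ, ∀ A ∈ 𝒜, cutSize (mulCayley (S : Set G)) A ≤ K := by
    obtain ⟨K, hK⟩ := (h𝒜.image fun A => (cutSize (mulCayley (S : Set G)) A).toNat).bddAbove
    refine ⟨K, fun A hA => ?_⟩
    rw [← ENat.natCast_toNat (hfin A hA)]
    exact_mod_cast hK (Set.mem_image_of_mem _ hA)
  have hinv : ∀ g : G, ∀ C ∈ optimalCuts (mulCayley (S : Set G)) K,
      g • C ∈ optimalCuts (mulCayley (S : Set G)) K := fun g _ => smul_mem_optimalCuts g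
  have hc := mulCayley_preconnected hS
  obtain ⟨D, hD, hD'⟩ := exists_finite_darts_mulCayley S.finite_toSet
  refine ⟨_, orientationAction hinv, _, properTreeAction_dualGraph
    (isNestedCutSystem_optimalCuts hc) hinv
    (exists_finite_representatives_optimalCuts hc hD hD') fun x hx => ?_⟩
  suffices Finite (MulAction.stabilizer G x) from
    Set.toFinite (MulAction.stabilizer G x : Set G)
  refine finite_of_forall_mem_eq_one (N := N) fun h hN hfix => by_contra fun hne => ?_
  obtain ⟨u, A, hA, hsep⟩ := hsep h hN hne
  have hord : ¬ IsOfFinOrder (u * h * u⁻¹) := fun hfin =>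
    not_isOfFinOrder_of_isFreeGroup N _ hN hne
      ((isConj_iff.2 ⟨u, rfl⟩ : IsConj h (u * h * u⁻¹)).symm.isOfFinOrder hfin)
  refine smul_ne_of_separates_powerEnd hS (hx.smul hinv u) hord hsep (hK A hA) ?_
  rw [mul_smul, mul_smul, inv_smul_smul, MulAction.mem_stabilizer_iff.1 hfix]

section Homomorphisms

variable {G G' : Type*} [Group G] [Group G']

theorem of_injective {f : G →* G'} (hf : Function.Injective f) (h : VirtuallyFree G') :
    VirtuallyFree G := by
  obtain ⟨H, _, ⟨_⟩⟩ := h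
  have hinj : Function.Injective (f.subgroupComap H) := fun x y hxy =>
    Subtype.ext (hf (congrArg Subtype.val hxy))
  have := Subgroup.isFiniteRelIndex_of_finiteIndex (H := H) (K := f.range)
  exact ⟨H.comap f, ⟨H.index_comap f ▸ Subgroup.relIndex_ne_zero⟩,
    ⟨IsFreeGroup.ofMulEquiv (MonoidHom.ofInjective hinj).symm⟩⟩

theorem pow_factorial_index_eq_one (H : Subgroup G) [H.FiniteIndex] [IsFreeGroup H] {g : G}
    (hg : IsOfFinOrder g) : g ^ H.index.factorial = 1 := by
  by_contra hne
  refine not_isOfFinOrder_of_isFreeGroup H _ ?_ hne hg.pow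
  exact H.pow_mem_of_index_ne_zero_of_dvd Subgroup.FiniteIndex.index_ne_zero _
    fun _ hk hle => Nat.dvd_factorial hk hle

theorem exists_finset_forall_finite_normal {V : Type*} [MulAction G V] (Γ : SimpleGraph V)
    [ProperTreeAction G Γ] {c : Γ.Coloring Bool} (hc : ∀ (g : G) v, c (g • v) = c v) :
    ∃ F : Finset G, 1 ∉ F ∧ ∀ K : Subgroup G, K.Normal → Finite K → ∀ k ∈ K, k ≠ 1 → k ∈ F := by
  classical
  obtain ⟨D, hD, hmeet⟩ := exists_finite_vertices G Γ
  have hfin : (⋃ v ∈ D, {g : G | g • v = v}).Finite :=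
    hD.biUnion fun v _ => ProperTreeAction.finite_stabilizer (Γ := Γ) v
  refine ⟨hfin.toFinset.erase 1, Finset.notMem_erase _ _, fun K hK _ k hk hk₁ => ?_⟩
  obtain ⟨x, hx⟩ := exists_forall_smul_eq (ProperTreeAction.isTree G)
    (fun g x hadj => c.valid hadj (hc g x).symm) K
  obtain ⟨g, hg⟩ := hmeet x
  refine Finset.mem_erase.2 ⟨hk₁, hfin.mem_toFinset.2 (Set.mem_biUnion hg ?_)⟩
  have := hx _ (hK.conj_mem k hk g⁻¹)
  rwa [inv_inv, mul_smul, mul_smul, inv_smul_eq_iff] at this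

theorem finite_ker_or_exists_hasQuotientTrail {G : Type u} [Group G] (hfg : Group.FG G)
    (hG : VirtuallyFree G) {N : Subgroup G} [N.FiniteIndex]
    (htf : ∀ n ∈ N, n ≠ 1 → ¬ IsOfFinOrder n) (hG' : VirtuallyFree G') (φ : G →* G') :
    Finite φ.ker ∨ ∃ (W : Type u) (_ : MulAction G W) (Δ : SimpleGraph W), ProperTreeAction G Δ ∧
      ∃ n ∈ N, n ≠ 1 ∧ HasQuotientTrail N Δ n ∧ IsOfFinOrder (φ n) := by
  obtain ⟨V, _, Γ, _⟩ := hG.exists_properTreeAction hfg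
  have hinj := QuotientGroup.kerLift_injective φ
  obtain ⟨T₀, _, Θ₀, _⟩ := (of_injective hinj hG').exists_properTreeAction inferInstance
  obtain ⟨T, _, Θ, c, _, hc⟩ := exists_invariant_coloring (G := G ⧸ φ.ker) Θ₀
  let _ : MulAction G T := MulAction.compHom T (QuotientGroup.mk' φ.ker)
  have hΘ : InvariantGraph G Θ := ⟨fun g _ _ => InvariantGraph.smul_adj (g : G ⧸ φ.ker)⟩
  obtain htriv | ⟨W, _, Δ, hΔ, n, hn, hne, htrail, t, ht⟩ :=
    forall_eq_one_or_exists_hasQuotientTrail htf Γ (ProperTreeAction.isTree (G ⧸ φ.ker)) c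
      fun g => hc g
  · refine .inl (finite_of_forall_mem_eq_one (N := N) fun n hn hker => htriv n hn fun t => ?_)
    have hone : (n : G ⧸ φ.ker) = 1 := (QuotientGroup.eq_one_iff n).2 hker
    exact (congrArg (· • t) hone).trans (one_smul _ t)
  · have hord : IsOfFinOrder (n : G ⧸ φ.ker) := isOfFinOrder_of_smul_eq Θ ht
    exact .inr ⟨W, _, Δ, hΔ, n, hn, hne, htrail, (QuotientGroup.kerLift φ).isOfFinOrder hord⟩

end Homomorphisms

end VirtuallyFree

theorem exists_finite_test_set_for_noninjective_general
    (G : Type*) (G' : Type*) [Group G] [Group G'] (hfg : Group.FG G)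
    (hvf : VirtuallyFree G) (hvf' : VirtuallyFree G') :
    ∃ F : Finset G, (1 : G) ∉ F ∧
      ∀ φ : G →* G', ¬ Function.Injective φ →
        ∃ σ : G ≃* G, ∃ f ∈ F, φ (σ f) = 1 := by
  classical
  obtain ⟨N, _, ⟨_⟩⟩ := id hvf
  obtain ⟨H, _, ⟨_⟩⟩ := id hvf'
  have htf := VirtuallyFree.not_isOfFinOrder_of_isFreeGroup N
  have hNfg : N.FG := (Group.fg_iff_subgroup_fg N).1 (Subgroup.fg_of_index_ne_zero N)
  obtain ⟨V₀, _, Γ₀, _⟩ := hvf.exists_properTreeAction hfg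
  obtain ⟨V, _, Γ, c, _, hc⟩ := VirtuallyFree.exists_invariant_coloring (G := G) Γ₀
  obtain ⟨F₁, hF₁, hker⟩ := VirtuallyFree.exists_finset_forall_finite_normal Γ hc
  obtain ⟨F₂, hF₂, htrail⟩ :=
    VirtuallyFree.exists_finset_forall_hasQuotientTrail htf hNfg H.index.factorial_ne_zero
  refine ⟨F₁ ∪ F₂, by simp [hF₁, hF₂], fun φ hφ => ?_⟩
  obtain _ | ⟨W, _, Δ, hΔ, n, hn, hne, hnW, hord⟩ :=
    VirtuallyFree.finite_ker_or_exists_hasQuotientTrail hfg hvf htf hvf' φ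
  · obtain ⟨k, hk, hk₁⟩ : ∃ k, φ k = 1 ∧ k ≠ 1 := by
      simpa only [injective_iff_map_eq_one, not_forall, exists_prop] using hφ
    exact ⟨.refl G, k, Finset.mem_union_left _ (hker φ.ker inferInstance ‹_› k hk hk₁), hk⟩
  · obtain ⟨σ, f, hf, hσ⟩ := htrail W _ Δ hΔ n hn hne hnW
    refine ⟨σ, f, Finset.mem_union_right _ hf, ?_⟩
    rw [hσ, map_pow, VirtuallyFree.pow_factorial_index_eq_one H hord]

/-- For finitely generated virtually free groups `G`, `G'`, there is a finite subset
`F` of `G \ {1}` such that every non-injective homomorphism `φ : G → G'` kills an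
element of `σ(F)` for some automorphism `σ` of `G`. -/
theorem exists_finite_test_set_for_noninjective
    (G : Type*) (G' : Type*) [Group G] [Group G']
    (hfg : Group.FG G) (hfg' : Group.FG G')
    (hvf : VirtuallyFree G) (hvf' : VirtuallyFree G') :
    ∃ F : Finset G, (1 : G) ∉ F ∧
      ∀ φ : G →* G', ¬ Function.Injective φ →
        ∃ σ : G ≃* G, ∃ f ∈ F, φ (σ f) = 1 :=
  exists_finite_test_set_for_noninjective_general G G' hfg hvf hvf'
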